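/- Suppose there exist continuous positive functions N₁, N₂, N₃ on [0,∞) such that for all α > 0 and all μ, σ ∈ ℳ_α(V): L_μV(x) ≤ N₁(α) for all x, |b(x,μ)| ≤ N₂(α)V(x)^{1/2−γ}, and |b(x,μ) − b(x,σ)| ≤ N₃(α)V(x)^{1/2}‖μ − σ‖_W. If ∫₀^{+∞} dα/N₁(α) = +∞, then for every initial condition ν ∈ 𝒫_V(ℝ^d) there exists a solution (μ_t)_{t≥0} ⊂ 𝒫_V(ℝ^d) of the Cauchy problem ∂_tμ_t = L_{μ_t}^*μ_t, μ_0 = ν, such that sup_{t∈[0,T]} ∫V dμ_t < ∞ for every T > 0. -/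

import Mathlib

open MeasureTheory Real Set Filter Metric
open scoped Topology RealInnerProductSpace NNReal ENNReal

noncomputable section

abbrev Ed (d : ℕ) : Type := EuclideanSpace ℝ (Fin d)

variable {d : ℕ}

/-- Second-order partial derivative `∂_i ∂_j φ (x)`. -/
def hess2 (φ : Ed d → ℝ) (x : Ed d) (i j : Fin d) : ℝ :=
  iteratedFDeriv ℝ 2 φ x ![EuclideanSpace.single i 1, EuclideanSpace.single j 1]

/-- The Kolmogorov operator `L φ = trace (A D²φ) + ⟨B, ∇φ⟩`. -/
def Lop (A : Ed d → Matrix (Fin d) (Fin d) ℝ) (B : Ed d → Ed d)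
    (φ : Ed d → ℝ) (x : Ed d) : ℝ :=
  (∑ i, ∑ j, A x i j * hess2 φ x i j) + ⟪B x, gradient φ x⟫

/-- Membership in `𝒫_V(ℝ^d)`. -/
def memPV (V : Ed d → ℝ) (μ : Measure (Ed d)) : Prop :=
  IsProbabilityMeasure μ ∧ Integrable V μ

/-- `C_0^∞` test functions. -/
def IsTestFun (φ : Ed d → ℝ) : Prop :=
  ContDiff ℝ (⊤ : ℕ∞) φ ∧ HasCompactSupport φ

/-- Weighted total-variation distance `‖W·(μ - ν)‖_{TV}` expressed by duality. -/
def wDist (W : Ed d → ℝ) (μ ν : Measure (Ed d)) : ℝ :=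
  ⨆ f : {f : Ed d → ℝ // Measurable f ∧ ∀ x, |f x| ≤ W x},
    (∫ x, f.1 x ∂μ - ∫ x, f.1 x ∂ν)

/-- Solution of the nonlinear Cauchy problem `∂_t μ_t = L_{μ_t}^* μ_t`, `μ_0 = ν`. -/
def IsCauchySol (A : Ed d → Matrix (Fin d) (Fin d) ℝ)
    (b : Ed d → Measure (Ed d) → Ed d)
    (ν : Measure (Ed d)) (μ : ℝ → Measure (Ed d)) : Prop :=
  μ 0 = ν ∧ ∀ φ : Ed d → ℝ, IsTestFun φ → ∀ t : ℝ, 0 ≤ t →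
    ∫ x, φ x ∂(μ t) - ∫ x, φ x ∂ν
      = ∫ s in (0:ℝ)..t, ∫ x, Lop A (fun y => b y (μ s)) φ x ∂(μ s)

/-! ### Uniformly elliptic symmetric operators -/

/-- Symmetric operators whose quadratic form lies between `Λ⁻¹ ‖v‖²` and `Λ ‖v‖²`. -/
structure IsElliptic (Λ : ℝ) (B : Ed d →L[ℝ] Ed d) : Prop where
  pos : 0 < Λ
  symm : ∀ u v, ⟪B u, v⟫ = ⟪u, B v⟫
  low : ∀ v, Λ⁻¹ * ‖v‖ ^ 2 ≤ ⟪B v, v⟫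
  up : ∀ v, ⟪B v, v⟫ ≤ Λ * ‖v‖ ^ 2

namespace IsElliptic

variable {Λ Λ' : ℝ} {B B' : Ed d →L[ℝ] Ed d}

lemma mono (h : IsElliptic Λ B) (hΛ : Λ ≤ Λ') : IsElliptic Λ' B where
  pos := h.pos.trans_le hΛ
  symm := h.symm
  low v := le_trans (mul_le_mul_of_nonneg_right (inv_anti₀ h.pos hΛ) (sq_nonneg _)) (h.low v)
  up v := (h.up v).trans (mul_le_mul_of_nonneg_right hΛ (sq_nonneg _))

lemma convexComb (h : IsElliptic Λ B) (h' : IsElliptic Λ B') {s t : ℝ} (hs : 0 ≤ s) (ht : 0 ≤ t)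
    (hst : s + t = 1) : IsElliptic Λ (s • B + t • B') where
  pos := h.pos
  symm u v := by
    simp only [add_apply, smul_apply, inner_add_left,
      inner_add_right, real_inner_smul_left, real_inner_smul_right, h.symm, h'.symm]
  low v := by
    simp only [add_apply, smul_apply, inner_add_left,
      real_inner_smul_left]
    have h1 := mul_le_mul_of_nonneg_left (h.low v) hs
    have h2 := mul_le_mul_of_nonneg_left (h'.low v) ht
    have : Λ⁻¹ * ‖v‖ ^ 2 = s * (Λ⁻¹ * ‖v‖ ^ 2) + t * (Λ⁻¹ * ‖v‖ ^ 2) := by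
      rw [← add_mul, hst, one_mul]
    linarith
  up v := by
    simp only [add_apply, smul_apply, inner_add_left,
      real_inner_smul_left]
    have h1 := mul_le_mul_of_nonneg_left (h.up v) hs
    have h2 := mul_le_mul_of_nonneg_left (h'.up v) ht
    have : Λ * ‖v‖ ^ 2 = s * (Λ * ‖v‖ ^ 2) + t * (Λ * ‖v‖ ^ 2) := by
      rw [← add_mul, hst, one_mul]
    linarith

lemma smul (h : IsElliptic Λ B) {r : ℝ} (hr : 0 < r) :
    IsElliptic (Λ * (r + r⁻¹)) (r • B) where
  pos := mul_pos h.pos (by positivity)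
  symm u v := by
    simp only [smul_apply, real_inner_smul_left, real_inner_smul_right, h.symm]
  low v := by
    simp only [smul_apply, real_inner_smul_left]
    refine le_trans ?_ (mul_le_mul_of_nonneg_left (h.low v) hr.le)
    rw [← mul_assoc]
    refine mul_le_mul_of_nonneg_right ?_ (sq_nonneg _)
    rw [mul_inv, mul_comm]
    refine mul_le_mul_of_nonneg_right ?_ (inv_nonneg.2 h.pos.le)
    rw [inv_le_comm₀ (by positivity) hr]
    linarith
  up v := by
    simp only [smul_apply, real_inner_smul_left]
    refine (mul_le_mul_of_nonneg_left (h.up v) hr.le).trans ?_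
    rw [← mul_assoc]
    refine mul_le_mul_of_nonneg_right ?_ (sq_nonneg _)
    rw [mul_comm]
    refine mul_le_mul_of_nonneg_left ?_ h.pos.le
    have := inv_pos.2 hr
    linarith

lemma smul_of_mem_Icc (h : IsElliptic Λ B) {r : ℝ} (h1 : 1 ≤ r) (h2 : r ≤ 2) :
    IsElliptic (2 * Λ) (r • B) where
  pos := by have := h.pos; linarith
  symm u v := by
    simp only [smul_apply, real_inner_smul_left, real_inner_smul_right, h.symm]
  low v := by
    simp only [smul_apply, real_inner_smul_left]
    have h3 := h.low v
    have h4 : 0 ≤ Λ⁻¹ * ‖v‖ ^ 2 := mul_nonneg (inv_nonneg.2 h.pos.le) (sq_nonneg _)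
    rw [mul_inv]
    nlinarith
  up v := by
    simp only [smul_apply, real_inner_smul_left]
    have h3 := h.up v
    have h4 : 0 ≤ Λ⁻¹ * ‖v‖ ^ 2 := mul_nonneg (inv_nonneg.2 h.pos.le) (sq_nonneg _)
    have h5 := h.low v
    nlinarith

lemma add (h : IsElliptic Λ B) (h' : IsElliptic Λ' B') : ∃ Λ'', IsElliptic Λ'' (B + B') := by
  have h1 := h.mono (le_max_left Λ Λ')
  have h2 := h'.mono (le_max_right Λ Λ')
  have h3 := (h1.convexComb h2 (s := 1 / 2) (t := 1 / 2) (by norm_num) (by norm_num)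
    (by norm_num)).smul (r := 2) (by norm_num)
  have h4 : (2 : ℝ) • ((1 / 2 : ℝ) • B + (1 / 2 : ℝ) • B') = B + B' := by module
  exact ⟨_, h4 ▸ h3⟩

lemma isUnit (h : IsElliptic Λ B) : IsUnit B := by
  rw [ContinuousLinearMap.isUnit_iff_bijective]
  have hinj : Function.Injective (B : Ed d →ₗ[ℝ] Ed d) := by
    rw [← LinearMap.ker_eq_bot, LinearMap.ker_eq_bot']
    intro v hv
    have h1 := h.low v
    have h2 : B v = 0 := hv
    rw [h2, inner_zero_left] at h1
    have h3 : ‖v‖ ^ 2 ≤ 0 := by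
      by_contra hc
      push Not at hc
      have := mul_pos (inv_pos.2 h.pos) hc
      linarith
    have h4 : ‖v‖ = 0 := by nlinarith [sq_nonneg ‖v‖]
    exact norm_eq_zero.1 h4
  exact ⟨hinj, LinearMap.injective_iff_surjective.1 hinj⟩

lemma apply_inverse (h : IsElliptic Λ B) (w : Ed d) : B (Ring.inverse B w) = w := by
  have := congrArg (fun T : Ed d →L[ℝ] Ed d => T w) (Ring.mul_inverse_cancel B h.isUnit)
  simpa using this

lemma inverse_apply (h : IsElliptic Λ B) (w : Ed d) : Ring.inverse B (B w) = w := by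
  have := congrArg (fun T : Ed d →L[ℝ] Ed d => T w) (Ring.inverse_mul_cancel B h.isUnit)
  simpa using this

lemma inverse_symm (h : IsElliptic Λ B) (u v : Ed d) :
    ⟪Ring.inverse B u, v⟫ = ⟪u, Ring.inverse B v⟫ := by
  conv_lhs => rw [← h.apply_inverse v]
  rw [← h.symm, h.apply_inverse]

lemma norm_inverse_apply_le (h : IsElliptic Λ B) (w : Ed d) :
    ‖Ring.inverse B w‖ ≤ Λ * ‖w‖ := by
  have h1 := h.low (Ring.inverse B w)
  rw [h.apply_inverse] at h1
  have h2 := real_inner_le_norm w (Ring.inverse B w)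
  rcases (norm_nonneg (Ring.inverse B w)).eq_or_lt with h0 | h0
  · rw [← h0]; exact mul_nonneg h.pos.le (norm_nonneg _)
  · have h3 : Λ⁻¹ * ‖Ring.inverse B w‖ ≤ ‖w‖ := by
      refine le_of_mul_le_mul_right ?_ h0
      nlinarith
    rwa [inv_mul_le_iff₀ h.pos] at h3

lemma inner_inverse_low (h : IsElliptic Λ B) (w : Ed d) :
    Λ⁻¹ * ‖w‖ ^ 2 ≤ ⟪Ring.inverse B w, w⟫ := by
  have hp := h.pos
  set v := Ring.inverse B w with hv
  have hBv : B v = w := h.apply_inverse w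
  have h1 := h.low (Λ⁻¹ • w - v)
  have h2 := h.up w
  have h3 : 0 ≤ Λ⁻¹ * ‖Λ⁻¹ • w - v‖ ^ 2 := mul_nonneg (inv_nonneg.2 hp.le) (sq_nonneg _)
  have h4 : ⟪B (Λ⁻¹ • w - v), Λ⁻¹ • w - v⟫ =
      Λ⁻¹ * (Λ⁻¹ * ⟪B w, w⟫) - 2 * (Λ⁻¹ * ‖w‖ ^ 2) + ⟪v, w⟫ := by
    rw [map_sub, map_smul, hBv, inner_sub_left, inner_sub_right, inner_sub_right,
      real_inner_smul_left, real_inner_smul_left, real_inner_smul_right, real_inner_smul_right,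
      h.symm w v, hBv, real_inner_self_eq_norm_sq, real_inner_comm v w]
    ring
  have h5 : Λ⁻¹ * (Λ⁻¹ * ⟪B w, w⟫) ≤ Λ⁻¹ * ‖w‖ ^ 2 := by
    refine mul_le_mul_of_nonneg_left ?_ (inv_nonneg.2 hp.le)
    rw [inv_mul_le_iff₀ hp]; exact h2
  linarith

lemma inner_inverse_up (h : IsElliptic Λ B) (w : Ed d) :
    ⟪Ring.inverse B w, w⟫ ≤ Λ * ‖w‖ ^ 2 := by
  have h1 := real_inner_le_norm (Ring.inverse B w) w
  have h2 := h.norm_inverse_apply_le w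
  nlinarith [norm_nonneg w]

lemma inverse_smul (h : IsElliptic Λ B) {r : ℝ} (hr : 0 < r) (w : Ed d) :
    Ring.inverse (r • B) w = r⁻¹ • Ring.inverse B w := by
  have h1 := (h.smul hr).inverse_apply (r⁻¹ • Ring.inverse B w)
  rw [← h1]
  congr 1
  rw [smul_apply, map_smul, h.apply_inverse, smul_smul,
    mul_inv_cancel₀ hr.ne', one_smul]

lemma norm_inverse_sub_apply_le (h : IsElliptic Λ B) (h' : IsElliptic Λ B') (w : Ed d) :
    ‖Ring.inverse B w - Ring.inverse B' w‖ ≤ Λ ^ 2 * ‖B - B'‖ * ‖w‖ := by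
  have h1 : Ring.inverse B w - Ring.inverse B' w
      = Ring.inverse B ((B' - B) (Ring.inverse B' w)) := by
    rw [sub_apply, map_sub, h.inverse_apply, h'.apply_inverse]
  rw [h1]
  have hp := h.pos
  calc _ ≤ Λ * ‖(B' - B) (Ring.inverse B' w)‖ := h.norm_inverse_apply_le _
    _ ≤ Λ * (‖B' - B‖ * (Λ * ‖w‖)) := by
        gcongr
        exact (ContinuousLinearMap.le_opNorm _ _).trans
          (mul_le_mul_of_nonneg_left (h'.norm_inverse_apply_le w) (norm_nonneg _))
    _ = _ := by rw [norm_sub_rev]; ring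

lemma abs_inner_inverse_sub_le (h : IsElliptic Λ B) (h' : IsElliptic Λ B') (w w' : Ed d) :
    |⟪Ring.inverse B w, w⟫ - ⟪Ring.inverse B' w', w'⟫| ≤
      Λ ^ 2 * ‖B - B'‖ * ‖w‖ ^ 2 + Λ * ‖w - w'‖ * (‖w‖ + ‖w'‖) := by
  have h1 : ⟪Ring.inverse B w, w⟫ - ⟪Ring.inverse B' w', w'⟫ =
      ⟪Ring.inverse B w - Ring.inverse B' w, w⟫ + ⟪Ring.inverse B' (w - w'), w + w'⟫ := by
    rw [inner_sub_left, map_sub, inner_sub_left, inner_add_right, inner_add_right,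
      h'.inverse_symm w w', real_inner_comm (Ring.inverse B' w') w]
    ring
  rw [h1]
  refine (abs_add_le _ _).trans (add_le_add ?_ ?_)
  · refine (abs_real_inner_le_norm _ _).trans ?_
    have := h.norm_inverse_sub_apply_le h' w
    nlinarith [norm_nonneg w]
  · refine (abs_real_inner_le_norm _ _).trans ?_
    exact mul_le_mul (h'.norm_inverse_apply_le _) (norm_add_le _ _) (norm_nonneg _)
      (mul_nonneg h.pos.le (norm_nonneg _))

end IsElliptic

/-! ### Gaussian densities -/

lemma integrable_exp_neg_mul_norm_sq {c : ℝ} (hc : 0 < c) :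
    Integrable (fun w : Ed d => exp (-(c * ‖w‖ ^ 2))) := by
  have h := (GaussianFourier.integrable_cexp_neg_mul_sq_norm_add (V := Ed d) (b := (c : ℂ))
    (by simpa using hc) 0 0).norm
  refine h.congr (Eventually.of_forall fun w => ?_)
  simp only [Complex.norm_exp]
  congr 1
  simp [← Complex.ofReal_pow]

lemma one_add_pow_mul_exp_le {c : ℝ} (hc : 0 < c) :
    ∃ C, 0 < C ∧ ∀ t : ℝ, 0 ≤ t → (1 + t) ^ 4 * exp (-(c * t ^ 2)) ≤ C * exp (-(c / 2 * t ^ 2)) := by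
  refine ⟨8 * (1 + 8 / c ^ 2), by positivity, fun t ht => ?_⟩
  have h1 : exp (-(c * t ^ 2)) = exp (-(c / 2 * t ^ 2)) * exp (-(c / 2 * t ^ 2)) := by
    rw [← exp_add]; congr 1; ring
  rw [h1, ← mul_assoc]
  refine mul_le_mul_of_nonneg_right ?_ (exp_pos _).le
  have h2 := Real.pow_div_factorial_le_exp (c / 2 * t ^ 2) (by positivity) 2
  have h3 : 1 ≤ exp (c / 2 * t ^ 2) := Real.one_le_exp (by positivity)
  rw [exp_neg, ← div_eq_mul_inv, div_le_iff₀ (exp_pos _)]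
  have h4 : (1 + t) ^ 4 ≤ 8 * (1 + t ^ 4) := by
    nlinarith [sq_nonneg (t - 1), sq_nonneg (t ^ 2 - 1), sq_nonneg (t * (t - 1)),
      mul_nonneg ht (sq_nonneg (t - 1))]
  have h5 : t ^ 4 ≤ 8 / c ^ 2 * exp (c / 2 * t ^ 2) := by
    rw [div_mul_eq_mul_div, le_div_iff₀ (by positivity)]
    norm_num [Nat.factorial] at h2
    nlinarith
  nlinarith

lemma integrable_one_add_norm_pow_mul_exp {c : ℝ} (hc : 0 < c) (p : ℕ) (hp : p ≤ 4) :
    Integrable (fun w : Ed d => (1 + ‖w‖) ^ p * exp (-(c * ‖w‖ ^ 2))) := by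
  obtain ⟨C, hC, h⟩ := one_add_pow_mul_exp_le hc
  refine ((integrable_exp_neg_mul_norm_sq (d := d) (half_pos hc)).const_mul C).mono'
    (by fun_prop) (Eventually.of_forall fun w => ?_)
  rw [Real.norm_of_nonneg (by positivity)]
  refine le_trans ?_ (h ‖w‖ (norm_nonneg _))
  gcongr
  linarith [norm_nonneg w]

/-- The unnormalized centred Gaussian density with covariance `2 B`. -/
def gaussW (B : Ed d →L[ℝ] Ed d) (z : Ed d) : ℝ := exp (-(⟪Ring.inverse B z, z⟫ / 4))

/-- The centred Gaussian density with covariance `2 B`. -/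
def gauss (B : Ed d →L[ℝ] Ed d) (z : Ed d) : ℝ := gaussW B z / ∫ w, gaussW B w

lemma gaussW_pos (B : Ed d →L[ℝ] Ed d) (z : Ed d) : 0 < gaussW B z := exp_pos _

lemma gaussW_neg (B : Ed d →L[ℝ] Ed d) (z : Ed d) : gaussW B (-z) = gaussW B z := by
  simp [gaussW]

lemma gauss_neg (B : Ed d →L[ℝ] Ed d) (z : Ed d) : gauss B (-z) = gauss B z := by
  simp [gauss, gaussW_neg]

lemma continuous_gaussW (B : Ed d →L[ℝ] Ed d) : Continuous (gaussW B) := by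
  unfold gaussW; fun_prop

lemma continuous_gauss (B : Ed d →L[ℝ] Ed d) : Continuous (gauss B) := by
  unfold gauss; exact (continuous_gaussW B).div_const _

lemma gauss_nonneg (B : Ed d →L[ℝ] Ed d) (z : Ed d) : 0 ≤ gauss B z :=
  div_nonneg (exp_pos _).le (integral_nonneg fun _ => (exp_pos _).le)

namespace IsElliptic

variable {Λ Λ' : ℝ} {B B' : Ed d →L[ℝ] Ed d}

lemma gaussW_le (h : IsElliptic Λ B) (z : Ed d) :
    gaussW B z ≤ exp (-(Λ⁻¹ / 4 * ‖z‖ ^ 2)) := by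
  unfold gaussW
  have := h.inner_inverse_low z
  gcongr
  linarith

lemma le_gaussW (h : IsElliptic Λ B) (z : Ed d) :
    exp (-(Λ / 4 * ‖z‖ ^ 2)) ≤ gaussW B z := by
  unfold gaussW
  have := h.inner_inverse_up z
  gcongr
  linarith

lemma integrable_gaussW (h : IsElliptic Λ B) : Integrable (gaussW B) := by
  have hp := inv_pos.2 h.pos
  refine (integrable_exp_neg_mul_norm_sq (d := d) (c := Λ⁻¹ / 4) (by positivity)).mono'
    (continuous_gaussW B).aestronglyMeasurable (Eventually.of_forall fun z => ?_)
  rw [Real.norm_of_nonneg (gaussW_pos B z).le]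
  exact h.gaussW_le z

lemma integral_gaussW_ge (h : IsElliptic Λ B) :
    ∫ w : Ed d, exp (-(Λ / 4 * ‖w‖ ^ 2)) ≤ ∫ w, gaussW B w :=
  integral_mono (integrable_exp_neg_mul_norm_sq (by have := h.pos; positivity))
    h.integrable_gaussW h.le_gaussW

lemma integral_gaussW_pos (h : IsElliptic Λ B) : 0 < ∫ w, gaussW B w :=
  integral_exp_pos h.integrable_gaussW

lemma integrable_gauss (h : IsElliptic Λ B) : Integrable (gauss B) :=
  h.integrable_gaussW.div_const _

lemma integral_gauss (h : IsElliptic Λ B) : ∫ z, gauss B z = 1 := by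
  unfold gauss
  rw [integral_div, div_self h.integral_gaussW_pos.ne']

/-- Convolving Gaussian densities adds their covariances. -/
lemma integral_gauss_mul_gauss (h : IsElliptic Λ B) (h' : IsElliptic Λ' B') (z : Ed d) :
    ∫ w, gauss B w * gauss B' (z - w) = gauss (B + B') z := by
  obtain ⟨Λ'', h''⟩ := h.add h'
  have key : ∀ z u : Ed d, gaussW B (B (Ring.inverse (B + B') z) + u) *
      gaussW B' (z - (B (Ring.inverse (B + B') z) + u)) =
      gaussW (B + B') z * (gaussW B u * gaussW B' u) := by
    intro z u
    set p := Ring.inverse (B + B') z with hp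
    have hz : z = B p + B' p := by rw [← add_apply, h''.apply_inverse]
    have h1 : z - (B p + u) = B' p - u := by rw [hz]; abel
    have h2 : ⟪p, z⟫ = ⟪p, B p⟫ + ⟪p, B' p⟫ := by rw [hz, inner_add_right]
    have h3 : ⟪Ring.inverse B u, B p⟫ = ⟪p, u⟫ := by
      rw [← h.symm, h.apply_inverse, real_inner_comm]
    have h4 : ⟪Ring.inverse B' u, B' p⟫ = ⟪p, u⟫ := by
      rw [← h'.symm, h'.apply_inverse, real_inner_comm]
    unfold gaussW
    rw [← exp_add, ← exp_add, ← exp_add, h1, ← hp]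
    congr 1
    simp only [map_add, map_sub, h.inverse_apply, h'.inverse_apply, inner_add_left,
      inner_add_right, inner_sub_left, inner_sub_right, h2, h3, h4]
    ring
  set c := (∫ u, gaussW B u * gaussW B' u) / ((∫ w, gaussW B w) * ∫ w, gaussW B' w) with hc
  have hconv : ∀ z, ∫ w, gauss B w * gauss B' (z - w) = gaussW (B + B') z * c := by
    intro z
    rw [← integral_add_left_eq_self _ (B (Ring.inverse (B + B') z))]
    have : ∀ u, gauss B (B (Ring.inverse (B + B') z) + u) *
        gauss B' (z - (B (Ring.inverse (B + B') z) + u)) =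
        gaussW (B + B') z / ((∫ w, gaussW B w) * ∫ w, gaussW B' w) *
          (gaussW B u * gaussW B' u) := by
      intro u
      unfold gauss
      rw [div_mul_div_comm, key]
      ring
    simp_rw [this]
    rw [integral_const_mul, hc]
    ring
  have hint : Integrable (Function.uncurry fun z w => gauss B w * gauss B' (z - w))
      ((volume : Measure (Ed d)).prod volume) :=
    h.integrable_gauss.convolution_integrand (ContinuousLinearMap.mul ℝ ℝ) h'.integrable_gauss
  have htot : ∫ z, ∫ w, gauss B w * gauss B' (z - w) = 1 := by
    rw [integral_integral_swap hint]
    simp_rw [integral_const_mul, integral_sub_right_eq_self (gauss B'), h'.integral_gauss, mul_one]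
    exact h.integral_gauss
  simp_rw [hconv] at htot
  rw [integral_mul_const] at htot
  rw [hconv, gauss, div_eq_mul_inv, eq_inv_of_mul_eq_one_right htot]

lemma gauss_smul (h : IsElliptic Λ B) {ρ : ℝ} (hρ : 0 < ρ) (z : Ed d) :
    gauss ((ρ ^ 2) • B) z = (ρ ^ d)⁻¹ * gauss B (ρ⁻¹ • z) := by
  have h1 : ∀ z, gaussW ((ρ ^ 2) • B) z = gaussW B (ρ⁻¹ • z) := by
    intro z
    unfold gaussW
    rw [h.inverse_smul (by positivity), map_smul, real_inner_smul_left, real_inner_smul_left,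
      real_inner_smul_right]
    congr 3
    field_simp
  unfold gauss
  simp_rw [h1]
  rw [Measure.integral_comp_inv_smul_of_nonneg volume (gaussW B) hρ.le, finrank_euclideanSpace_fin,
    smul_eq_mul]
  field_simp

lemma integral_mul_gauss_smul (h : IsElliptic Λ B) {ρ : ℝ} (hρ : 0 < ρ) (F : Ed d → ℝ) :
    ∫ z, F z * gauss ((ρ ^ 2) • B) z = ∫ w, F (ρ • w) * gauss B w := by
  have h1 := Measure.integral_comp_inv_smul_of_nonneg volume
    (fun w : Ed d => F (ρ • w) * gauss B w) hρ.le
  rw [finrank_euclideanSpace_fin, smul_eq_mul] at h1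
  simp_rw [h.gauss_smul hρ]
  have h2 : ∀ z : Ed d, F z * ((ρ ^ d)⁻¹ * gauss B (ρ⁻¹ • z)) =
      (ρ ^ d)⁻¹ * (F (ρ • ρ⁻¹ • z) * gauss B (ρ⁻¹ • z)) := by
    intro z
    rw [smul_smul, mul_inv_cancel₀ hρ.ne', one_smul]; ring
  simp_rw [h2]
  rw [integral_const_mul, h1, ← mul_assoc, inv_mul_cancel₀ (by positivity), one_mul]

end IsElliptic

lemma abs_exp_neg_sub_exp_neg_le {a b m : ℝ} (ha : m ≤ a) (hb : m ≤ b) :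
    |exp (-a) - exp (-b)| ≤ |a - b| * exp (-m) := by
  wlog hab : a ≤ b generalizing a b
  · rw [abs_sub_comm, abs_sub_comm a]
    exact this hb ha (le_of_not_ge hab)
  have h1 : exp (-b) = exp (-a) * exp (-(b - a)) := by rw [← exp_add]; congr 1; ring
  have h2 : 1 - (b - a) ≤ exp (-(b - a)) := by
    have := Real.add_one_le_exp (-(b - a)); linarith
  have h3 : exp (-b) ≤ exp (-a) := by gcongr
  have h4 : exp (-a) ≤ exp (-m) := by gcongr
  rw [abs_of_nonneg (by linarith), abs_of_nonpos (by linarith)]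
  have h5 := exp_pos (-a)
  nlinarith

/-- Gaussian densities depend in a Lipschitz way on the covariance and on the space variable, with
Gaussian weights. -/
lemma exists_gauss_bounds (d : ℕ) {Λ : ℝ} (hΛ : 0 < Λ) :
    ∃ C c : ℝ, 0 < C ∧ 0 < c ∧
      (∀ (B : Ed d →L[ℝ] Ed d), IsElliptic Λ B → ∀ w, gauss B w ≤ C * exp (-(c * ‖w‖ ^ 2))) ∧
      (∀ (B B' : Ed d →L[ℝ] Ed d), IsElliptic Λ B → IsElliptic Λ B' → ∀ w w', ‖w - w'‖ ≤ 1 →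
        |gauss B w - gauss B' w'| ≤ C * (‖B - B'‖ + ‖w - w'‖) * exp (-(c * ‖w‖ ^ 2))) := by
  obtain ⟨C₀, hC₀, hpoly⟩ := one_add_pow_mul_exp_le (c := Λ⁻¹ / 8) (by positivity)
  set c := Λ⁻¹ / 8 / 2 with hc
  have hcpos : 0 < c := by positivity
  set Z₀ := ∫ w : Ed d, exp (-(Λ / 4 * ‖w‖ ^ 2)) with hZ₀
  have hZ₀pos : 0 < Z₀ := integral_exp_pos (integrable_exp_neg_mul_norm_sq (by positivity))
  set J := ∫ w : Ed d, exp (-(c * ‖w‖ ^ 2)) with hJ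
  have hJpos : 0 < J := integral_exp_pos (integrable_exp_neg_mul_norm_sq hcpos)
  set C₁ := (Λ ^ 2 + 2 * Λ) * exp (Λ⁻¹ / 4) * C₀ with hC₁
  have hC₁pos : 0 < C₁ := by positivity
  have hW : ∀ (B B' : Ed d →L[ℝ] Ed d), IsElliptic Λ B → IsElliptic Λ B' → ∀ w w', ‖w - w'‖ ≤ 1 →
      |gaussW B w - gaussW B' w'| ≤ C₁ * (‖B - B'‖ + ‖w - w'‖) * exp (-(c * ‖w‖ ^ 2)) := by
    intro B B' h h' w w' hw
    have hn : ‖w'‖ ≤ ‖w‖ + 1 := by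
      have := norm_le_norm_add_norm_sub w w'; linarith
    have hn' : ‖w‖ ^ 2 / 2 - 1 ≤ ‖w'‖ ^ 2 := by
      have h1 : ‖w‖ ≤ ‖w'‖ + 1 := by
        have := norm_le_norm_add_norm_sub w' w; rw [norm_sub_rev] at this; linarith
      nlinarith [norm_nonneg w, norm_nonneg w', sq_nonneg (‖w'‖ - 1)]
    have hΛi := inv_pos.2 hΛ
    have ha := h.inner_inverse_low w
    have hb := h'.inner_inverse_low w'
    have h1 := abs_exp_neg_sub_exp_neg_le (a := ⟪Ring.inverse B w, w⟫ / 4)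
      (b := ⟪Ring.inverse B' w', w'⟫ / 4) (m := Λ⁻¹ / 8 * ‖w‖ ^ 2 - Λ⁻¹ / 4)
      (by nlinarith [sq_nonneg ‖w‖]) (by nlinarith [sq_nonneg ‖w‖])
    refine h1.trans ?_
    have h2 := h.abs_inner_inverse_sub_le h' w w'
    have h3 : |⟪Ring.inverse B w, w⟫ / 4 - ⟪Ring.inverse B' w', w'⟫ / 4| ≤
        (Λ ^ 2 + 2 * Λ) * (‖B - B'‖ + ‖w - w'‖) * (1 + ‖w‖) ^ 4 := by
      rw [← sub_div, abs_div, abs_of_pos (by norm_num : (0 : ℝ) < 4)]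
      have hB := norm_nonneg (B - B')
      have hw0 := norm_nonneg (w - w')
      have hn0 := norm_nonneg w
      have e1 : ‖w‖ ^ 2 ≤ (1 + ‖w‖) ^ 4 := by
        nlinarith [pow_nonneg hn0 3, pow_nonneg hn0 4]
      have e2 : ‖w‖ + ‖w'‖ ≤ 2 * (1 + ‖w‖) ^ 4 := by
        nlinarith [pow_nonneg hn0 3, pow_nonneg hn0 4, pow_nonneg hn0 2]
      have e3 : Λ ^ 2 * ‖B - B'‖ * ‖w‖ ^ 2 ≤ Λ ^ 2 * ‖B - B'‖ * (1 + ‖w‖) ^ 4 := by gcongr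
      have e4 : Λ * ‖w - w'‖ * (‖w‖ + ‖w'‖) ≤ Λ * ‖w - w'‖ * (2 * (1 + ‖w‖) ^ 4) := by gcongr
      have e5 : 0 ≤ Λ ^ 2 * ‖w - w'‖ * (1 + ‖w‖) ^ 4 := by positivity
      have e6 : 0 ≤ Λ * ‖B - B'‖ * (1 + ‖w‖) ^ 4 := by positivity
      have e7 := abs_nonneg (⟪Ring.inverse B w, w⟫ - ⟪Ring.inverse B' w', w'⟫)
      nlinarith
    have h4 : exp (-(Λ⁻¹ / 8 * ‖w‖ ^ 2 - Λ⁻¹ / 4)) =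
        exp (Λ⁻¹ / 4) * exp (-(Λ⁻¹ / 8 * ‖w‖ ^ 2)) := by
      rw [← exp_add]; congr 1; ring
    calc _ ≤ ((Λ ^ 2 + 2 * Λ) * (‖B - B'‖ + ‖w - w'‖) * (1 + ‖w‖) ^ 4) *
          (exp (Λ⁻¹ / 4) * exp (-(Λ⁻¹ / 8 * ‖w‖ ^ 2))) := by
          rw [h4]; gcongr
      _ = ((Λ ^ 2 + 2 * Λ) * (‖B - B'‖ + ‖w - w'‖) * exp (Λ⁻¹ / 4)) *
          ((1 + ‖w‖) ^ 4 * exp (-(Λ⁻¹ / 8 * ‖w‖ ^ 2))) := by ring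
      _ ≤ ((Λ ^ 2 + 2 * Λ) * (‖B - B'‖ + ‖w - w'‖) * exp (Λ⁻¹ / 4)) *
          (C₀ * exp (-(c * ‖w‖ ^ 2))) := by
          exact mul_le_mul_of_nonneg_left (hpoly ‖w‖ (norm_nonneg w)) (by positivity)
      _ = _ := by rw [hC₁]; ring
  have hup : ∀ (B : Ed d →L[ℝ] Ed d), IsElliptic Λ B → ∀ w,
      gaussW B w ≤ exp (2 * c) * exp (-(c * ‖w‖ ^ 2)) := by
    intro B h w
    refine (h.gaussW_le w).trans ?_
    rw [← exp_add]
    gcongr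
    have := mul_nonneg hcpos.le (sq_nonneg ‖w‖)
    have e : Λ⁻¹ / 4 = 4 * c := by rw [hc]; ring
    rw [e]; nlinarith
  have hdiffZ : ∀ (B B' : Ed d →L[ℝ] Ed d), IsElliptic Λ B → IsElliptic Λ B' →
      |(∫ w, gaussW B' w) - ∫ w, gaussW B w| ≤ C₁ * ‖B - B'‖ * J := by
    intro B B' h h'
    rw [← integral_sub h'.integrable_gaussW h.integrable_gaussW, hJ, ← integral_const_mul]
    rw [← Real.norm_eq_abs]
    refine norm_integral_le_of_norm_le ((integrable_exp_neg_mul_norm_sq hcpos).const_mul _)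
      (Eventually.of_forall fun w => ?_)
    have := hW B B' h h' w w (by simp)
    rw [Real.norm_eq_abs, abs_sub_comm]
    simpa using this
  refine ⟨C₁ / Z₀ + exp (2 * c) * C₁ * J / Z₀ ^ 2 + exp (2 * c) / Z₀, c, by positivity, hcpos,
    ?_, ?_⟩
  · intro B h w
    have hZ := h.integral_gaussW_ge
    calc gauss B w ≤ (exp (2 * c) * exp (-(c * ‖w‖ ^ 2))) / Z₀ := by
          unfold gauss
          exact div_le_div₀ (by positivity) (hup B h w) hZ₀pos hZ
      _ = exp (2 * c) / Z₀ * exp (-(c * ‖w‖ ^ 2)) := by ring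
      _ ≤ _ := by
          gcongr
          have : 0 ≤ C₁ / Z₀ + exp (2 * c) * C₁ * J / Z₀ ^ 2 := by positivity
          linarith
  · intro B B' h h' w w' hw
    have hZ := h.integral_gaussW_ge
    have hZ' := h'.integral_gaussW_ge
    set Z := ∫ w, gaussW B w with hZdef
    set Z' := ∫ w, gaussW B' w with hZ'def
    have hZp : 0 < Z := hZ₀pos.trans_le hZ
    have hZp' : 0 < Z' := hZ₀pos.trans_le hZ'
    have e1 : gauss B w - gauss B' w' =
        (gaussW B w - gaussW B' w') / Z' + gaussW B w * (Z' - Z) / (Z * Z') := by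
      unfold gauss
      rw [← hZdef, ← hZ'def]
      field_simp
      ring
    rw [e1]
    have hE := exp_pos (-(c * ‖w‖ ^ 2))
    have hB0 := norm_nonneg (B - B')
    have hw0 := norm_nonneg (w - w')
    have f1 : |(gaussW B w - gaussW B' w') / Z'| ≤
        C₁ * (‖B - B'‖ + ‖w - w'‖) * exp (-(c * ‖w‖ ^ 2)) / Z₀ := by
      rw [abs_div, abs_of_pos hZp']
      exact div_le_div₀ (by positivity) (hW B B' h h' w w' hw) hZ₀pos hZ'
    have f2 : |gaussW B w * (Z' - Z) / (Z * Z')| ≤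
        (exp (2 * c) * exp (-(c * ‖w‖ ^ 2))) * (C₁ * (‖B - B'‖ + ‖w - w'‖) * J) / Z₀ ^ 2 := by
      rw [abs_div, abs_mul, abs_of_pos (mul_pos hZp hZp'), abs_of_pos (gaussW_pos B w)]
      refine div_le_div₀ (by positivity) ?_ (by positivity) (by nlinarith)
      refine mul_le_mul (hup B h w) ?_ (abs_nonneg _) (by positivity)
      refine (hdiffZ B B' h h').trans ?_
      gcongr
      linarith
    refine (abs_add_le _ _).trans ((add_le_add f1 f2).trans ?_)
    have f3 : 0 ≤ exp (2 * c) / Z₀ * (‖B - B'‖ + ‖w - w'‖) * exp (-(c * ‖w‖ ^ 2)) := by positivity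
    have f4 : C₁ * (‖B - B'‖ + ‖w - w'‖) * exp (-(c * ‖w‖ ^ 2)) / Z₀ +
        (exp (2 * c) * exp (-(c * ‖w‖ ^ 2))) * (C₁ * (‖B - B'‖ + ‖w - w'‖) * J) / Z₀ ^ 2 =
        (C₁ / Z₀ + exp (2 * c) * C₁ * J / Z₀ ^ 2) * (‖B - B'‖ + ‖w - w'‖) *
          exp (-(c * ‖w‖ ^ 2)) := by ring
    rw [f4]
    linarith

/-! ### Moments of Gaussian densities and second order expansion -/

/-- A common bound for the moments of the Gaussian densities with the given ellipticity. -/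
lemma exists_gauss_moment_bound (d : ℕ) {Λ : ℝ} (hΛ : 0 < Λ) :
    ∃ J : ℝ, 0 < J ∧ ∀ (B : Ed d →L[ℝ] Ed d), IsElliptic Λ B → ∀ p ≤ 4,
      Integrable (fun w => (1 + ‖w‖) ^ p * gauss B w) ∧ ∫ w, (1 + ‖w‖) ^ p * gauss B w ≤ J := by
  obtain ⟨C, c, hC, hc, hG, -⟩ := exists_gauss_bounds d hΛ
  have hI := integrable_one_add_norm_pow_mul_exp (d := d) hc
  have hle : ∀ (B : Ed d →L[ℝ] Ed d), IsElliptic Λ B → ∀ p ≤ 4, ∀ w : Ed d,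
      (1 + ‖w‖) ^ p * gauss B w ≤ C * ((1 + ‖w‖) ^ 4 * exp (-(c * ‖w‖ ^ 2))) := by
    intro B h p hp w
    calc (1 + ‖w‖) ^ p * gauss B w ≤ (1 + ‖w‖) ^ 4 * (C * exp (-(c * ‖w‖ ^ 2))) := by
          refine mul_le_mul (pow_le_pow_right₀ (by linarith [norm_nonneg w]) hp) (hG B h w)
            (gauss_nonneg B w) (by positivity)
      _ = _ := by ring
  refine ⟨C * (∫ w : Ed d, (1 + ‖w‖) ^ 4 * exp (-(c * ‖w‖ ^ 2))) + 1, ?_, fun B h p hp => ?_⟩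
  · have : 0 ≤ ∫ w : Ed d, (1 + ‖w‖) ^ 4 * exp (-(c * ‖w‖ ^ 2)) :=
      integral_nonneg fun w => by positivity
    positivity
  · have hint : Integrable (fun w => (1 + ‖w‖) ^ p * gauss B w) := by
      refine ((hI 4 le_rfl).const_mul C).mono' ?_ (Eventually.of_forall fun w => ?_)
      · have := continuous_gauss B
        exact (by fun_prop : Continuous fun w => (1 + ‖w‖) ^ p * gauss B w).aestronglyMeasurable
      · rw [Real.norm_of_nonneg (mul_nonneg (by positivity) (gauss_nonneg B w))]
        exact hle B h p hp w
    refine ⟨hint, ?_⟩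
    have := integral_mono hint ((hI 4 le_rfl).const_mul C) (hle B h p hp)
    rw [integral_const_mul] at this
    linarith

namespace IsElliptic

variable {Λ : ℝ} {B : Ed d →L[ℝ] Ed d}

lemma integrable_mul_gauss (h : IsElliptic Λ B) {f : Ed d → ℝ}
    (hf : AEStronglyMeasurable f volume) {C : ℝ} {p : ℕ} (hp : p ≤ 4)
    (hb : ∀ w, |f w| ≤ C * (1 + ‖w‖) ^ p) : Integrable (fun w => f w * gauss B w) := by
  obtain ⟨J, -, hJ⟩ := exists_gauss_moment_bound d h.pos
  refine ((hJ B h p hp).1.const_mul C).mono' (hf.mul (continuous_gauss B).aestronglyMeasurable)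
    (Eventually.of_forall fun w => ?_)
  rw [norm_mul, Real.norm_eq_abs, Real.norm_of_nonneg (gauss_nonneg B w), ← mul_assoc]
  exact mul_le_mul_of_nonneg_right (hb w) (gauss_nonneg B w)

lemma integral_clm_mul_gauss (ℓ : Ed d →L[ℝ] ℝ) : ∫ w, ℓ w * gauss B w = 0 := by
  have h1 := integral_neg_eq_self (fun w => ℓ w * gauss B w) (volume : Measure (Ed d))
  simp only [map_neg, gauss_neg, neg_mul, integral_neg] at h1
  linarith

lemma hasFDerivAt_gauss (h : IsElliptic Λ B) (z : Ed d) :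
    HasFDerivAt (gauss B) ((-(1 / 2) * gauss B z) • innerSL ℝ (Ring.inverse B z)) z := by
  have h1 : HasFDerivAt (fun z => ⟪Ring.inverse B z, z⟫)
      ((2 : ℝ) • innerSL ℝ (Ring.inverse B z)) z := by
    have := (Ring.inverse B).hasFDerivAt (x := z) |>.inner ℝ (hasFDerivAt_id z)
    refine this.congr_fderiv ?_
    ext v
    simp [fderivInnerCLM_apply, h.inverse_symm v z, real_inner_comm]
    ring
  have h2 := ((h1.const_mul (-(1 / 4))).exp).const_mul (∫ w, gaussW B w)⁻¹
  have e : ∀ z : Ed d, gauss B z =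
      (∫ w, gaussW B w)⁻¹ * exp (-(1 / 4) * ⟪Ring.inverse B z, z⟫) := by
    intro z
    rw [gauss, gaussW, div_eq_inv_mul]
    congr 2
    ring
  refine (h2.congr_fderiv ?_).congr_of_eventuallyEq (Eventually.of_forall e)
  ext v
  rw [e z]
  simp only [smul_apply, innerSL_apply_apply, smul_eq_mul]
  ring

lemma integral_inner_mul_inner_mul_gauss (h : IsElliptic Λ B) (u v : Ed d) :
    ∫ w, ⟪w, u⟫ * ⟪w, v⟫ * gauss B w = 2 * ⟪B u, v⟫ := by
  have hf : ∀ z : Ed d, HasFDerivAt (fun w : Ed d => ⟪w, v⟫) (innerSL ℝ v) z := by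
    intro z
    have := (innerSL ℝ v).hasFDerivAt (x := z)
    refine this.congr_of_eventuallyEq (Eventually.of_forall fun w => ?_)
    simp [real_inner_comm]
  have hfd : ∀ z, fderiv ℝ (fun w : Ed d => ⟪w, v⟫) z = innerSL ℝ v := fun z => (hf z).fderiv
  have hgd : ∀ z, fderiv ℝ (gauss B) z (B u) = -(1 / 2) * (⟪z, u⟫ * gauss B z) := by
    intro z
    rw [(h.hasFDerivAt_gauss z).fderiv]
    simp only [smul_apply, innerSL_apply_apply, smul_eq_mul]
    rw [← h.symm, h.apply_inverse]
    ring
  have i1 : Integrable (fun w => ⟪w, u⟫ * ⟪w, v⟫ * gauss B w) := by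
    refine h.integrable_mul_gauss (p := 2) (C := ‖u‖ * ‖v‖)
      (by fun_prop) (by norm_num) fun w => ?_
    rw [abs_mul]
    have a1 := abs_real_inner_le_norm w u
    have a2 := abs_real_inner_le_norm w v
    have a3 := norm_nonneg w
    calc |⟪w, u⟫| * |⟪w, v⟫| ≤ (‖w‖ * ‖u‖) * (‖w‖ * ‖v‖) := by gcongr
      _ = ‖u‖ * ‖v‖ * ‖w‖ ^ 2 := by ring
      _ ≤ _ := by gcongr; linarith
  have i2 : Integrable (fun w => ⟪w, v⟫ * gauss B w) := by
    refine h.integrable_mul_gauss (p := 1) (C := ‖v‖)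
      (by fun_prop) (by norm_num) fun w => ?_
    have a2 := abs_real_inner_le_norm w v
    nlinarith [norm_nonneg v]
  have key := integral_mul_fderiv_eq_neg_fderiv_mul_of_integrable
    (μ := (volume : Measure (Ed d))) (f := fun w : Ed d => ⟪w, v⟫) (g := gauss B) (v := B u)
    (by simp only [hfd]; exact h.integrable_gauss.const_mul _)
    (by
      simp only [hgd]
      refine (i1.const_mul (-(1 / 2))).congr (Eventually.of_forall fun w => ?_)
      simp only
      ring)
    i2 (fun x _ => (hf x).differentiableAt) (fun x _ => (h.hasFDerivAt_gauss x).differentiableAt)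
  simp only [hfd, hgd, innerSL_apply_apply] at key
  rw [integral_const_mul, h.integral_gauss] at key
  have e : ∫ w, ⟪w, v⟫ * (-(1 / 2) * (⟪w, u⟫ * gauss B w)) =
      -(1 / 2) * ∫ w, ⟪w, u⟫ * ⟪w, v⟫ * gauss B w := by
    rw [← integral_const_mul]
    congr 1; ext w; ring
  rw [e, real_inner_comm] at key
  linarith

end IsElliptic

/-- Second order Taylor formula with the remainder controlled by the oscillation of the second
derivative along the segment. -/
lemma abs_taylor_two_sub_le {E : Type*} [NormedAddCommGroup E] [NormedSpace ℝ E] {F : E → ℝ}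
    (hF : ContDiff ℝ 2 F) (x k : E) {η : ℝ}
    (hη : ∀ s ∈ Icc (0 : ℝ) 1,
      ‖fderiv ℝ (fderiv ℝ F) (x + s • k) - fderiv ℝ (fderiv ℝ F) x‖ ≤ η) :
    |F (x + k) - F x - fderiv ℝ F x k - 1 / 2 * fderiv ℝ (fderiv ℝ F) x k k| ≤ η * ‖k‖ ^ 2 := by
  have hF1 : ∀ y, HasFDerivAt F (fderiv ℝ F y) y := fun y =>
    (hF.differentiable (by norm_num) y).hasFDerivAt
  have hF2 : ∀ y, HasFDerivAt (fderiv ℝ F) (fderiv ℝ (fderiv ℝ F) y) y := fun y =>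
    ((hF.fderiv_right (m := 1) (by norm_num)).differentiable (by norm_num) y).hasFDerivAt
  have hline : ∀ s : ℝ, HasDerivAt (fun s : ℝ => x + s • k) k s := by
    intro s
    simpa using ((hasDerivAt_id s).smul_const k).const_add x
  have hψ : ∀ s : ℝ, HasDerivAt (fun s : ℝ => fderiv ℝ F (x + s • k) k -
      s * fderiv ℝ (fderiv ℝ F) x k k)
      (fderiv ℝ (fderiv ℝ F) (x + s • k) k k - fderiv ℝ (fderiv ℝ F) x k k) s := by
    intro s
    have h1 := (hF2 (x + s • k)).comp_hasDerivAt s (hline s)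
    have h2 := h1.clm_apply (hasDerivAt_const s k)
    have h3 := (hasDerivAt_id s).mul_const (fderiv ℝ (fderiv ℝ F) x k k)
    have h4 := h2.sub h3
    refine (h4.congr_deriv ?_).congr_of_eventuallyEq (Eventually.of_forall fun s => ?_)
    · simp
    · simp
  have hφ : ∀ s : ℝ, HasDerivAt (fun s : ℝ => F (x + s • k) - s * fderiv ℝ F x k -
      s ^ 2 / 2 * fderiv ℝ (fderiv ℝ F) x k k)
      (fderiv ℝ F (x + s • k) k - fderiv ℝ F x k - s * fderiv ℝ (fderiv ℝ F) x k k) s := by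
    intro s
    have h1 := (hF1 (x + s • k)).comp_hasDerivAt s (hline s)
    have h3 := (hasDerivAt_id s).mul_const (fderiv ℝ F x k)
    have h5 := (((hasDerivAt_id s).pow 2).div_const 2).mul_const (fderiv ℝ (fderiv ℝ F) x k k)
    have h4 := (h1.sub h3).sub h5
    refine (h4.congr_deriv ?_).congr_of_eventuallyEq (Eventually.of_forall fun s => ?_)
    · simp
    · simp
  have bψ : ∀ s ∈ Icc (0 : ℝ) 1, ‖(fderiv ℝ F (x + s • k) k -
      s * fderiv ℝ (fderiv ℝ F) x k k) - (fderiv ℝ F (x + (0 : ℝ) • k) k -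
      0 * fderiv ℝ (fderiv ℝ F) x k k)‖ ≤ η * ‖k‖ ^ 2 * (s - 0) := by
    refine norm_image_sub_le_of_norm_deriv_le_segment'
      (fun s _ => (hψ s).hasDerivWithinAt) fun s hs => ?_
    have h1 := hη s ⟨hs.1, hs.2.le⟩
    rw [← sub_apply, ← sub_apply]
    calc _ ≤ ‖fderiv ℝ (fderiv ℝ F) (x + s • k) - fderiv ℝ (fderiv ℝ F) x‖ * ‖k‖ * ‖k‖ :=
          ContinuousLinearMap.le_opNorm₂ _ _ _
      _ ≤ η * ‖k‖ * ‖k‖ := by gcongr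
      _ = _ := by ring
  have hfin := norm_image_sub_le_of_norm_deriv_le_segment_01' (C := η * ‖k‖ ^ 2)
    (fun s _ => (hφ s).hasDerivWithinAt) (fun s hs => ?_)
  · rw [Real.norm_eq_abs] at hfin
    convert hfin using 2
    simp
    ring
  · have h1 := bψ s ⟨hs.1, hs.2.le⟩
    have h0 : 0 ≤ η := le_trans (by positivity) (hη 0 ⟨le_rfl, zero_le_one⟩)
    have h2 : fderiv ℝ F (x + s • k) k - fderiv ℝ F x k - s * fderiv ℝ (fderiv ℝ F) x k k =
      (fderiv ℝ F (x + s • k) k -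
      s * fderiv ℝ (fderiv ℝ F) x k k) - (fderiv ℝ F (x + (0 : ℝ) • k) k -
      0 * fderiv ℝ (fderiv ℝ F) x k k) := by simp; ring
    rw [h2]
    refine h1.trans ?_
    have : η * ‖k‖ ^ 2 * (s - 0) ≤ η * ‖k‖ ^ 2 * 1 := by
      gcongr
      linarith [hs.2]
    linarith

lemma HasCompactSupport.bound_uniformContinuous_fderiv {E G : Type*} [NormedAddCommGroup E]
    [NormedSpace ℝ E] [NormedAddCommGroup G] [NormedSpace ℝ G] {f : E → G}
    (hcs : HasCompactSupport f) (hf : ContDiff ℝ 1 f) :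
    (∃ M : ℝ, (∀ x, ‖fderiv ℝ f x‖ ≤ M) ∧ ∀ x y, ‖fderiv ℝ f y - fderiv ℝ f x‖ ≤ 2 * M) ∧
      ∀ ε : ℝ, 0 < ε → ∃ δ : ℝ, 0 < δ ∧ ∀ x y, ‖y - x‖ < δ → ‖fderiv ℝ f y - fderiv ℝ f x‖ < ε := by
  have hs := hcs.fderiv ℝ
  have hc := hf.continuous_fderiv (by norm_num)
  obtain ⟨M, hM⟩ := hc.bounded_above_of_compact_support hs
  refine ⟨⟨M, hM, fun x y => (norm_sub_le _ _).trans (by linarith [hM x, hM y])⟩, fun ε hε => ?_⟩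
  obtain ⟨δ, hδ, h'⟩ := Metric.uniformContinuous_iff.1 (hs.uniformContinuous_of_continuous hc) ε hε
  refine ⟨δ, hδ, fun x y hxy => ?_⟩
  have := h' (a := y) (b := x) (by rwa [dist_eq_norm])
  rwa [dist_eq_norm] at this

/-- Uniform second order Taylor formula for a function constant outside a compact set. -/
lemma exists_taylor_two_bound {E : Type*} [NormedAddCommGroup E] [NormedSpace ℝ E] {F : E → ℝ}
    (hF : ContDiff ℝ 2 F) {c : ℝ} (hc : HasCompactSupport fun x => F x - c) :
    ∃ M : ℝ, 0 ≤ M ∧ (∀ x u v, |fderiv ℝ (fderiv ℝ F) x u v| ≤ M * ‖u‖ * ‖v‖) ∧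
      ∀ ε : ℝ, 0 < ε → ∃ D : ℝ, 0 ≤ D ∧ ∀ x k,
        |F (x + k) - F x - fderiv ℝ F x k - 1 / 2 * fderiv ℝ (fderiv ℝ F) x k k| ≤
          (ε + D * ‖k‖) * ‖k‖ ^ 2 := by
  have hd1 : fderiv ℝ (fun x => F x - c) = fderiv ℝ F := by
    funext x
    exact fderiv_sub_const c
  have hcs1 : HasCompactSupport (fderiv ℝ F) := hd1 ▸ hc.fderiv ℝ
  obtain ⟨⟨M, hM, hM2⟩, huc⟩ :=
    hcs1.bound_uniformContinuous_fderiv (hF.fderiv_right (m := 1) (by norm_num))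
  have hM0 : 0 ≤ M := (norm_nonneg _).trans (hM 0)
  refine ⟨M, hM0, fun x u v => ?_, fun ε hε => ?_⟩
  · have h1 := (fderiv ℝ (fderiv ℝ F) x).le_opNorm₂ u v
    rw [Real.norm_eq_abs] at h1
    refine h1.trans ?_
    gcongr
    exact hM x
  obtain ⟨δ, hδ, hδ'⟩ := huc ε hε
  refine ⟨2 * M / δ, by positivity, fun x k => abs_taylor_two_sub_le hF x k fun s hs => ?_⟩
  have hsk : ‖x + s • k - x‖ ≤ ‖k‖ := by
    rw [add_sub_cancel_left, norm_smul, Real.norm_of_nonneg hs.1]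
    nlinarith [hs.2, norm_nonneg k]
  rcases lt_or_ge ‖x + s • k - x‖ δ with hlt | hge
  · have := hδ' x (x + s • k) hlt
    have : 0 ≤ 2 * M / δ * ‖k‖ := by positivity
    linarith
  · have h1 : ‖fderiv ℝ (fderiv ℝ F) (x + s • k) - fderiv ℝ (fderiv ℝ F) x‖ ≤ 2 * M :=
      hM2 _ _
    have h2 : 2 * M ≤ 2 * M / δ * ‖k‖ := by
      rw [div_mul_eq_mul_div, le_div_iff₀ hδ]
      exact mul_le_mul_of_nonneg_left (hge.trans hsk) (by positivity)
    linarith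

lemma integral_add_four {Ω : Type*} [MeasurableSpace Ω] {μ : Measure Ω} {f₁ f₂ f₃ f₄ : Ω → ℝ}
    (h₁ : Integrable f₁ μ) (h₂ : Integrable f₂ μ) (h₃ : Integrable f₃ μ) (h₄ : Integrable f₄ μ) :
    ∫ w, f₁ w + f₂ w + f₃ w + f₄ w ∂μ =
      ∫ w, f₁ w ∂μ + ∫ w, f₂ w ∂μ + ∫ w, f₃ w ∂μ + ∫ w, f₄ w ∂μ := by
  have h₁₂ : Integrable (fun w => f₁ w + f₂ w) μ := h₁.add h₂
  have h₁₃ : Integrable (fun w => f₁ w + f₂ w + f₃ w) μ := h₁₂.add h₃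
  rw [integral_add h₁₃ h₄, integral_add h₁₂ h₃, integral_add h₁ h₂]

lemma IsElliptic.integral_bilin_mul_gauss {Λ : ℝ} {B : Ed d →L[ℝ] Ed d} (h : IsElliptic Λ B)
    (q : Ed d →L[ℝ] Ed d →L[ℝ] ℝ) :
    ∫ w, q w w * gauss B w = 2 * ∑ i, ∑ j, ⟪B (EuclideanSpace.single i 1),
      EuclideanSpace.single j 1⟫ * q (EuclideanSpace.single i 1) (EuclideanSpace.single j 1) := by
  have hw : ∀ w : Ed d, w = ∑ i, w i • EuclideanSpace.single i (1 : ℝ) := by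
    intro w
    ext k
    simp [Pi.single_apply]
  have e : ∀ w : Ed d, q w w * gauss B w = ∑ i, ∑ j,
      q (EuclideanSpace.single i 1) (EuclideanSpace.single j 1) *
      (⟪w, EuclideanSpace.single i 1⟫ * ⟪w, EuclideanSpace.single j 1⟫ * gauss B w) := by
    intro w
    have h1 : q w w = ∑ i, ∑ j, w i * (w j *
        q (EuclideanSpace.single i 1) (EuclideanSpace.single j 1)) := by
      conv_lhs => rw [hw w]
      simp only [map_sum, map_smul, sum_apply, smul_apply, smul_eq_mul, Finset.mul_sum]
      exact Finset.sum_comm.trans (by congr! 2; ring)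
    rw [h1, Finset.sum_mul]
    congr! 1 with i
    rw [Finset.sum_mul]
    congr! 1 with j
    simp [EuclideanSpace.inner_single_right]
    ring
  have hint : ∀ u v : Ed d, Integrable (fun w => ⟪w, u⟫ * ⟪w, v⟫ * gauss B w) := by
    intro u v
    refine h.integrable_mul_gauss (p := 2) (C := ‖u‖ * ‖v‖)
      (by fun_prop) (by norm_num) fun w => ?_
    rw [abs_mul]
    have a1 := abs_real_inner_le_norm w u
    have a2 := abs_real_inner_le_norm w v
    have a3 := norm_nonneg w
    calc |⟪w, u⟫| * |⟪w, v⟫| ≤ (‖w‖ * ‖u‖) * (‖w‖ * ‖v‖) := by gcongr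
      _ = ‖u‖ * ‖v‖ * ‖w‖ ^ 2 := by ring
      _ ≤ _ := by gcongr; linarith
  simp_rw [e]
  rw [integral_finsetSum _ fun i _ => integrable_finsetSum _ fun j _ => (hint _ _).const_mul _,
    Finset.mul_sum]
  congr! 1 with i
  rw [integral_finsetSum _ fun j _ => (hint _ _).const_mul _, Finset.mul_sum]
  congr! 1 with j
  rw [integral_const_mul, h.integral_inner_mul_inner_mul_gauss]
  ring

set_option maxHeartbeats 400000 in
/-- Uniform second order expansion of Gaussian averages of a function that is constant outside a
compact set. -/
lemma exists_gauss_expansion {F : Ed d → ℝ} (hF : ContDiff ℝ 2 F) {c : ℝ}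
    (hc : HasCompactSupport fun x => F x - c) {Λ : ℝ} (hΛ : 0 < Λ) {ε : ℝ} (hε : 0 < ε) :
    ∃ κ : ℝ, 0 < κ ∧ κ ≤ 1 ∧ ∀ h : ℝ, 0 < h → h ≤ κ → ∀ B : Ed d →L[ℝ] Ed d, IsElliptic Λ B →
      ∀ x β : Ed d, h * ‖β‖ ^ 2 ≤ κ →
      |(∫ w, F (x + (h • β + √h • w)) * gauss B w) - F x - h * (fderiv ℝ F x β +
        ∑ i, ∑ j, ⟪B (EuclideanSpace.single i 1), EuclideanSpace.single j 1⟫ * hess2 F x i j)|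
        ≤ ε * h := by
  have hFc : Continuous F := hF.continuous
  obtain ⟨CF, hCF⟩ :=
    (by fun_prop : Continuous fun x => F x - c).bounded_above_of_compact_support hc
  obtain ⟨J, hJ0, hJ⟩ := exists_gauss_moment_bound d hΛ
  obtain ⟨M₀, hM0, hM₀, hT⟩ := exists_taylor_two_bound hF hc
  obtain ⟨D, hD0, hD⟩ := hT (ε / (3 * J)) (by positivity)
  set κ₂ := ε / (3 * (D * J + 1)) with hκ₂
  have hκ₂0 : 0 < κ₂ := by positivity
  refine ⟨min 1 (min (ε / (3 * (M₀ + 1))) (κ₂ ^ 2)), by positivity, min_le_left _ _, ?_⟩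
  intro h hh hhκ B hB x β hβ
  have hh1 : h ≤ 1 := hhκ.trans (min_le_left _ _)
  have hβ1 : h * ‖β‖ ^ 2 ≤ 1 := hβ.trans (min_le_left _ _)
  have hβ2 : h * ‖β‖ ^ 2 ≤ ε / (3 * (M₀ + 1)) :=
    hβ.trans ((min_le_right _ _).trans (min_le_left _ _))
  have hsq : √h ≤ κ₂ := by
    rw [Real.sqrt_le_left hκ₂0.le]
    exact hhκ.trans ((min_le_right _ _).trans (min_le_right _ _))
  have hs : √h * √h = h := Real.mul_self_sqrt hh.le
  have hs0 : 0 < √h := Real.sqrt_pos.2 hh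
  have hsβ : √h * ‖β‖ ≤ 1 := by
    have : (√h * ‖β‖) ^ 2 ≤ 1 := by rw [mul_pow, pow_two (√h), hs]; exact hβ1
    nlinarith [norm_nonneg β, mul_nonneg hs0.le (norm_nonneg β)]
  set Q := fderiv ℝ (fderiv ℝ F) x with hQ
  set R : Ed d → ℝ := fun w => F (x + (h • β + √h • w)) - F x - fderiv ℝ F x (h • β + √h • w)
    - 1 / 2 * Q (h • β + √h • w) (h • β + √h • w) with hR
  have hk : ∀ w : Ed d, ‖h • β + √h • w‖ ≤ √h * (1 + ‖w‖) := by
    intro w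
    calc ‖h • β + √h • w‖ ≤ ‖h • β‖ + ‖√h • w‖ := norm_add_le _ _
      _ = √h * (√h * ‖β‖) + √h * ‖w‖ := by
          rw [norm_smul, norm_smul, Real.norm_of_nonneg hh.le, Real.norm_of_nonneg hs0.le,
            ← mul_assoc, hs]
      _ ≤ √h * 1 + √h * ‖w‖ := by gcongr
      _ = _ := by ring
  have hRb : ∀ w, |R w| ≤ h * (ε / (3 * J)) * (1 + ‖w‖) ^ 2 + h * (D * κ₂) * (1 + ‖w‖) ^ 3 := by
    intro w
    have hw := hk w
    have hw0 := norm_nonneg w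
    have h1 := hD x (h • β + √h • w)
    refine h1.trans ?_
    calc (ε / (3 * J) + D * ‖h • β + √h • w‖) * ‖h • β + √h • w‖ ^ 2
        ≤ (ε / (3 * J) + D * (√h * (1 + ‖w‖))) * (√h * (1 + ‖w‖)) ^ 2 := by gcongr
      _ = (√h * √h) * (ε / (3 * J)) * (1 + ‖w‖) ^ 2
          + (√h * √h) * (D * √h) * (1 + ‖w‖) ^ 3 := by ring
      _ ≤ _ := by rw [hs]; gcongr
  have hRc : Continuous R := by rw [hR]; fun_prop
  have hRbI := (((hJ B hB 2 (by norm_num)).1.const_mul (h * (ε / (3 * J)))).add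
    ((hJ B hB 3 (by norm_num)).1.const_mul (h * (D * κ₂))))
  have hRpt : ∀ w, ‖R w * gauss B w‖ ≤ h * (ε / (3 * J)) * ((1 + ‖w‖) ^ 2 * gauss B w) +
      h * (D * κ₂) * ((1 + ‖w‖) ^ 3 * gauss B w) := by
    intro w
    rw [norm_mul, Real.norm_eq_abs, Real.norm_of_nonneg (gauss_nonneg B w)]
    refine (mul_le_mul_of_nonneg_right (hRb w) (gauss_nonneg B w)).trans (le_of_eq ?_)
    ring
  have hRI : Integrable (fun w => R w * gauss B w) :=
    hRbI.mono' (hRc.mul (continuous_gauss B)).aestronglyMeasurable (Eventually.of_forall hRpt)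
  have hRint : |∫ w, R w * gauss B w| ≤ h * (2 * ε / 3) := by
    rw [← Real.norm_eq_abs]
    refine (norm_integral_le_of_norm_le hRbI (Eventually.of_forall hRpt)).trans ?_
    rw [integral_add' ((hJ B hB 2 (by norm_num)).1.const_mul _)
      ((hJ B hB 3 (by norm_num)).1.const_mul _), integral_const_mul, integral_const_mul]
    have j2 := (hJ B hB 2 (by norm_num)).2
    have j3 := (hJ B hB 3 (by norm_num)).2
    calc _ ≤ h * (ε / (3 * J)) * J + h * (D * κ₂) * J := by gcongr
      _ = h * (ε / 3 + κ₂ * (D * J)) := by field_simp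
      _ ≤ h * (ε / 3 + ε / 3) := by
          gcongr
          rw [hκ₂, div_mul_eq_mul_div, div_le_div_iff₀ (by positivity) (by norm_num)]
          have : 0 ≤ D * J := by positivity
          nlinarith
      _ = _ := by ring
  set ℓ : Ed d →L[ℝ] ℝ := √h • fderiv ℝ F x + (1 / 2 * (h * √h)) • (Q β + Q.flip β) with hℓ
  have hdec : ∀ w, F (x + (h • β + √h • w)) * gauss B w =
      (F x + h * fderiv ℝ F x β + 1 / 2 * h ^ 2 * Q β β) * gauss B w + ℓ w * gauss B w +
      h / 2 * (Q w w * gauss B w) + R w * gauss B w := by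
    intro w
    simp only [hR, hℓ, map_add, map_smul, add_apply, smul_apply, smul_eq_mul,
      ContinuousLinearMap.flip_apply]
    have : h / 2 * (Q w w * gauss B w) = √h * √h / 2 * (Q w w * gauss B w) := by rw [hs]
    rw [this]
    ring
  have iℓ : Integrable (fun w => ℓ w * gauss B w) := by
    refine hB.integrable_mul_gauss (p := 1) (C := ‖ℓ‖) (by fun_prop) (by norm_num) fun w => ?_
    have := ℓ.le_opNorm w
    rw [Real.norm_eq_abs] at this
    nlinarith [norm_nonneg ℓ]
  have iQ : Integrable (fun w => Q w w * gauss B w) := by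
    refine hB.integrable_mul_gauss (p := 2) (C := M₀) (by fun_prop) (by norm_num) fun w => ?_
    have := hM₀ x w w
    have h2 := norm_nonneg w
    calc _ ≤ M₀ * ‖w‖ ^ 2 := by linarith
      _ ≤ _ := by gcongr; linarith
  have hq : ∀ i j, Q (EuclideanSpace.single i 1) (EuclideanSpace.single j 1) = hess2 F x i j := by
    intro i j
    rw [hess2, iteratedFDeriv_two_apply]
    rfl
  have hI := (integral_congr_ae (μ := (volume : Measure (Ed d))) (Eventually.of_forall hdec)).trans
    (integral_add_four (hB.integrable_gauss.const_mul
      (F x + h * fderiv ℝ F x β + 1 / 2 * h ^ 2 * Q β β)) iℓ (iQ.const_mul (h / 2)) hRI)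
  rw [integral_const_mul, hB.integral_gauss, IsElliptic.integral_clm_mul_gauss,
    integral_const_mul, hB.integral_bilin_mul_gauss] at hI
  simp_rw [hq] at hI
  rw [hI]
  have hQβ : |1 / 2 * h ^ 2 * Q β β| ≤ h * (ε / 3) := by
    rw [abs_mul, abs_of_pos (by positivity : 0 < 1 / 2 * h ^ 2)]
    have h1 := hM₀ x β β
    calc 1 / 2 * h ^ 2 * |Q β β| ≤ 1 / 2 * h ^ 2 * (M₀ * ‖β‖ * ‖β‖) := by
          gcongr
      _ = 1 / 2 * h * M₀ * (h * ‖β‖ ^ 2) := by ring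
      _ ≤ 1 / 2 * h * M₀ * (ε / (3 * (M₀ + 1))) := by gcongr
      _ = h * (1 / 2 * (M₀ / (M₀ + 1)) * (ε / 3)) := by field_simp
      _ ≤ h * (1 * 1 * (ε / 3)) := by
          have : M₀ / (M₀ + 1) ≤ 1 := by rw [div_le_one (by positivity)]; linarith
          have : 0 ≤ M₀ / (M₀ + 1) := by positivity
          gcongr
          norm_num
      _ = _ := by ring
  obtain ⟨r1, r2⟩ := abs_le.1 hRint
  obtain ⟨q1, q2⟩ := abs_le.1 hQβ
  rw [abs_le]
  constructor <;> linarith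

/-! ### The frozen-coefficient Gaussian approximation of the heat flow -/

lemma IsElliptic.norm_le {Λ : ℝ} {B : Ed d →L[ℝ] Ed d} (h : IsElliptic Λ B) : ‖B‖ ≤ Λ := by
  refine B.opNorm_le_bound h.pos.le fun u => ?_
  rcases eq_or_ne (B u) 0 with h0 | h0
  · rw [h0, norm_zero]
    exact mul_nonneg h.pos.le (norm_nonneg u)
  rcases eq_or_ne u 0 with hu | hu
  · simp [hu]
  have hBu : 0 < ‖B u‖ := norm_pos_iff.2 h0
  have hun : 0 < ‖u‖ := norm_pos_iff.2 hu
  set v := (‖u‖ / ‖B u‖) • B u with hv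
  have hvn : ‖v‖ = ‖u‖ := by
    rw [hv, norm_smul, Real.norm_of_nonneg (by positivity), div_mul_cancel₀ _ hBu.ne']
  have h1 : ⟪B u, v⟫ = ‖u‖ * ‖B u‖ := by
    rw [hv, real_inner_smul_right, real_inner_self_eq_norm_sq]
    field_simp
  have h2 := h.up (u + v)
  have h3 : 0 ≤ ⟪B (u - v), u - v⟫ :=
    le_trans (mul_nonneg (inv_nonneg.2 h.pos.le) (sq_nonneg _)) (h.low (u - v))
  have h4 : ⟪B v, u⟫ = ⟪B u, v⟫ := by rw [h.symm, real_inner_comm]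
  simp only [map_add, map_sub, inner_add_left, inner_sub_left, inner_add_right, inner_sub_right]
    at h2 h3
  have h5 : ‖u + v‖ ^ 2 ≤ (2 * ‖u‖) ^ 2 := by
    have := norm_add_le u v
    rw [hvn] at this
    gcongr
    linarith
  have h6 := mul_le_mul_of_nonneg_left h5 h.pos.le
  have h7 : ‖u‖ * ‖B u‖ ≤ ‖u‖ * (Λ * ‖u‖) := by nlinarith
  exact le_of_mul_le_mul_left h7 hun

/-- The Gaussian profile `r^{-d/2} exp (-c |z|² / r)`. -/
def gaussProfile (c r : ℝ) (z : Ed d) : ℝ := (√r ^ d)⁻¹ * exp (-(c * ‖(√r)⁻¹ • z‖ ^ 2))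

lemma gaussProfile_nonneg (c r : ℝ) (z : Ed d) : 0 ≤ gaussProfile c r z := by
  unfold gaussProfile
  have := Real.sqrt_nonneg r
  positivity

lemma integrable_gaussProfile {c r : ℝ} (hc : 0 < c) (hr : 0 < r) :
    Integrable (gaussProfile (d := d) c r) :=
  ((integrable_comp_smul_iff volume _ (inv_ne_zero (Real.sqrt_pos.2 hr).ne')).2
    (integrable_exp_neg_mul_norm_sq hc)).const_mul _

lemma integrable_norm_mul_gaussProfile {c r : ℝ} (hc : 0 < c) (hr : 0 < r) :
    Integrable (fun z : Ed d => ‖z‖ * gaussProfile c r z) := by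
  have hs := Real.sqrt_pos.2 hr
  have h1 : Integrable (fun w : Ed d => ‖w‖ * exp (-(c * ‖w‖ ^ 2))) := by
    refine (integrable_one_add_norm_pow_mul_exp (d := d) hc 1 (by norm_num)).mono' (by fun_prop)
      (Eventually.of_forall fun w => ?_)
    rw [Real.norm_of_nonneg (by positivity), pow_one]
    gcongr
    linarith
  have h2 := (((integrable_comp_smul_iff volume _ (inv_ne_zero hs.ne')).2 h1).const_mul
    ((√r ^ d)⁻¹ * √r))
  refine h2.congr (Eventually.of_forall fun z => ?_)
  simp only [gaussProfile, norm_smul, norm_inv, Real.norm_of_nonneg hs.le]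
  field_simp

lemma integral_gaussProfile {r : ℝ} (c : ℝ) (hr : 0 < r) :
    ∫ z : Ed d, gaussProfile c r z = ∫ w : Ed d, exp (-(c * ‖w‖ ^ 2)) := by
  have hs := Real.sqrt_pos.2 hr
  unfold gaussProfile
  rw [integral_const_mul, Measure.integral_comp_inv_smul_of_nonneg volume
    (fun w : Ed d => exp (-(c * ‖w‖ ^ 2))) hs.le, finrank_euclideanSpace_fin, smul_eq_mul,
    ← mul_assoc, inv_mul_cancel₀ (by positivity), one_mul]

lemma integral_norm_mul_gaussProfile {r : ℝ} (c : ℝ) (hr : 0 < r) :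
    ∫ z : Ed d, ‖z‖ * gaussProfile c r z = √r * ∫ w : Ed d, ‖w‖ * exp (-(c * ‖w‖ ^ 2)) := by
  have hs := Real.sqrt_pos.2 hr
  have e : ∀ z : Ed d, ‖z‖ * gaussProfile c r z = ((√r ^ d)⁻¹ * √r) *
      (‖(√r)⁻¹ • z‖ * exp (-(c * ‖(√r)⁻¹ • z‖ ^ 2))) := by
    intro z
    simp only [gaussProfile, norm_smul, norm_inv, Real.norm_of_nonneg hs.le]
    field_simp
  simp_rw [e]
  rw [integral_const_mul, Measure.integral_comp_inv_smul_of_nonneg volume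
    (fun w : Ed d => ‖w‖ * exp (-(c * ‖w‖ ^ 2))) hs.le, finrank_euclideanSpace_fin, smul_eq_mul]
  generalize (∫ w : Ed d, ‖w‖ * exp (-(c * ‖w‖ ^ 2))) = I
  field_simp

/-- Scaled version of `exists_gauss_bounds`. -/
lemma exists_gauss_smul_bounds (d : ℕ) {Λ : ℝ} (hΛ : 0 < Λ) :
    ∃ C c : ℝ, 0 < C ∧ 0 < c ∧
      (∀ r : ℝ, 0 < r → ∀ (B : Ed d →L[ℝ] Ed d), IsElliptic Λ B → ∀ z,
        gauss (r • B) z ≤ C * gaussProfile c r z) ∧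
      (∀ r : ℝ, 0 < r → ∀ (B B' : Ed d →L[ℝ] Ed d), IsElliptic Λ B → IsElliptic Λ B' →
        ∀ z z', ‖z - z'‖ ≤ √r → |gauss (r • B) z - gauss (r • B') z'| ≤
          C * (‖B - B'‖ + ‖z - z'‖ / √r) * gaussProfile c r z) := by
  obtain ⟨C, c, hC, hc, h1, h2⟩ := exists_gauss_bounds d hΛ
  have hsc : ∀ r : ℝ, 0 < r → ∀ (B : Ed d →L[ℝ] Ed d), IsElliptic Λ B → ∀ z,
      gauss (r • B) z = (√r ^ d)⁻¹ * gauss B ((√r)⁻¹ • z) := by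
    intro r hr B hB z
    have := hB.gauss_smul (Real.sqrt_pos.2 hr) z
    rwa [Real.sq_sqrt hr.le] at this
  refine ⟨C, c, hC, hc, fun r hr B hB z => ?_, fun r hr B B' hB hB' z z' hz => ?_⟩
  · rw [hsc r hr B hB, gaussProfile, mul_left_comm C]
    have hs := Real.sqrt_pos.2 hr
    gcongr
    exact h1 B hB _
  · have hs := Real.sqrt_pos.2 hr
    have e : ‖(√r)⁻¹ • z - (√r)⁻¹ • z'‖ = ‖z - z'‖ / √r := by
      rw [← smul_sub, norm_smul, norm_inv, Real.norm_of_nonneg hs.le, div_eq_inv_mul]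
    have h3 := h2 B B' hB hB' ((√r)⁻¹ • z) ((√r)⁻¹ • z')
      (by rw [e, div_le_one hs]; exact hz)
    rw [e] at h3
    rw [hsc r hr B hB, hsc r hr B' hB', ← mul_sub, abs_mul, abs_of_pos (by positivity),
      gaussProfile, mul_left_comm]
    gcongr

lemma continuous_gauss_comp {X : Type*} [TopologicalSpace X] {Λ : ℝ} {B : X → Ed d →L[ℝ] Ed d}
    {z : X → Ed d} (hΛ : 0 < Λ) (hB : Continuous B) (hz : Continuous z)
    (hE : ∀ p, IsElliptic Λ (B p)) : Continuous fun p => gauss (B p) (z p) := by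
  obtain ⟨C, c, hC, hc, -, h2⟩ := exists_gauss_bounds d hΛ
  rw [continuous_iff_continuousAt]
  intro p
  rw [ContinuousAt, tendsto_iff_dist_tendsto_zero]
  have hlim : Tendsto (fun q => C * (‖B p - B q‖ + ‖z p - z q‖)) (𝓝 p) (𝓝 0) := by
    have : Continuous fun q => C * (‖B p - B q‖ + ‖z p - z q‖) := by fun_prop
    simpa using this.tendsto p
  have hev : ∀ᶠ q in 𝓝 p, ‖z p - z q‖ ≤ 1 := by
    have : Continuous fun q => ‖z p - z q‖ := by fun_prop
    have h0 := this.tendsto p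
    simp only [sub_self, norm_zero] at h0
    exact (h0.eventually (gt_mem_nhds one_pos)).mono fun q hq => le_of_lt hq
  refine squeeze_zero' (Eventually.of_forall fun _ => dist_nonneg) ?_ hlim
  filter_upwards [hev] with q hq
  rw [Real.dist_eq, abs_sub_comm]
  refine (h2 (B p) (B q) (hE p) (hE q) (z p) (z q) hq).trans ?_
  have : exp (-(c * ‖z p‖ ^ 2)) ≤ 1 := exp_le_one_iff.2 (by
    have := mul_nonneg hc.le (sq_nonneg ‖z p‖); linarith)
  exact mul_le_of_le_one_right (by positivity) this

/-- The operator with kernel `gauss (τ • a y) (x - y)`. -/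
def smoothOp (a : Ed d → Ed d →L[ℝ] Ed d) (τ : ℝ) (f : Ed d → ℝ) (x : Ed d) : ℝ :=
  ∫ y, gauss (τ • a y) (x - y) * f y

section SmoothOp

variable {Λ K : ℝ} {a : Ed d → Ed d →L[ℝ] Ed d}

lemma continuous_of_norm_sub_le (haL : ∀ x y, ‖a x - a y‖ ≤ K * ‖x - y‖) : Continuous a := by
  refine (LipschitzWith.of_dist_le_mul (K := K.toNNReal) fun x y => ?_).continuous
  rw [dist_eq_norm, dist_eq_norm]
  refine (haL x y).trans ?_
  gcongr
  exact Real.le_coe_toNNReal K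

lemma continuous_gauss_smul_sub (ha : ∀ x, IsElliptic Λ (a x)) (hac : Continuous a) {τ : ℝ}
    (hτ : 0 < τ) : Continuous fun p : Ed d × Ed d => gauss (τ • a p.2) (p.1 - p.2) :=
  continuous_gauss_comp ((ha 0).smul hτ).pos (by fun_prop) (by fun_prop)
    fun p => (ha p.2).smul hτ

lemma integrable_prod_smoothOp (ha : ∀ x, IsElliptic Λ (a x)) (hac : Continuous a) {τ : ℝ}
    (hτ : 0 < τ) {f : Ed d → ℝ} (hf : Measurable f) (hf1 : ∀ x, |f x| ≤ 1)
    {Ω : Type*} [MeasurableSpace Ω] {κ : Measure Ω} [SFinite κ] {g : Ω → ℝ} (hg : Integrable g κ)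
    {p : Ω → Ed d} (hp : Measurable p) :
    Integrable (fun q : Ω × Ed d => g q.1 * (gauss (τ • a q.2) (p q.1 - q.2) * f q.2))
      (κ.prod volume) := by
  obtain ⟨C, c, hC, hc, hG, -⟩ := exists_gauss_smul_bounds d (ha 0).pos
  have hmeas : Measurable fun q : Ω × Ed d => gauss (τ • a q.2) (p q.1 - q.2) * f q.2 :=
    ((continuous_gauss_smul_sub ha hac hτ).measurable.comp
      ((hp.comp measurable_fst).prodMk measurable_snd)).mul (hf.comp measurable_snd)
  have hpt : ∀ (ω : Ω) y, ‖g ω * (gauss (τ • a y) (p ω - y) * f y)‖ ≤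
      |g ω| * (C * gaussProfile c τ (p ω - y)) := by
    intro ω y
    rw [norm_mul, norm_mul, Real.norm_eq_abs, Real.norm_of_nonneg (gauss_nonneg _ _),
      Real.norm_eq_abs]
    refine mul_le_mul_of_nonneg_left ?_ (abs_nonneg _)
    calc gauss (τ • a y) (p ω - y) * |f y| ≤ gauss (τ • a y) (p ω - y) * 1 :=
          mul_le_mul_of_nonneg_left (hf1 y) (gauss_nonneg _ _)
      _ ≤ _ := by rw [mul_one]; exact hG τ hτ (a y) (ha y) _
  have hprof : ∀ z : Ed d, Integrable fun y => C * gaussProfile c τ (z - y) := fun z =>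
    ((integrable_gaussProfile hc hτ).comp_sub_left z).const_mul C
  have hm : AEStronglyMeasurable
      (fun q : Ω × Ed d => g q.1 * (gauss (τ • a q.2) (p q.1 - q.2) * f q.2)) (κ.prod volume) :=
    hg.aestronglyMeasurable.comp_fst.mul hmeas.aestronglyMeasurable
  rw [integrable_prod_iff hm]
  refine ⟨Eventually.of_forall fun ω => ?_, ?_⟩
  · refine ((hprof (p ω)).const_mul |g ω|).mono' ?_ (Eventually.of_forall (hpt ω))
    exact ((hmeas.comp (measurable_prodMk_left (x := ω))).const_mul (g ω)).aestronglyMeasurable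
  · refine (hg.abs.mul_const (C * ∫ z : Ed d, gaussProfile c τ z)).mono'
      hm.norm.integral_prod_right' (Eventually.of_forall fun ω => ?_)
    rw [Real.norm_of_nonneg (integral_nonneg fun _ => norm_nonneg _)]
    calc ∫ y, ‖g ω * (gauss (τ • a y) (p ω - y) * f y)‖
        ≤ ∫ y, |g ω| * (C * gaussProfile c τ (p ω - y)) :=
          integral_mono_of_nonneg (Eventually.of_forall fun _ => norm_nonneg _)
            ((hprof (p ω)).const_mul |g ω|) (Eventually.of_forall (hpt ω))
      _ = _ := by
          rw [integral_const_mul, integral_const_mul, integral_sub_left_eq_self]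

/-- Fubini for the smoothing operator. -/
lemma integral_mul_smoothOp (ha : ∀ x, IsElliptic Λ (a x)) (hac : Continuous a) {τ : ℝ}
    (hτ : 0 < τ) {f : Ed d → ℝ} (hf : Measurable f) (hf1 : ∀ x, |f x| ≤ 1)
    {Ω : Type*} [MeasurableSpace Ω] {κ : Measure Ω} [SFinite κ] {g : Ω → ℝ} (hg : Integrable g κ)
    {p : Ω → Ed d} (hp : Measurable p) :
    ∫ ω, g ω * smoothOp a τ f (p ω) ∂κ =
      ∫ y, (∫ ω, g ω * gauss (τ • a y) (p ω - y) ∂κ) * f y := by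
  have h := integral_integral_swap
    (f := fun ω y => g ω * (gauss (τ • a y) (p ω - y) * f y)) (integrable_prod_smoothOp ha hac hτ hf hf1 hg hp)
  simp only [integral_const_mul] at h
  refine Eq.trans h (integral_congr_ae (Eventually.of_forall fun y => ?_))
  simp only
  rw [← integral_mul_const]
  congr 1
  ext ω
  ring

lemma measurable_smoothOp (ha : ∀ x, IsElliptic Λ (a x)) (hac : Continuous a) {τ : ℝ}
    (hτ : 0 < τ) {f : Ed d → ℝ} (hf : Measurable f) : Measurable (smoothOp a τ f) := by
  have h : StronglyMeasurable fun q : Ed d × Ed d => gauss (τ • a q.2) (q.1 - q.2) * f q.2 :=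
    ((continuous_gauss_smul_sub ha hac hτ).measurable.mul
      (hf.comp measurable_snd)).stronglyMeasurable
  exact h.integral_prod_right.measurable

lemma integrable_gauss_smul_sub (ha : ∀ x, IsElliptic Λ (a x)) (hac : Continuous a) {τ : ℝ}
    (hτ : 0 < τ) {f : Ed d → ℝ} (hf : Measurable f) (hf1 : ∀ x, |f x| ≤ 1) (x : Ed d) :
    Integrable fun y => gauss (τ • a y) (x - y) * f y := by
  obtain ⟨C, c, hC, hc, hG, -⟩ := exists_gauss_smul_bounds d (ha 0).pos
  refine (((integrable_gaussProfile hc hτ).comp_sub_left x).const_mul C).mono'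
    (((continuous_gauss_smul_sub ha hac hτ).measurable.comp measurable_prodMk_left).mul
      hf).aestronglyMeasurable (Eventually.of_forall fun y => ?_)
  rw [norm_mul, Real.norm_of_nonneg (gauss_nonneg _ _), Real.norm_eq_abs]
  exact (mul_le_of_le_one_right (gauss_nonneg _ _) (hf1 y)).trans (hG τ hτ (a y) (ha y) _)

/-- The smoothing operators are uniformly bounded and regular in time. -/
lemma exists_smoothOp_bounds (ha : ∀ x, IsElliptic Λ (a x)) (hac : Continuous a) :
    ∃ C : ℝ, 0 < C ∧ ∀ f : Ed d → ℝ, Measurable f → (∀ x, |f x| ≤ 1) → ∀ x,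
      (∀ τ, 0 < τ → |smoothOp a τ f x| ≤ C) ∧
      (∀ τ τ', 0 < τ → τ ≤ τ' → τ' ≤ 2 * τ →
        |smoothOp a τ' f x - smoothOp a τ f x| ≤ C * ((τ' - τ) / τ)) := by
  have hΛ := (ha 0).pos
  obtain ⟨C, c, hC, hc, hG, hD⟩ := exists_gauss_smul_bounds d (Λ := 2 * Λ) (by positivity)
  have ha2 : ∀ x, IsElliptic (2 * Λ) (a x) := fun x => (ha x).mono (by linarith)
  set I := ∫ w : Ed d, exp (-(c * ‖w‖ ^ 2)) with hI
  have hI0 : 0 ≤ I := integral_nonneg fun w => (exp_pos _).le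
  have hprof : ∀ {τ : ℝ}, 0 < τ → ∀ z : Ed d, Integrable fun y => gaussProfile c τ (z - y) :=
    fun hτ z => (integrable_gaussProfile hc hτ).comp_sub_left z
  have hprofI : ∀ {τ : ℝ}, 0 < τ → ∀ z : Ed d, ∫ y, gaussProfile c τ (z - y) = I :=
    fun hτ z => by rw [integral_sub_left_eq_self, integral_gaussProfile c hτ]
  refine ⟨C * (1 + Λ) * (I + 1), by positivity, fun f hf hf1 x => ⟨fun τ hτ => ?_,
    fun τ τ' hτ hττ' hτ' => ?_⟩⟩
  · rw [smoothOp, ← Real.norm_eq_abs]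
    refine (norm_integral_le_of_norm_le ((hprof hτ x).const_mul C)
      (Eventually.of_forall fun y => ?_)).trans ?_
    · rw [norm_mul, Real.norm_of_nonneg (gauss_nonneg _ _), Real.norm_eq_abs]
      exact (mul_le_of_le_one_right (gauss_nonneg _ _) (hf1 y)).trans (hG τ hτ (a y) (ha2 y) _)
    · rw [integral_const_mul, hprofI hτ]
      have h1 : 0 ≤ C * I := by positivity
      have h2 : 0 ≤ C * Λ * (I + 1) := by positivity
      nlinarith
  · have hτ'0 : 0 < τ' := hτ.trans_le hττ'
    rw [smoothOp, smoothOp, ← integral_sub (integrable_gauss_smul_sub ha hac hτ'0 hf hf1 x)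
      (integrable_gauss_smul_sub ha hac hτ hf hf1 x), ← Real.norm_eq_abs]
    refine (norm_integral_le_of_norm_le ((hprof hτ x).const_mul (C * ((τ' - τ) / τ * Λ)))
      (Eventually.of_forall fun y => ?_)).trans ?_
    · rw [← sub_mul, norm_mul, Real.norm_eq_abs, Real.norm_eq_abs]
      refine (mul_le_of_le_one_right (abs_nonneg _) (hf1 y)).trans ?_
      have h1 := hD τ hτ (a y) ((τ' / τ) • a y) (ha2 y)
        ((ha y).smul_of_mem_Icc (by rwa [one_le_div hτ]) (by rwa [div_le_iff₀ hτ]))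
        (x - y) (x - y) (by simp)
      rw [smul_smul, mul_div_cancel₀ _ hτ.ne', abs_sub_comm] at h1
      refine h1.trans ?_
      have h2 : ‖a y - (τ' / τ) • a y‖ ≤ (τ' - τ) / τ * Λ := by
        have h0 : 0 ≤ (τ' - τ) / τ := div_nonneg (by linarith) hτ.le
        have e : 1 - τ' / τ = -((τ' - τ) / τ) := by field_simp; ring
        have : a y - (τ' / τ) • a y = (1 - τ' / τ) • a y := by
          ext v k; simp; ring
        rw [this, norm_smul, e, norm_neg, Real.norm_of_nonneg h0]
        exact mul_le_mul_of_nonneg_left (ha y).norm_le h0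
      have := gaussProfile_nonneg c τ (x - y)
      simp only [sub_self, norm_zero, zero_div, add_zero]
      gcongr
    · rw [integral_const_mul, hprofI hτ]
      have h0 : 0 ≤ (τ' - τ) / τ := div_nonneg (by linarith) hτ.le
      calc C * ((τ' - τ) / τ * Λ) * I = (C * Λ * I) * ((τ' - τ) / τ) := by ring
        _ ≤ _ := by
          gcongr
          · linarith
          · linarith

end SmoothOp

/-! ### One step of the frozen-coefficient scheme against the smoothing operators -/

/-- The smoothing operators, extended by the identity at time `0`. -/
def flowOp (a : Ed d → Ed d →L[ℝ] Ed d) (τ : ℝ) (f : Ed d → ℝ) : Ed d → ℝ :=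
  if τ = 0 then f else smoothOp a τ f

section Step

variable {Λ K : ℝ} {a : Ed d → Ed d →L[ℝ] Ed d}

lemma flowOp_zero (f : Ed d → ℝ) : flowOp a 0 f = f := if_pos rfl

lemma flowOp_of_pos {τ : ℝ} (hτ : 0 < τ) (f : Ed d → ℝ) : flowOp a τ f = smoothOp a τ f :=
  if_neg hτ.ne'

lemma measurable_flowOp (ha : ∀ x, IsElliptic Λ (a x)) (hac : Continuous a) {τ : ℝ}
    (hτ : 0 ≤ τ) {f : Ed d → ℝ} (hf : Measurable f) : Measurable (flowOp a τ f) := by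
  rcases hτ.eq_or_lt with rfl | hτ
  · rwa [flowOp_zero]
  · rw [flowOp_of_pos hτ]
    exact measurable_smoothOp ha hac hτ hf

lemma integral_flowOp_step (ha : ∀ x, IsElliptic Λ (a x)) (hac : Continuous a) {τ h : ℝ}
    (hτ : 0 ≤ τ) (hh : 0 < h) {f : Ed d → ℝ} (hf : Measurable f) (hf1 : ∀ x, |f x| ≤ 1)
    (x β : Ed d) :
    ∫ w, flowOp a τ f (x + (h • β + √h • w)) * gauss (a x) w =
      ∫ y, gauss (h • a x + τ • a y) (x + h • β - y) * f y := by
  have hs := Real.sqrt_pos.2 hh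
  have hsq : √h ^ 2 = h := Real.sq_sqrt hh.le
  rcases hτ.eq_or_lt with rfl | hτ
  · have h0 : ∀ y, h • a x + (0 : ℝ) • a y = h • a x := fun y => by ext v k; simp
    simp only [flowOp_zero, h0]
    have h1 := (ha x).integral_mul_gauss_smul hs (fun z => f (x + (h • β + z)))
    rw [hsq] at h1
    rw [← h1, ← integral_sub_left_eq_self (fun y => gauss (h • a x) (x + h • β - y) * f y) volume
      (x + h • β), ← integral_neg_eq_self]
    congr 1
    ext z
    rw [gauss_neg, mul_comm, sub_sub_cancel, sub_eq_add_neg, add_assoc]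
  · rw [flowOp_of_pos hτ]
    have h1 := integral_mul_smoothOp ha hac hτ hf hf1 (κ := volume) (ha x).integrable_gauss
      (p := fun w => x + (h • β + √h • w)) (by fun_prop)
    simp_rw [mul_comm _ (gauss (a x) _)]
    rw [h1]
    congr 1
    ext y
    congr 1
    have h2 := (ha x).integral_mul_gauss_smul hs (fun z => gauss (τ • a y) (x + (h • β + z) - y))
    rw [hsq] at h2
    simp_rw [mul_comm (gauss (a x) _)]
    rw [← h2, ← ((ha x).smul hh).integral_gauss_mul_gauss ((ha y).smul hτ),
      ← integral_neg_eq_self]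
    congr 1
    ext z
    rw [gauss_neg, mul_comm]
    congr 2
    abel

/-- The one-step operator of the scheme agrees with the smoothing flow up to `h / √(τ + h)`. -/
lemma exists_flowOp_step_bound (ha : ∀ x, IsElliptic Λ (a x))
    (haL : ∀ x y, ‖a x - a y‖ ≤ K * ‖x - y‖) (hK : 0 ≤ K) :
    ∃ C : ℝ, 0 < C ∧ ∀ f : Ed d → ℝ, Measurable f → (∀ x, |f x| ≤ 1) →
      ∀ τ h, 0 ≤ τ → 0 < h → ∀ x β : Ed d, h * ‖β‖ ^ 2 ≤ 1 →
        |(∫ w, flowOp a τ f (x + (h • β + √h • w)) * gauss (a x) w) - flowOp a (τ + h) f x| ≤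
          C * (h / √(τ + h)) * (1 + ‖β‖) := by
  have hac := continuous_of_norm_sub_le haL
  obtain ⟨C, c, hC, hc, hG, hD⟩ := exists_gauss_smul_bounds d (ha 0).pos
  set I := ∫ w : Ed d, exp (-(c * ‖w‖ ^ 2)) with hI
  set J := ∫ w : Ed d, ‖w‖ * exp (-(c * ‖w‖ ^ 2)) with hJ
  have hI0 : 0 ≤ I := integral_nonneg fun w => (exp_pos _).le
  have hJ0 : 0 ≤ J := integral_nonneg fun w => mul_nonneg (norm_nonneg w) (exp_pos _).le
  refine ⟨C * (K * J + I + 1), by positivity, fun f hf hf1 τ h hτ hh x β hβ => ?_⟩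
  have hr : 0 < τ + h := by positivity
  set r := τ + h with hrdef
  have hs := Real.sqrt_pos.2 hr
  have hE : ∀ y, IsElliptic Λ ((h / r) • a x + (τ / r) • a y) := fun y =>
    (ha x).convexComb (ha y) (by positivity) (by positivity) (by field_simp; linarith)
  have hrE : ∀ y, h • a x + τ • a y = r • ((h / r) • a x + (τ / r) • a y) := fun y => by
    rw [smul_add, smul_smul, smul_smul, mul_div_cancel₀ _ hr.ne', mul_div_cancel₀ _ hr.ne']
  have hzz : ∀ y, ‖(x - y) - (x + h • β - y)‖ = h * ‖β‖ := fun y => by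
    rw [show (x - y) - (x + h • β - y) = -(h • β) by abel, norm_neg, norm_smul,
      Real.norm_of_nonneg hh.le]
  have hle : h * ‖β‖ ≤ √r := by
    refine Real.le_sqrt_of_sq_le ?_
    nlinarith
  have hkey : ∀ y, |gauss (r • a y) (x - y) - gauss (h • a x + τ • a y) (x + h • β - y)| ≤
      C * (h / r * K) * (‖x - y‖ * gaussProfile c r (x - y)) +
        C * (h * ‖β‖ / √r) * gaussProfile c r (x - y) := by
    intro y
    have h1 := hD r hr (a y) _ (ha y) (hE y) (x - y) (x + h • β - y) (by rw [hzz]; exact hle)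
    rw [← hrE, hzz] at h1
    refine h1.trans ?_
    have h2 : ‖a y - ((h / r) • a x + (τ / r) • a y)‖ ≤ h / r * (K * ‖x - y‖) := by
      have e : a y - ((h / r) • a x + (τ / r) • a y) = (h / r) • (a y - a x) := by
        have : τ / r = 1 - h / r := by field_simp; linarith
        rw [this]
        ext v k; simp; ring
      rw [e, norm_smul, Real.norm_of_nonneg (by positivity), norm_sub_rev]
      gcongr
      exact haL x y
    have := gaussProfile_nonneg c r (x - y)
    calc _ ≤ C * (h / r * (K * ‖x - y‖) + h * ‖β‖ / √r) * gaussProfile c r (x - y) := by gcongr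
      _ = _ := by ring
  have hi1 : Integrable fun y => ‖x - y‖ * gaussProfile c r (x - y) :=
    (integrable_norm_mul_gaussProfile hc hr).comp_sub_left x
  have hi2 : Integrable fun y => gaussProfile c r (x - y) :=
    (integrable_gaussProfile hc hr).comp_sub_left x
  have hint1 := integrable_gauss_smul_sub ha hac hr hf hf1 x
  have hcont : Continuous fun y => gauss (h • a x + τ • a y) (x + h • β - y) := by
    simp_rw [hrE]
    exact continuous_gauss_comp ((ha 0).smul hr).pos (by fun_prop) (by fun_prop)
      fun y => (hE y).smul hr
  have hbd : Integrable fun y => C * (h / r * K) * (‖x - y‖ * gaussProfile c r (x - y)) +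
        C * (h * ‖β‖ / √r) * gaussProfile c r (x - y) := (hi1.const_mul _).add (hi2.const_mul _)
  have hkey2 : ∀ y, ‖gauss (h • a x + τ • a y) (x + h • β - y) * f y -
      gauss (r • a y) (x - y) * f y‖ ≤ C * (h / r * K) * (‖x - y‖ * gaussProfile c r (x - y)) +
        C * (h * ‖β‖ / √r) * gaussProfile c r (x - y) := fun y => by
    rw [← sub_mul, norm_mul, Real.norm_eq_abs, Real.norm_eq_abs, abs_sub_comm]
    exact (mul_le_of_le_one_right (abs_nonneg _) (hf1 y)).trans (hkey y)
  have hdiff : Integrable fun y => gauss (h • a x + τ • a y) (x + h • β - y) * f y -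
      gauss (r • a y) (x - y) * f y :=
    hbd.mono' ((hcont.measurable.mul hf).aestronglyMeasurable.sub hint1.aestronglyMeasurable)
      (Eventually.of_forall hkey2)
  have hint2 : Integrable fun y => gauss (h • a x + τ • a y) (x + h • β - y) * f y := by
    have := hdiff.add hint1
    refine this.congr (Eventually.of_forall fun y => ?_)
    simp
  rw [integral_flowOp_step ha hac hτ hh hf hf1, flowOp_of_pos hr, smoothOp,
    ← integral_sub hint2 hint1, ← Real.norm_eq_abs]
  refine (norm_integral_le_of_norm_le hbd (Eventually.of_forall hkey2)).trans ?_
  rw [integral_add (hi1.const_mul _) (hi2.const_mul _), integral_const_mul, integral_const_mul,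
    integral_sub_left_eq_self (fun y => ‖y‖ * gaussProfile c r y),
    integral_sub_left_eq_self (fun y => gaussProfile c r y), integral_gaussProfile c hr,
    integral_norm_mul_gaussProfile c hr]
  have e1 : h / r * √r = h / √r := by
    rw [div_mul_eq_mul_div, div_eq_div_iff hr.ne' hs.ne', mul_assoc, Real.mul_self_sqrt hr.le]
  calc C * (h / r * K) * (√r * J) + C * (h * ‖β‖ / √r) * I
      = C * (h / √r) * (K * J + ‖β‖ * I) := by rw [← e1]; field_simp; rw [Real.sq_sqrt hr.le]; ring
    _ ≤ C * (h / √r) * ((K * J + I + 1) * (1 + ‖β‖)) := by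
        gcongr
        have := norm_nonneg β
        have := mul_nonneg hK hJ0
        nlinarith [mul_nonneg this (norm_nonneg β)]
    _ = _ := by ring

end Step

/-! ### The one-step transition of the scheme -/

/-- One step of the scheme: the law of `x + h β(x) + √h w`, where `x` has law `μ` and, given `x`,
`w` has density `gauss (a x)`. -/
def stepMeasure (a : Ed d → Ed d →L[ℝ] Ed d) (h : ℝ) (β : Ed d → Ed d) (μ : Measure (Ed d)) :
    Measure (Ed d) :=
  ((μ.prod volume).withDensity fun q => ENNReal.ofReal (gauss (a q.1) q.2)).map
    fun q => q.1 + (h • β q.1 + √h • q.2)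

section StepMeasure

variable {Λ : ℝ} {a : Ed d → Ed d →L[ℝ] Ed d} {h : ℝ} {β : Ed d → Ed d} {μ : Measure (Ed d)}

lemma continuous_gauss_uncurry (ha : ∀ x, IsElliptic Λ (a x)) (hac : Continuous a) :
    Continuous fun q : Ed d × Ed d => gauss (a q.1) q.2 :=
  continuous_gauss_comp (ha 0).pos (by fun_prop) (by fun_prop) fun p => ha p.1

lemma lintegral_prod_gauss (ha : ∀ x, IsElliptic Λ (a x)) (hac : Continuous a)
    [IsProbabilityMeasure μ] :
    ∫⁻ q : Ed d × Ed d, ENNReal.ofReal (gauss (a q.1) q.2) ∂(μ.prod volume) = 1 := by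
  rw [lintegral_prod _ (continuous_gauss_uncurry ha hac).measurable.ennreal_ofReal.aemeasurable]
  have : ∀ x, ∫⁻ w, ENNReal.ofReal (gauss (a x) w) = 1 := fun x => by
    rw [← ofReal_integral_eq_lintegral_ofReal (ha x).integrable_gauss
      (Eventually.of_forall fun w => gauss_nonneg _ _), (ha x).integral_gauss, ENNReal.ofReal_one]
  simp [this]

lemma isProbabilityMeasure_stepMeasure (ha : ∀ x, IsElliptic Λ (a x)) (hac : Continuous a)
    (hβ : Measurable β) [IsProbabilityMeasure μ] :
    IsProbabilityMeasure (stepMeasure a h β μ) := by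
  have : IsProbabilityMeasure
      ((μ.prod volume).withDensity fun q : Ed d × Ed d => ENNReal.ofReal (gauss (a q.1) q.2)) :=
    ⟨by rw [withDensity_apply _ MeasurableSet.univ, Measure.restrict_univ,
      lintegral_prod_gauss ha hac]⟩
  exact Measure.isProbabilityMeasure_map (by fun_prop)

lemma integrable_prod_mul_gauss (ha : ∀ x, IsElliptic Λ (a x)) (hac : Continuous a)
    [IsProbabilityMeasure μ] {F : Ed d × Ed d → ℝ} (hF : Measurable F) {C : ℝ}
    (hC : ∀ q, |F q| ≤ C) :
    Integrable (fun q : Ed d × Ed d => F q * gauss (a q.1) q.2) (μ.prod volume) := by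
  have h1 : Integrable (fun q : Ed d × Ed d => gauss (a q.1) q.2) (μ.prod volume) := by
    refine ⟨(continuous_gauss_uncurry ha hac).aestronglyMeasurable, ?_⟩
    rw [hasFiniteIntegral_iff_ofReal (Eventually.of_forall fun q => gauss_nonneg _ _),
      lintegral_prod_gauss ha hac]
    exact ENNReal.one_lt_top
  exact h1.bdd_mul hF.aestronglyMeasurable (Eventually.of_forall hC)

lemma integral_stepMeasure (ha : ∀ x, IsElliptic Λ (a x)) (hac : Continuous a)
    (hβ : Measurable β) [IsProbabilityMeasure μ] {f : Ed d → ℝ} (hf : Measurable f) {C : ℝ}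
    (hC : ∀ x, |f x| ≤ C) :
    ∫ y, f y ∂(stepMeasure a h β μ) =
      ∫ x, (∫ w, f (x + (h • β x + √h • w)) * gauss (a x) w) ∂μ := by
  have hT : Measurable fun q : Ed d × Ed d => q.1 + (h • β q.1 + √h • q.2) := by fun_prop
  rw [stepMeasure, integral_map hT.aemeasurable hf.aestronglyMeasurable,
    integral_withDensity_eq_integral_toReal_smul
      (continuous_gauss_uncurry ha hac).measurable.ennreal_ofReal
      (Eventually.of_forall fun q => ENNReal.ofReal_lt_top)]
  have e : ∀ q : Ed d × Ed d, (ENNReal.ofReal (gauss (a q.1) q.2)).toReal •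
      f (q.1 + (h • β q.1 + √h • q.2)) =
      f (q.1 + (h • β q.1 + √h • q.2)) * gauss (a q.1) q.2 := fun q => by
    rw [ENNReal.toReal_ofReal (gauss_nonneg _ _), smul_eq_mul, mul_comm]
  simp_rw [e]
  exact integral_prod _ (integrable_prod_mul_gauss ha hac (hf.comp hT) fun q => hC _)

lemma integrable_stepMeasure_inner (ha : ∀ x, IsElliptic Λ (a x)) (hac : Continuous a)
    (hβ : Measurable β) [IsProbabilityMeasure μ] {f : Ed d → ℝ} (hf : Measurable f) {C : ℝ}
    (hC : ∀ x, |f x| ≤ C) :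
    Integrable (fun x => ∫ w, f (x + (h • β x + √h • w)) * gauss (a x) w) μ := by
  have hT : Measurable fun q : Ed d × Ed d => q.1 + (h • β q.1 + √h • q.2) := by fun_prop
  exact (integrable_prod_mul_gauss ha hac (hf.comp hT) fun q => hC _).integral_prod_left

end StepMeasure

/-- The map sending the complement of `{V ≤ m}` to the origin. -/
def cutMap (V : Ed d → ℝ) (m : ℝ) (y : Ed d) : Ed d := by
  classical exact if V y ≤ m then y else 0

section CutMap

variable {V : Ed d → ℝ} {m : ℝ} {μ : Measure (Ed d)}

lemma cutMap_of_le {y : Ed d} (h : V y ≤ m) : cutMap V m y = y := if_pos h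

lemma cutMap_of_lt {y : Ed d} (h : m < V y) : cutMap V m y = 0 := if_neg h.not_ge

lemma measurable_cutMap (hV : Measurable V) : Measurable (cutMap V m) :=
  Measurable.ite (measurableSet_le hV measurable_const) measurable_id measurable_const

lemma ae_map_cutMap_le (hV : Measurable V) (h0 : V 0 ≤ m) :
    ∀ᵐ y ∂(μ.map (cutMap V m)), V y ≤ m := by
  rw [ae_map_iff (measurable_cutMap hV).aemeasurable (measurableSet_le hV measurable_const)]
  refine Eventually.of_forall fun y => ?_
  rcases le_or_gt (V y) m with h | h
  · rwa [cutMap_of_le h]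
  · rwa [cutMap_of_lt h]

lemma abs_integral_map_cutMap_sub_le (hV : Measurable V) [IsProbabilityMeasure μ] {f : Ed d → ℝ}
    (hf : Measurable f) {C : ℝ} (hC : ∀ x, |f x| ≤ C) :
    |(∫ y, f y ∂(μ.map (cutMap V m))) - ∫ y, f y ∂μ| ≤ 2 * C * μ.real {y | m < V y} := by
  have hS : MeasurableSet {y | m < V y} := measurableSet_lt measurable_const hV
  have hc := measurable_cutMap (m := m) hV
  rw [integral_map hc.aemeasurable hf.aestronglyMeasurable]
  have hi : ∀ {g : Ed d → ℝ}, Measurable g → (∀ x, |g x| ≤ C) → Integrable g μ :=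
    fun hg hgC => Integrable.of_bound hg.aestronglyMeasurable C (Eventually.of_forall hgC)
  rw [← integral_sub (hi (g := fun x => f (cutMap V m x)) (hf.comp hc) fun x => hC _) (hi hf hC), ← Real.norm_eq_abs]
  have hb : Integrable ({y | m < V y}.indicator fun _ => 2 * C) μ :=
    (integrable_const _).indicator hS
  refine (norm_integral_le_of_norm_le hb (Eventually.of_forall fun y => ?_)).trans ?_
  · rcases le_or_gt (V y) m with h | h
    · rw [cutMap_of_le h, sub_self, norm_zero, indicator_of_notMem (by simpa using h)]
    · rw [indicator_of_mem (by exact h)]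
      have h1 := hC (cutMap V m y)
      have h2 := hC y
      exact (norm_sub_le _ _).trans (by rw [Real.norm_eq_abs, Real.norm_eq_abs]; linarith)
  · rw [integral_indicator_const _ hS, smul_eq_mul, mul_comm]

end CutMap

/-! ### The Lyapunov estimate along one step -/

/-- A bounded `C²` modification of `V` outside the sublevel set `{V ≤ m + 1}`. -/
def truncV (V : Ed d → ℝ) (m : ℝ) (x : Ed d) : ℝ :=
  V x * (1 - Real.smoothTransition (V x - m - 1)) + (m + 2) * Real.smoothTransition (V x - m - 1)

section TruncV

variable {V : Ed d → ℝ} {m : ℝ}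

lemma truncV_of_le {x : Ed d} (h : V x ≤ m + 1) : truncV V m x = V x := by
  rw [truncV, Real.smoothTransition.zero_of_nonpos (by linarith)]
  ring

lemma truncV_of_ge {x : Ed d} (h : m + 2 ≤ V x) : truncV V m x = m + 2 := by
  rw [truncV, Real.smoothTransition.one_of_one_le (by linarith)]
  ring

lemma le_truncV {x : Ed d} (h : m ≤ V x) : m ≤ truncV V m x := by
  have h1 := Real.smoothTransition.nonneg (V x - m - 1)
  have h2 := Real.smoothTransition.le_one (V x - m - 1)
  rw [truncV]
  nlinarith

lemma abs_truncV_le {x : Ed d} (h : 0 ≤ V x) (hm : 0 ≤ m) : |truncV V m x| ≤ m + 2 := by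
  rcases le_total (m + 2) (V x) with h' | h'
  · rw [truncV_of_ge h', abs_of_nonneg (by linarith)]
  · have h1 := Real.smoothTransition.nonneg (V x - m - 1)
    have h2 := Real.smoothTransition.le_one (V x - m - 1)
    rw [truncV, abs_le]
    constructor <;> nlinarith

lemma contDiff_truncV (hV : ContDiff ℝ 2 V) : ContDiff ℝ 2 (truncV V m) := by
  have : ContDiff ℝ 2 fun x => Real.smoothTransition (V x - m - 1) :=
    Real.smoothTransition.contDiff.comp (by fun_prop)
  unfold truncV
  fun_prop

lemma exists_isCompact_forall_lt (hVinf : Tendsto V (cocompact (Ed d)) atTop) (m : ℝ) :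
    ∃ S : Set (Ed d), IsCompact S ∧ ∀ x, x ∉ S → m < V x := by
  obtain ⟨S, hS, h⟩ := mem_cocompact.1 (hVinf.eventually_gt_atTop m)
  exact ⟨S, hS, fun x hx => h hx⟩

lemma hasCompactSupport_truncV_sub (hVinf : Tendsto V (cocompact (Ed d)) atTop) :
    HasCompactSupport fun x => truncV V m x - (m + 2) := by
  obtain ⟨S, hS, h⟩ := exists_isCompact_forall_lt hVinf (m + 2)
  exact HasCompactSupport.intro hS fun x hx => by rw [truncV_of_ge (h x hx).le, sub_self]

lemma truncV_eventuallyEq (hV : Continuous V) {x : Ed d} (h : V x ≤ m) :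
    truncV V m =ᶠ[𝓝 x] V := by
  filter_upwards [hV.continuousAt.eventually_lt continuousAt_const
    (show V x < m + 1 by linarith)] with y hy using truncV_of_le hy.le

end TruncV

lemma exists_lyapunov_step {Λ : ℝ} {a : Ed d → Ed d →L[ℝ] Ed d} (ha : ∀ x, IsElliptic Λ (a x))
    (hac : Continuous a) {V : Ed d → ℝ} (hV : ContDiff ℝ 2 V) (hV1 : ∀ x, 1 ≤ V x)
    (hVinf : Tendsto V (cocompact (Ed d)) atTop) {m ε : ℝ} (hm : V 0 ≤ m) (hε : 0 < ε) :
    ∃ κ : ℝ, 0 < κ ∧ κ ≤ 1 ∧ ∀ h, 0 < h → h ≤ κ → ∀ μ : Measure (Ed d),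
      IsProbabilityMeasure μ → (∀ᵐ x ∂μ, V x ≤ m) → ∀ β : Ed d → Ed d, Measurable β →
      (∀ᵐ x ∂μ, h * ‖β x‖ ^ 2 ≤ κ) → ∀ N : ℝ,
      (∀ x, fderiv ℝ V x (β x) + ∑ i, ∑ j,
        ⟪a x (EuclideanSpace.single i 1), EuclideanSpace.single j 1⟫ * hess2 V x i j ≤ N) →
      (∫ x, V x ∂((stepMeasure a h β μ).map (cutMap V m))) +
          (m - V 0) * (stepMeasure a h β μ).real {y | m < V y} ≤
        (∫ x, V x ∂μ) + h * (N + ε) := by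
  obtain ⟨κ, hκ, hκ1, hexp⟩ := exists_gauss_expansion (contDiff_truncV (m := m) hV)
    (hasCompactSupport_truncV_sub (m := m) hVinf) (ha 0).pos hε
  refine ⟨κ, hκ, hκ1, fun h hh hhκ μ _ hμ β hβ hβκ N hN => ?_⟩
  have hprob := isProbabilityMeasure_stepMeasure (h := h) (μ := μ) ha hac hβ
  have hVm : Measurable V := hV.continuous.measurable
  have hm0 : 0 ≤ m := le_trans (by linarith [hV1 0]) hm
  have hTm : Measurable (truncV V m) := (contDiff_truncV hV).continuous.measurable
  have hTb : ∀ x, |truncV V m x| ≤ m + 2 := fun x => abs_truncV_le (by linarith [hV1 x]) hm0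
  have hS : MeasurableSet {y | m < V y} := measurableSet_lt measurable_const hVm
  have hc := measurable_cutMap (m := m) hVm
  have hVc : ∀ y, V (cutMap V m y) ≤ m := fun y => by
    rcases le_or_gt (V y) m with h | h
    · rwa [cutMap_of_le h]
    · rwa [cutMap_of_lt h]
  have hi1 : Integrable (fun y => V (cutMap V m y)) (stepMeasure a h β μ) :=
    Integrable.of_bound (hVm.comp hc).aestronglyMeasurable m (Eventually.of_forall fun y => by
      rw [Real.norm_of_nonneg (by linarith [hV1 (cutMap V m y)])]; exact hVc y)
  have hi2 : Integrable ({y | m < V y}.indicator fun _ => m - V 0) (stepMeasure a h β μ) :=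
    (integrable_const _).indicator hS
  have hi3 : Integrable (truncV V m) (stepMeasure a h β μ) :=
    Integrable.of_bound hTm.aestronglyMeasurable (m + 2) (Eventually.of_forall hTb)
  have step1 : (∫ x, V x ∂((stepMeasure a h β μ).map (cutMap V m))) +
      (m - V 0) * (stepMeasure a h β μ).real {y | m < V y} ≤
      ∫ y, truncV V m y ∂(stepMeasure a h β μ) := by
    have e : (m - V 0) * (stepMeasure a h β μ).real {y | m < V y} =
        ∫ y, {y | m < V y}.indicator (fun _ => m - V 0) y ∂(stepMeasure a h β μ) := by
      rw [integral_indicator_const _ hS, smul_eq_mul, mul_comm]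
    rw [integral_map hc.aemeasurable hVm.aestronglyMeasurable, e, ← integral_add hi1 hi2]
    refine integral_mono (hi1.add hi2) hi3 fun y => ?_
    rcases le_or_gt (V y) m with h | h
    · simp only
      rw [cutMap_of_le h, indicator_of_notMem (by simpa using h), truncV_of_le (by linarith),
        add_zero]
    · simp only
      rw [cutMap_of_lt h, indicator_of_mem (by exact h)]
      linarith [le_truncV h.le]
  have step2 : ∀ᵐ x ∂μ, (∫ w, truncV V m (x + (h • β x + √h • w)) * gauss (a x) w) ≤
      V x + h * (N + ε) := by
    filter_upwards [hμ, hβκ] with x hx hxβ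
    have h1 := (abs_le.1 (hexp h hh hhκ (a x) (ha x) x (β x) hxβ)).2
    have hev := truncV_eventuallyEq hV.continuous hx
    have e1 : fderiv ℝ (truncV V m) x = fderiv ℝ V x := hev.fderiv_eq
    have e2 : ∀ i j, hess2 (truncV V m) x i j = hess2 V x i j := fun i j => by
      rw [hess2, hess2, (Filter.EventuallyEq.iteratedFDeriv ℝ hev 2).eq_of_nhds]
    simp only [e1, e2, truncV_of_le (show V x ≤ m + 1 by linarith)] at h1
    have h2 := mul_le_mul_of_nonneg_left (hN x) hh.le
    linarith
  have hVi : Integrable V μ := Integrable.of_bound hVm.aestronglyMeasurable m (by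
    filter_upwards [hμ] with y hy
    rw [Real.norm_of_nonneg (by linarith [hV1 y])]; exact hy)
  refine step1.trans ?_
  rw [integral_stepMeasure ha hac hβ hTm hTb]
  refine (integral_mono_ae (integrable_stepMeasure_inner ha hac hβ hTm hTb)
    (hVi.add (integrable_const _)) step2).trans ?_
  simp only [Pi.add_apply]
  rw [integral_add hVi (integrable_const _)]
  simp

/-! ### The discrete scheme -/

/-- The laws `μ k` produced by the scheme with step `h` and cut-off level `m`; `r k` is the mass
moved by the cut-off in step `k`. -/
structure IsScheme (a : Ed d → Ed d →L[ℝ] Ed d) (V : Ed d → ℝ) (b : Ed d → Measure (Ed d) → Ed d)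
    (N₁ : ℝ → ℝ) (h m : ℝ) (μ : ℕ → Measure (Ed d)) (r : ℕ → ℝ) : Prop where
  prob : ∀ k, IsProbabilityMeasure (μ k)
  ae_le : ∀ k, ∀ᵐ x ∂(μ k), V x ≤ m
  nonneg : ∀ k, 0 ≤ r k
  drift : ∀ k, ∀ᵐ x ∂(μ k), h * ‖b x (μ k)‖ ^ 2 ≤ 1 / m
  step : ∀ k (f : Ed d → ℝ), Measurable f → ∀ C, (∀ x, |f x| ≤ C) →
    |(∫ x, f x ∂(μ (k + 1))) -
      ∫ x, (∫ w, f (x + (h • b x (μ k) + √h • w)) * gauss (a x) w) ∂(μ k)| ≤ 2 * C * r k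
  lyapunov : ∀ k α, 0 < α → (∫ x, V x ∂(μ k)) ≤ α →
    (∫ x, V x ∂(μ (k + 1))) + (m - V 0) * r k ≤ (∫ x, V x ∂(μ k)) + h * (N₁ α + 1 / m)

/-- The sequence of laws of the scheme. -/
def schemeSeq (a : Ed d → Ed d →L[ℝ] Ed d) (V : Ed d → ℝ) (b : Ed d → Measure (Ed d) → Ed d)
    (h m : ℝ) (ν : Measure (Ed d)) : ℕ → Measure (Ed d)
  | 0 => ν.map (cutMap V m)
  | k + 1 => (stepMeasure a h (fun x => b x (schemeSeq a V b h m ν k))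
      (schemeSeq a V b h m ν k)).map (cutMap V m)

lemma memPV_of_ae_le {V : Ed d → ℝ} (hV : Measurable V) (hV1 : ∀ x, 1 ≤ V x) {m : ℝ}
    {μ : Measure (Ed d)} (hμ : IsProbabilityMeasure μ) (h : ∀ᵐ x ∂μ, V x ≤ m) :
    memPV V μ ∧ (∫ x, V x ∂μ) ≤ m := by
  have hi : Integrable V μ := Integrable.of_bound hV.aestronglyMeasurable m (by
    filter_upwards [h] with y hy
    rw [Real.norm_of_nonneg (by linarith [hV1 y])]; exact hy)
  refine ⟨⟨hμ, hi⟩, ?_⟩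
  have := integral_mono_ae hi (integrable_const m) h
  simpa using this

section Scheme

variable {Λ K : ℝ} {a : Ed d → Ed d →L[ℝ] Ed d} {V : Ed d → ℝ} {b : Ed d → Measure (Ed d) → Ed d}
  {N₁ : ℝ → ℝ}

lemma exists_isScheme (ha : ∀ x, IsElliptic Λ (a x)) (hac : Continuous a) (hV : ContDiff ℝ 2 V)
    (hV1 : ∀ x, 1 ≤ V x) (hVinf : Tendsto V (cocompact (Ed d)) atTop)
    (hb : ∀ μ, Measurable fun x => b x μ)
    (hLyap : ∀ α : ℝ, 0 < α → ∀ μ : Measure (Ed d), memPV V μ → (∫ x, V x ∂μ) ≤ α →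
      ∀ x, fderiv ℝ V x (b x μ) + ∑ i, ∑ j,
        ⟪a x (EuclideanSpace.single i 1), EuclideanSpace.single j 1⟫ * hess2 V x i j ≤ N₁ α)
    {m B : ℝ} (hm : V 0 ≤ m)
    (hB : ∀ μ : Measure (Ed d), memPV V μ → (∫ x, V x ∂μ) ≤ m → ∀ x, V x ≤ m → ‖b x μ‖ ≤ B)
    {ν : Measure (Ed d)} (hν : memPV V ν) :
    ∃ n : ℕ, (1 / 2 : ℝ) ^ n ≤ 1 / m ∧ ∃ (μ : ℕ → Measure (Ed d)) (r : ℕ → ℝ),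
      IsScheme a V b N₁ ((1 / 2) ^ n) m μ r ∧ (∫ x, V x ∂(μ 0)) ≤ ∫ x, V x ∂ν ∧
      ∀ f : Ed d → ℝ, Measurable f → ∀ C, (∀ x, |f x| ≤ C) →
        |(∫ x, f x ∂(μ 0)) - ∫ x, f x ∂ν| ≤ 2 * C * ν.real {y | m < V y} := by
  have hνp := hν.1
  have hVm : Measurable V := hV.continuous.measurable
  have hm0 : 0 < m := lt_of_lt_of_le (by linarith [hV1 0]) hm
  obtain ⟨κ, hκ, hκ1, hstep⟩ := exists_lyapunov_step ha hac hV hV1 hVinf hm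
    (one_div_pos.2 hm0)
  obtain ⟨n, hn⟩ := exists_pow_lt_of_lt_one
    (show 0 < min κ (1 / m) / (1 + B ^ 2) by positivity) (show (1 / 2 : ℝ) < 1 by norm_num)
  set h : ℝ := (1 / 2) ^ n with hh
  have hpos : 0 < h := by positivity
  rw [lt_div_iff₀ (by positivity)] at hn
  have hhB : h * B ^ 2 ≤ min κ (1 / m) := by nlinarith
  have hhm : h ≤ min κ (1 / m) := by nlinarith [mul_nonneg hpos.le (sq_nonneg B)]
  set μ := schemeSeq a V b h m ν with hμdef
  have hprob : ∀ k, IsProbabilityMeasure (μ k) := by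
    intro k
    induction k with
    | zero => exact Measure.isProbabilityMeasure_map (measurable_cutMap hVm).aemeasurable
    | succ k ih =>
      have := isProbabilityMeasure_stepMeasure (h := h) (μ := μ k) ha hac (hb (μ k))
      exact Measure.isProbabilityMeasure_map (measurable_cutMap hVm).aemeasurable
  have hle : ∀ k, ∀ᵐ x ∂(μ k), V x ≤ m := by
    intro k
    cases k with
    | zero => exact ae_map_cutMap_le hVm hm
    | succ k => exact ae_map_cutMap_le hVm hm
  have hmem : ∀ k, memPV V (μ k) ∧ (∫ x, V x ∂(μ k)) ≤ m := fun k =>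
    memPV_of_ae_le hVm hV1 (hprob k) (hle k)
  have hdr : ∀ k, ∀ᵐ x ∂(μ k), h * ‖b x (μ k)‖ ^ 2 ≤ min κ (1 / m) := fun k => by
    filter_upwards [hle k] with x hx
    refine le_trans ?_ hhB
    gcongr
    exact hB _ (hmem k).1 (hmem k).2 x hx
  refine ⟨n, hhm.trans (min_le_right _ _), μ,
    fun k => (stepMeasure a h (fun x => b x (μ k)) (μ k)).real {y | m < V y}, ⟨hprob, hle,
      fun k => measureReal_nonneg, fun k => ?_, fun k f hf C hC => ?_, fun k α hα hαV => ?_⟩, ?_,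
      fun f hf C hC => ?_⟩
  · filter_upwards [hdr k] with x hx using hx.trans (min_le_right _ _)
  · have := isProbabilityMeasure_stepMeasure (h := h) (μ := μ k) ha hac (hb (μ k))
    rw [← integral_stepMeasure ha hac (hb (μ k)) hf hC]
    exact abs_integral_map_cutMap_sub_le hVm hf hC
  · exact hstep h hpos (hhm.trans (min_le_left _ _)) (μ k) (hprob k) (hle k) _ (hb (μ k))
      ((hdr k).mono fun x hx => hx.trans (min_le_left _ _)) (N₁ α)
      (hLyap α hα (μ k) (hmem k).1 hαV)
  · change ∫ x, V x ∂(ν.map (cutMap V m)) ≤ _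
    rw [integral_map (measurable_cutMap hVm).aemeasurable hVm.aestronglyMeasurable]
    refine integral_mono_of_nonneg (Eventually.of_forall fun y => ?_) hν.2
      (Eventually.of_forall fun y => ?_)
    · simp only [Pi.zero_apply]; linarith [hV1 (cutMap V m y)]
    · simp only
      rcases le_or_gt (V y) m with h | h
      · rw [cutMap_of_le h]
      · rw [cutMap_of_lt h]; linarith
  · exact abs_integral_map_cutMap_sub_le hVm hf hC

lemma one_div_sqrt_succ_le (i : ℕ) : 1 / √((i : ℝ) + 1) ≤ 2 * (√((i : ℝ) + 1) - √(i : ℝ)) := by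
  have h1 : 0 < √((i : ℝ) + 1) := Real.sqrt_pos.2 (by positivity)
  have h0 := Real.sqrt_nonneg (i : ℝ)
  have h2 : √(i : ℝ) ≤ √((i : ℝ) + 1) := Real.sqrt_le_sqrt (by linarith)
  have h3 : √((i : ℝ) + 1) ^ 2 = (i : ℝ) + 1 := Real.sq_sqrt (by positivity)
  have h4 : √(i : ℝ) ^ 2 = (i : ℝ) := Real.sq_sqrt (by positivity)
  rw [div_le_iff₀ h1]
  nlinarith

/-- Comparison of the scheme with the smoothing flow. -/
lemma exists_scheme_flow_bound (ha : ∀ x, IsElliptic Λ (a x))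
    (haL : ∀ x y, ‖a x - a y‖ ≤ K * ‖x - y‖) (hK : 0 ≤ K)
    (hb : ∀ μ, Measurable fun x => b x μ) :
    ∃ C : ℝ, 0 < C ∧ ∀ (h m : ℝ) (μ : ℕ → Measure (Ed d)) (r : ℕ → ℝ), 0 < h → 1 ≤ m →
      IsScheme a V b N₁ h m μ r → ∀ (k N : ℕ) (D : ℝ),
      (∀ l < N, Integrable (fun x => ‖b x (μ (k + l))‖) (μ (k + l)) ∧
        (∫ x, ‖b x (μ (k + l))‖ ∂(μ (k + l))) ≤ D) →
      ∀ f : Ed d → ℝ, Measurable f → (∀ x, |f x| ≤ 1) →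
        |(∫ x, f x ∂(μ (k + N))) - ∫ x, flowOp a (N * h) f x ∂(μ k)| ≤
          C * ((1 + D) * √(N * h) + ∑ l ∈ Finset.range N, r (k + l)) := by
  have hac := continuous_of_norm_sub_le haL
  obtain ⟨C₁, hC₁, hstep⟩ := exists_flowOp_step_bound ha haL hK
  obtain ⟨C₂, hC₂, hsm⟩ := exists_smoothOp_bounds ha hac
  refine ⟨2 * C₁ + 2 * (C₂ + 1), by positivity, fun h m μ r hh hm hS k N D hD f hf hf1 => ?_⟩
  have hflow : ∀ i : ℕ, ∀ x, |flowOp a (i * h) f x| ≤ C₂ + 1 := by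
    intro i x
    rcases (by positivity : (0 : ℝ) ≤ i * h).eq_or_lt with h0 | h0
    · rw [← h0, flowOp_zero]; linarith [hf1 x]
    · rw [flowOp_of_pos h0]; linarith [(hsm f hf hf1 x).1 _ h0]
  have hflm : ∀ i : ℕ, Measurable (flowOp a (i * h) f) := fun i =>
    measurable_flowOp ha hac (by positivity) hf
  have one : ∀ l < N, ∀ i : ℕ, |(∫ x, flowOp a (i * h) f x ∂(μ (k + (l + 1)))) -
      ∫ x, flowOp a ((i + 1 : ℕ) * h) f x ∂(μ (k + l))| ≤
      2 * C₁ * (1 + D) * √h * (√((i : ℝ) + 1) - √(i : ℝ)) + 2 * (C₂ + 1) * r (k + l) := by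
    intro l hl i
    have hp := hS.prob (k + l)
    obtain ⟨hbi, hbD⟩ := hD l hl
    have h1 := hS.step (k + l) _ (hflm i) (C₂ + 1) (hflow i)
    have hi1 := integrable_stepMeasure_inner (h := h) (μ := μ (k + l)) ha hac (hb (μ (k + l)))
      (hflm i) (hflow i)
    have hi2 : Integrable (flowOp a ((i + 1 : ℕ) * h) f) (μ (k + l)) :=
      Integrable.of_bound (hflm _).aestronglyMeasurable _ (Eventually.of_forall (hflow (i + 1)))
    have e : h / √((i : ℝ) * h + h) = √h * (1 / √((i : ℝ) + 1)) := by
      rw [show (i : ℝ) * h + h = (i + 1) * h by ring, Real.sqrt_mul (by positivity)]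
      have := Real.sqrt_pos.2 hh
      have h3 : 0 < √((i : ℝ) + 1) := Real.sqrt_pos.2 (by positivity)
      field_simp
      rw [Real.sq_sqrt hh.le]
    have h2 : |(∫ x, (∫ w, flowOp a (i * h) f (x + (h • b x (μ (k + l)) + √h • w)) *
        gauss (a x) w) ∂(μ (k + l))) - ∫ x, flowOp a ((i + 1 : ℕ) * h) f x ∂(μ (k + l))| ≤
        C₁ * (h / √((i : ℝ) * h + h)) * (1 + D) := by
      rw [← integral_sub hi1 hi2, ← Real.norm_eq_abs]
      have hbnd : Integrable (fun x => C₁ * (h / √((i : ℝ) * h + h)) *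
          (1 + ‖b x (μ (k + l))‖)) (μ (k + l)) :=
        ((integrable_const _).add hbi).const_mul _
      refine (norm_integral_le_of_norm_le hbnd ?_).trans ?_
      · filter_upwards [hS.drift (k + l)] with x hx
        have := hstep f hf hf1 (i * h) h (by positivity) hh x (b x (μ (k + l)))
          (hx.trans (by rw [div_le_one (by linarith)]; exact hm))
        rw [Real.norm_eq_abs]
        convert this using 4
        push_cast
        ring
      · rw [integral_const_mul, integral_add (integrable_const _) hbi]
        simp only [integral_const, probReal_univ, smul_eq_mul, one_mul]
        gcongr
    have hD0 : 0 ≤ D := le_trans (integral_nonneg fun x => norm_nonneg _) hbD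
    rw [← add_assoc]
    refine (abs_sub_le _ _ _).trans ((add_le_add h1 h2).trans ?_)
    rw [e, add_comm]
    refine add_le_add ?_ le_rfl
    calc C₁ * (√h * (1 / √((i : ℝ) + 1))) * (1 + D)
        ≤ C₁ * (√h * (2 * (√((i : ℝ) + 1) - √(i : ℝ)))) * (1 + D) := by
          gcongr
          exact one_div_sqrt_succ_le i
      _ = _ := by ring
  have ind : ∀ M ≤ N, ∀ i : ℕ, |(∫ x, flowOp a (i * h) f x ∂(μ (k + M))) -
      ∫ x, flowOp a ((i + M : ℕ) * h) f x ∂(μ k)| ≤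
      2 * C₁ * (1 + D) * √h * (√((i + M : ℕ) : ℝ) - √(i : ℝ)) +
        2 * (C₂ + 1) * ∑ l ∈ Finset.range M, r (k + l) := by
    intro M
    induction M with
    | zero => intro _ i; simp
    | succ M ih =>
      intro hM i
      have h1 := one M hM i
      have h2 := ih (by omega) (i + 1)
      rw [show i + (M + 1) = i + 1 + M by omega, Finset.sum_range_succ]
      refine (abs_sub_le _ _ _).trans ((add_le_add h1 h2).trans (le_of_eq ?_))
      push_cast
      ring
  have h1 := ind N le_rfl 0
  simp only [Nat.cast_zero, zero_mul, flowOp_zero, zero_add, Real.sqrt_zero, sub_zero] at h1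
  refine h1.trans ?_
  have hs : √((N : ℝ) * h) = √h * √(N : ℝ) := by
    rw [mul_comm, Real.sqrt_mul hh.le]
  have hD0 : 0 ≤ (1 + D) * (√h * √(N : ℝ)) := by
    rcases Nat.eq_zero_or_pos N with rfl | hN
    · simp
    · have : 0 ≤ D := le_trans (integral_nonneg fun x => norm_nonneg _) (hD 0 hN).2
      positivity
  have hr0 : 0 ≤ ∑ l ∈ Finset.range N, r (k + l) := Finset.sum_nonneg fun l _ => hS.nonneg _
  rw [hs]
  nlinarith [mul_nonneg hC₁.le hr0, mul_nonneg hC₂.le hD0]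

end Scheme

/-! ### A discrete Osgood estimate -/

lemma exists_lt_intervalIntegral_of_lintegral_eq_top {N : ℝ → ℝ} (hc : ContinuousOn N (Ici 0))
    (hpos : ∀ α ∈ Ici (0 : ℝ), 0 < N α)
    (hO : ∫⁻ α in Ioi (0 : ℝ), ENNReal.ofReal (1 / N α) = ⊤) (I c : ℝ) :
    ∃ M : ℝ, c ≤ M ∧ 0 ≤ M ∧ I < ∫ α in (0 : ℝ)..M, 1 / N α := by
  by_contra! hcon
  have hcont : ContinuousOn (fun α => 1 / N α) (Ici 0) :=
    continuousOn_const.div hc fun α hα => (hpos α hα).ne'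
  have h1 : IntegrableOn (fun α => 1 / N α) (Ioi 0) := by
    refine integrableOn_Ioi_of_intervalIntegral_norm_bounded I 0 (l := atTop) (b := id)
      (fun M => ?_) tendsto_id ?_
    · exact ((hcont.mono Icc_subset_Ici_self).integrableOn_Icc).mono_set Ioc_subset_Icc_self
    · filter_upwards [eventually_ge_atTop c, eventually_ge_atTop 0] with M hM hM0
      refine le_trans (le_of_eq ?_) (hcon M hM hM0)
      refine intervalIntegral.integral_congr fun α hα => ?_
      rw [id, uIcc_of_le hM0] at hα
      exact Real.norm_of_nonneg (one_div_pos.2 (hpos α hα.1)).le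
  have h2 := h1.hasFiniteIntegral
  rw [hasFiniteIntegral_iff_ofReal] at h2
  · exact h2.ne hO
  · filter_upwards [ae_restrict_mem measurableSet_Ioi] with α hα
    exact (one_div_pos.2 (hpos α (mem_Ici.2 (le_of_lt hα)))).le

/-- Osgood's criterion for an explicit difference scheme: no blow-up before time `T`. -/
lemma exists_discrete_osgood_bound {N : ℝ → ℝ} (hc : ContinuousOn N (Ici 0))
    (hpos : ∀ α ∈ Ici (0 : ℝ), 0 < N α)
    (hO : ∫⁻ α in Ioi (0 : ℝ), ENNReal.ofReal (1 / N α) = ⊤) (c T : ℝ) :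
    ∃ M δ : ℝ, 0 < δ ∧ c ≤ M ∧ 0 < M ∧ ∀ h : ℝ, 0 < h → ∀ e : ℝ, e ≤ δ → ∀ u : ℕ → ℝ,
      (∀ k, 0 < u k) → u 0 ≤ c →
      (∀ k α, u k ≤ α → u (k + 1) ≤ u k + h * (N α + e)) →
      ∀ k : ℕ, k * h ≤ T → u k ≤ M := by
  have hcont : ContinuousOn (fun α => 1 / N α) (Ici 0) :=
    continuousOn_const.div hc fun α hα => (hpos α hα).ne'
  set F : ℝ → ℝ := fun x => ∫ α in (0 : ℝ)..x, 1 / N α with hF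
  obtain ⟨M, hcM, hM0, hM⟩ := exists_lt_intervalIntegral_of_lintegral_eq_top hc hpos hO
    (F c + 2 * T) (max c 1)
  have hcM' := (le_max_left c 1).trans hcM
  have hM1 := (le_max_right c 1).trans hcM
  obtain ⟨α₀, hα₀, hmin⟩ := isCompact_Icc.exists_isMinOn (nonempty_Icc.2 hM0)
    (hc.mono (Icc_subset_Ici_self : Icc 0 M ⊆ Ici 0))
  refine ⟨M, N α₀, hpos _ hα₀.1, hcM', by linarith, fun h hh e he u hu hu0 hstep => ?_⟩
  have hii : ∀ {x y : ℝ}, 0 ≤ x → 0 ≤ y → IntervalIntegrable (fun α => 1 / N α) volume x y :=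
    fun hx hy => (hcont.mono fun z hz => (le_min hx hy).trans hz.1).intervalIntegrable
  have hmono : ∀ {x y : ℝ}, 0 ≤ x → x ≤ y → F x ≤ F y := by
    intro x y hx hxy
    have h1 := intervalIntegral.integral_add_adjacent_intervals (hii le_rfl hx)
      (hii hx (hx.trans hxy))
    have h2 : 0 ≤ ∫ α in x..y, 1 / N α := intervalIntegral.integral_nonneg hxy fun α hα =>
      (one_div_pos.2 (hpos α (hx.trans hα.1))).le
    simp only [hF]
    linarith
  have hinc : ∀ {x y : ℝ}, 0 < x → 0 ≤ y → y ≤ M → (∀ α, x ≤ α → α ≤ y → y ≤ x + h * (N α + e)) →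
      F y ≤ F x + 2 * h := by
    intro x y hx hy hyM hxy
    rcases le_total y x with hle | hle
    · linarith [hmono hy hle]
    · rcases hle.eq_or_lt with rfl | hlt
      · linarith
      have h1 := intervalIntegral.integral_add_adjacent_intervals (hii le_rfl hx.le)
        (hii hx.le (hx.le.trans hle))
      have h2 : (∫ α in x..y, 1 / N α) ≤ ∫ α in x..y, 2 * h / (y - x) := by
        refine intervalIntegral.integral_mono_on hle (hii hx.le (hx.le.trans hle))
          (by simp) fun α hα => ?_
        have hNα := hpos α (hx.le.trans hα.1)
        rw [div_le_div_iff₀ hNα (by linarith), one_mul]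
        have h3 := hxy α hα.1 hα.2
        have h4 : N α₀ ≤ N α := hmin ⟨hx.le.trans hα.1, hα.2.trans hyM⟩
        nlinarith
      rw [intervalIntegral.integral_const, smul_eq_mul, mul_div_cancel₀ _ (by linarith)] at h2
      simp only [hF]
      linarith
  have main : ∀ k : ℕ, k * h ≤ T → u k ≤ M ∧ F (u k) ≤ F c + 2 * (k * h) := by
    intro k
    induction k with
    | zero => intro _; exact ⟨hu0.trans hcM', by simpa using hmono (hu 0).le hu0⟩
    | succ k ih =>
      intro hk
      push_cast at hk
      obtain ⟨h1, h2⟩ := ih (by linarith)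
      have hk' : u (k + 1) ≤ M := by
        by_contra! hcon
        have := hinc (hu k) hM0 le_rfl fun α hα _ => hcon.le.trans (hstep k α hα)
        simp only [hF] at this h2 hM
        linarith
      refine ⟨hk', ?_⟩
      have := hinc (hu k) (hu (k + 1)).le hk' fun α hα _ => hstep k α hα
      push_cast
      linarith
  exact fun k hk => (main k hk).1

/-! ### Total variation estimates -/

/-- `TVLe μ σ c`: the total variation norm of `μ - σ` is at most `c`. -/
def TVLe (μ σ : Measure (Ed d)) (c : ℝ) : Prop :=
  ∀ f : Ed d → ℝ, Measurable f → (∀ x, |f x| ≤ 1) → |(∫ x, f x ∂μ) - ∫ x, f x ∂σ| ≤ c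

/-- It is enough to test the total variation norm on continuous functions. -/
lemma tvLe_of_continuous {μ σ : Measure (Ed d)} [IsProbabilityMeasure μ] [IsProbabilityMeasure σ]
    {c : ℝ} (h : ∀ g : Ed d → ℝ, Continuous g → (∀ x, |g x| ≤ 1) →
      |(∫ x, g x ∂μ) - ∫ x, g x ∂σ| ≤ c) : TVLe μ σ c := by
  intro f hf hf1
  refine le_of_forall_pos_le_add fun δ hδ => ?_
  have hfi : Integrable f (μ + σ) :=
    Integrable.of_bound hf.aestronglyMeasurable 1 (Eventually.of_forall hf1)
  obtain ⟨g, hg, hgi⟩ := hfi.exists_boundedContinuous_integral_sub_le hδ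
  set G : Ed d → ℝ := fun x => max (-1) (min 1 (g x)) with hG
  have hGc : Continuous G := by fun_prop
  have hG1 : ∀ x, |G x| ≤ 1 := fun x =>
    abs_le.2 ⟨le_max_left _ _, max_le (by norm_num) (min_le_left _ _)⟩
  have hfG : ∀ x, |f x - G x| ≤ ‖f x - g x‖ := by
    intro x
    have h1 : f x = max (-1) (min 1 (f x)) := by
      rw [min_eq_right (abs_le.1 (hf1 x)).2, max_eq_right (abs_le.1 (hf1 x)).1]
    rw [hG, h1, ← h1, Real.norm_eq_abs]
    nth_rw 1 [h1]
    refine (abs_max_sub_max_le_max _ _ _ _).trans ?_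
    rw [sub_self, abs_zero, max_eq_right (abs_nonneg _)]
    refine (abs_min_sub_min_le_max _ _ _ _).trans ?_
    rw [sub_self, abs_zero, max_eq_right (abs_nonneg _)]
  have hi : ∀ (τ : Measure (Ed d)) [IsProbabilityMeasure τ] {u : Ed d → ℝ}, Measurable u →
      (∀ x, |u x| ≤ 1) → Integrable u τ := fun τ _ u hu hu1 =>
    Integrable.of_bound hu.aestronglyMeasurable 1 (Eventually.of_forall hu1)
  have hsub : Integrable (fun x => ‖f x - g x‖) (μ + σ) := (hfi.sub hgi).norm
  rw [integral_add_measure hsub.left_of_add_measure hsub.right_of_add_measure] at hg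
  have hμ : |(∫ x, f x ∂μ) - ∫ x, G x ∂μ| ≤ ∫ x, ‖f x - g x‖ ∂μ := by
    rw [← integral_sub (hi μ hf hf1) (hi μ hGc.measurable hG1), ← Real.norm_eq_abs]
    exact norm_integral_le_of_norm_le hsub.left_of_add_measure (Eventually.of_forall hfG)
  have hσ : |(∫ x, f x ∂σ) - ∫ x, G x ∂σ| ≤ ∫ x, ‖f x - g x‖ ∂σ := by
    rw [← integral_sub (hi σ hf hf1) (hi σ hGc.measurable hG1), ← Real.norm_eq_abs]
    exact norm_integral_le_of_norm_le hsub.right_of_add_measure (Eventually.of_forall hfG)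
  have h3 := h G hGc hG1
  rw [abs_le] at *
  constructor <;> linarith [hμ.1, hμ.2, hσ.1, hσ.2, h3.1, h3.2]

lemma TVLe.symm {μ σ : Measure (Ed d)} {c : ℝ} (h : TVLe μ σ c) : TVLe σ μ c :=
  fun f hf hf1 => by rw [abs_sub_comm]; exact h f hf hf1

lemma TVLe.trans {μ σ τ : Measure (Ed d)} {c c' : ℝ} (h : TVLe μ σ c) (h' : TVLe σ τ c') :
    TVLe μ τ (c + c') :=
  fun f hf hf1 => (abs_sub_le _ _ _).trans (add_le_add (h f hf hf1) (h' f hf hf1))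

lemma TVLe.mono {μ σ : Measure (Ed d)} {c c' : ℝ} (h : TVLe μ σ c) (hc : c ≤ c') : TVLe μ σ c' :=
  fun f hf hf1 => (h f hf hf1).trans hc

lemma TVLe.abs_integral_sub_le {μ σ : Measure (Ed d)} {c C : ℝ} (h : TVLe μ σ c) (hC : 0 < C)
    {f : Ed d → ℝ} (hf : Measurable f) (hfC : ∀ x, |f x| ≤ C) :
    |(∫ x, f x ∂μ) - ∫ x, f x ∂σ| ≤ C * c := by
  have h1 := h (fun x => C⁻¹ * f x) (hf.const_mul _) fun x => by
    rw [abs_mul, abs_of_pos (inv_pos.2 hC), inv_mul_le_iff₀ hC, mul_one]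
    exact hfC x
  rw [integral_const_mul, integral_const_mul, ← mul_sub, abs_mul, abs_of_pos (inv_pos.2 hC),
    inv_mul_le_iff₀ hC] at h1
  exact h1

/-- Scheffé's lemma along a countably generated filter. -/
lemma tendsto_integral_abs_sub_of_tendsto {α ι : Type*} [MeasurableSpace α] {κ : Measure α}
    {l : Filter ι} [l.IsCountablyGenerated] {u : ι → α → ℝ} {v : α → ℝ}
    (hu : ∀ i, Integrable (u i) κ) (hv : Integrable v κ) (hu0 : ∀ i x, 0 ≤ u i x)
    (hv0 : ∀ x, 0 ≤ v x) (hlim : ∀ x, Tendsto (fun i => u i x) l (𝓝 (v x)))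
    (hint : Tendsto (fun i => ∫ x, u i x ∂κ) l (𝓝 (∫ x, v x ∂κ))) :
    Tendsto (fun i => ∫ x, |u i x - v x| ∂κ) l (𝓝 0) := by
  have hmax : ∀ i, Integrable (fun x => max (v x - u i x) 0) κ := fun i => (hv.sub (hu i)).pos_part
  have h1 : Tendsto (fun i => ∫ x, max (v x - u i x) 0 ∂κ) l (𝓝 (∫ _, (0 : ℝ) ∂κ)) := by
    refine tendsto_integral_filter_of_dominated_convergence v
      (Eventually.of_forall fun i => (hmax i).aestronglyMeasurable)
      (Eventually.of_forall fun i => Eventually.of_forall fun x => ?_) hv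
      (Eventually.of_forall fun x => ?_)
    · rw [Real.norm_of_nonneg (le_max_right _ _)]
      exact max_le (by linarith [hu0 i x]) (hv0 x)
    · have := ((tendsto_const_nhds (x := v x)).sub (hlim x)).max (tendsto_const_nhds (x := (0 : ℝ)))
      simpa using this
  have e : ∀ i, ∫ x, |u i x - v x| ∂κ =
      (∫ x, u i x ∂κ) - (∫ x, v x ∂κ) + 2 * ∫ x, max (v x - u i x) 0 ∂κ := by
    intro i
    have hs : Integrable (fun x => u i x - v x) κ := (hu i).sub hv
    rw [← integral_const_mul, ← integral_sub (hu i) hv, ← integral_add hs ((hmax i).const_mul 2)]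
    congr 1
    ext x
    rcases le_total (u i x) (v x) with h | h
    · rw [max_eq_left (by linarith), abs_of_nonpos (by linarith)]; ring
    · rw [max_eq_right (by linarith), abs_of_nonneg (by linarith)]; ring
  simp_rw [e]
  have := (hint.sub_const (∫ x, v x ∂κ)).add (h1.const_mul 2)
  simpa using this

section Scheffe

variable {Λ : ℝ} {a : Ed d → Ed d →L[ℝ] Ed d}

lemma continuous_smoothOp_one (ha : ∀ x, IsElliptic Λ (a x)) (hac : Continuous a) {τ : ℝ}
    (hτ : 0 < τ) : Continuous (smoothOp a τ fun _ => 1) := by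
  obtain ⟨C, c, hC, hc, hG, -⟩ := exists_gauss_smul_bounds d (ha 0).pos
  have e : (smoothOp a τ fun _ => 1) = fun x => ∫ z, gauss (τ • a (x - z)) z := by
    ext x
    rw [smoothOp, ← integral_sub_left_eq_self (fun y => gauss (τ • a y) (x - y) * 1) volume x]
    simp only [sub_sub_cancel, mul_one]
  rw [e]
  have hc1 : ∀ x, Continuous fun z => gauss (τ • a (x - z)) z := fun x =>
    continuous_gauss_comp ((ha 0).smul hτ).pos (by fun_prop) (by fun_prop)
      fun z => (ha (x - z)).smul hτ
  have hc2 : ∀ z, Continuous fun x => gauss (τ • a (x - z)) z := fun z =>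
    continuous_gauss_comp ((ha 0).smul hτ).pos (by fun_prop) (by fun_prop)
      fun x => (ha (x - z)).smul hτ
  refine continuous_of_dominated (F := fun x z => gauss (τ • a (x - z)) z)
    (bound := fun z => C * gaussProfile c τ z)
    (fun x => (hc1 x).aestronglyMeasurable)
    (fun x => Eventually.of_forall fun z => ?_) ((integrable_gaussProfile hc hτ).const_mul C)
    (Eventually.of_forall hc2)
  rw [Real.norm_of_nonneg (gauss_nonneg _ _)]
  exact hG τ hτ (a (x - z)) (ha (x - z)) z

/-- The smoothing operators turn weak convergence into uniform convergence over the unit ball of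
bounded measurable functions. -/
lemma eventually_integral_smoothOp_sub_le (ha : ∀ x, IsElliptic Λ (a x)) (hac : Continuous a)
    {τ : ℝ} (hτ : 0 < τ) (μ : ProbabilityMeasure (Ed d)) {δ : ℝ} (hδ : 0 < δ) :
    ∀ᶠ σ : ProbabilityMeasure (Ed d) in 𝓝 μ, ∀ f : Ed d → ℝ, Measurable f → (∀ x, |f x| ≤ 1) →
      |(∫ x, smoothOp a τ f x ∂(σ : Measure (Ed d))) -
        ∫ x, smoothOp a τ f x ∂(μ : Measure (Ed d))| ≤ δ := by
  obtain ⟨C, c, hC, hc, hG, -⟩ := exists_gauss_smul_bounds d (ha 0).pos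
  obtain ⟨C', hC', hbd⟩ := exists_smoothOp_bounds ha hac
  set u : ProbabilityMeasure (Ed d) → Ed d → ℝ := fun σ y =>
    ∫ x, gauss (τ • a y) (x - y) ∂(σ : Measure (Ed d)) with hu
  have hrep : ∀ (σ : ProbabilityMeasure (Ed d)) {f : Ed d → ℝ}, Measurable f → (∀ x, |f x| ≤ 1) →
      ∫ x, smoothOp a τ f x ∂(σ : Measure (Ed d)) = ∫ y, u σ y * f y := by
    intro σ f hf hf1
    have := integral_mul_smoothOp ha hac hτ hf hf1 (κ := (σ : Measure (Ed d)))
      (integrable_const (1 : ℝ)) (p := id) measurable_id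
    simpa using this
  have hui : ∀ (σ : ProbabilityMeasure (Ed d)) {f : Ed d → ℝ}, Measurable f → (∀ x, |f x| ≤ 1) →
      Integrable fun y => u σ y * f y := by
    intro σ f hf hf1
    have := (integrable_prod_smoothOp ha hac hτ hf hf1 (κ := (σ : Measure (Ed d)))
      (integrable_const (1 : ℝ)) (p := id) measurable_id).integral_prod_right
    simpa [integral_mul_const] using this
  have hui1 : ∀ σ : ProbabilityMeasure (Ed d), Integrable (u σ) := fun σ => by
    simpa using hui σ (measurable_const (a := (1 : ℝ))) (by simp)
  have hlim : ∀ y, Tendsto (fun σ => u σ y) (𝓝 μ) (𝓝 (u μ y)) := by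
    intro y
    have hcont : Continuous fun x => gauss (τ • a y) (x - y) :=
      (continuous_gauss _).comp (by fun_prop)
    have hbdd : ∀ x, ‖gauss (τ • a y) (x - y)‖ ≤ C * (√τ ^ d)⁻¹ := fun x => by
      rw [Real.norm_of_nonneg (gauss_nonneg _ _)]
      refine (hG τ hτ _ (ha y) _).trans ?_
      rw [gaussProfile]
      have : exp (-(c * ‖(√τ)⁻¹ • (x - y)‖ ^ 2)) ≤ 1 := exp_le_one_iff.2 (by
        have : 0 ≤ c * ‖(√τ)⁻¹ • (x - y)‖ ^ 2 := by positivity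
        linarith)
      have h0 : 0 ≤ (√τ ^ d)⁻¹ := by have := Real.sqrt_nonneg τ; positivity
      gcongr
      exact mul_le_of_le_one_right h0 this
    exact (ProbabilityMeasure.tendsto_iff_forall_integral_tendsto.1 tendsto_id)
      (BoundedContinuousFunction.ofNormedAddCommGroup _ hcont _ hbdd)
  have hint : Tendsto (fun σ => ∫ y, u σ y) (𝓝 μ) (𝓝 (∫ y, u μ y)) := by
    have e : ∀ σ : ProbabilityMeasure (Ed d), ∫ y, u σ y =
        ∫ x, smoothOp a τ (fun _ => 1) x ∂(σ : Measure (Ed d)) := fun σ => by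
      rw [hrep σ measurable_const (by simp)]
      simp
    simp_rw [e]
    exact (ProbabilityMeasure.tendsto_iff_forall_integral_tendsto.1 tendsto_id)
      (BoundedContinuousFunction.ofNormedAddCommGroup _ (continuous_smoothOp_one ha hac hτ) C'
        fun x => (hbd _ measurable_const (by simp) x).1 τ hτ)
  have hu0 : ∀ σ y, 0 ≤ u σ y := fun σ y => integral_nonneg fun x => gauss_nonneg _ _
  have hfin := tendsto_integral_abs_sub_of_tendsto hui1 (hui1 μ) hu0 (hu0 μ) hlim hint
  filter_upwards [hfin.eventually_lt_const hδ] with σ hσ f hf hf1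
  rw [hrep σ hf hf1, hrep μ hf hf1, ← integral_sub (hui σ hf hf1) (hui μ hf hf1),
    ← Real.norm_eq_abs]
  refine (norm_integral_le_of_norm_le ((hui1 σ).sub (hui1 μ)).abs
    (Eventually.of_forall fun y => ?_)).trans hσ.le
  rw [← sub_mul, norm_mul, Real.norm_eq_abs, Real.norm_eq_abs]
  exact mul_le_of_le_one_right (abs_nonneg _) (hf1 y)

end Scheffe

/-! ### Uniform estimates for a family of schemes with vanishing mesh -/

/-- A family of schemes with dyadic meshes `(1 / 2) ^ n j` and cut-off levels `j + m₀`. -/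
structure IsSchemeFamily (a : Ed d → Ed d →L[ℝ] Ed d) (V : Ed d → ℝ)
    (b : Ed d → Measure (Ed d) → Ed d) (N₁ : ℝ → ℝ) (m₀ : ℕ) (c : ℝ) (n : ℕ → ℕ)
    (μ : ℕ → ℕ → Measure (Ed d)) (r : ℕ → ℕ → ℝ) : Prop where
  scheme : ∀ j, IsScheme a V b N₁ ((1 / 2) ^ n j) (j + m₀) (μ j) (r j)
  mesh : ∀ j, (1 / 2 : ℝ) ^ n j ≤ 1 / (j + m₀)
  init : ∀ j, (∫ x, V x ∂(μ j 0)) ≤ c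
  le_level : V 0 ≤ m₀
  one_le_level : 1 ≤ m₀

namespace IsSchemeFamily

variable {Λ K : ℝ} {a : Ed d → Ed d →L[ℝ] Ed d} {V : Ed d → ℝ} {b : Ed d → Measure (Ed d) → Ed d}
  {N₁ : ℝ → ℝ} {m₀ : ℕ} {c : ℝ} {n : ℕ → ℕ} {μ : ℕ → ℕ → Measure (Ed d)} {r : ℕ → ℕ → ℝ}

lemma tendsto_level (m₀ : ℕ) : Tendsto (fun j : ℕ => (j : ℝ) + m₀) atTop atTop :=
  tendsto_atTop_add_const_right _ _ tendsto_natCast_atTop_atTop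

lemma eventually_one_div_level_le (m₀ : ℕ) {δ : ℝ} (hδ : 0 < δ) :
    ∀ᶠ j : ℕ in atTop, 1 / ((j : ℝ) + m₀) ≤ δ := by
  have := (tendsto_inv_atTop_zero.comp (tendsto_level m₀)).eventually_le_const hδ
  simpa [one_div] using this

lemma one_le_level' (h : IsSchemeFamily a V b N₁ m₀ c n μ r) (j : ℕ) : (1 : ℝ) ≤ j + m₀ := by
  have : (1 : ℝ) ≤ m₀ := by exact_mod_cast h.one_le_level
  have : (0 : ℝ) ≤ j := by positivity
  linarith

lemma memPV (h : IsSchemeFamily a V b N₁ m₀ c n μ r) (hV : Measurable V) (hV1 : ∀ x, 1 ≤ V x)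
    (j k : ℕ) : memPV V (μ j k) :=
  (memPV_of_ae_le hV hV1 ((h.scheme j).prob k) ((h.scheme j).ae_le k)).1

lemma exists_moment_bound (h : IsSchemeFamily a V b N₁ m₀ c n μ r) (hV : Measurable V)
    (hV1 : ∀ x, 1 ≤ V x) (hc : ContinuousOn N₁ (Ici 0)) (hpos : ∀ α ∈ Ici (0 : ℝ), 0 < N₁ α)
    (hO : ∫⁻ α in Ioi (0 : ℝ), ENNReal.ofReal (1 / N₁ α) = ⊤) (T : ℝ) :
    ∃ M : ℝ, 0 < M ∧ ∀ᶠ j in atTop, ∀ k : ℕ, k * (1 / 2 : ℝ) ^ n j ≤ T →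
      (∫ x, V x ∂(μ j k)) ≤ M := by
  obtain ⟨M, δ, hδ, -, hM0, hM⟩ := exists_discrete_osgood_bound hc hpos hO c T
  refine ⟨M, hM0, ?_⟩
  filter_upwards [eventually_one_div_level_le m₀ hδ] with j hj
  have hVpos : ∀ k, 0 < ∫ x, V x ∂(μ j k) := fun k => by
    have hp := (h.scheme j).prob k
    have := integral_mono (integrable_const (1 : ℝ)) (h.memPV hV hV1 j k).2 hV1
    simp at this
    linarith
  refine hM _ (by positivity) _ hj (fun k => ∫ x, V x ∂(μ j k)) hVpos (h.init j)
    fun k α hα => ?_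
  have h1 := (h.scheme j).lyapunov k α ((hVpos k).trans_le hα) hα
  have h2 := (h.scheme j).nonneg k
  have h3 : 0 ≤ (j : ℝ) + m₀ - V 0 := by
    have := h.le_level
    have : (0 : ℝ) ≤ j := by positivity
    linarith
  have := mul_nonneg h3 h2
  linarith

lemma eventually_sum_le (h : IsSchemeFamily a V b N₁ m₀ c n μ r) (hV : Measurable V)
    (hV1 : ∀ x, 1 ≤ V x) (hc : ContinuousOn N₁ (Ici 0)) (hpos : ∀ α ∈ Ici (0 : ℝ), 0 < N₁ α)
    (hO : ∫⁻ α in Ioi (0 : ℝ), ENNReal.ofReal (1 / N₁ α) = ⊤) (T : ℝ) {δ : ℝ} (hδ : 0 < δ) :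
    ∀ᶠ j in atTop, ∀ N : ℕ, N * (1 / 2 : ℝ) ^ n j ≤ T →
      ∑ k ∈ Finset.range N, r j k ≤ δ := by
  obtain ⟨M, hM0, hM⟩ := h.exists_moment_bound hV hV1 hc hpos hO T
  have hlarge := (tendsto_level m₀).eventually_ge_atTop (V 0 + (M + |T| * (N₁ M + 1)) / δ)
  have hN1 := hpos M hM0.le
  filter_upwards [hM, hlarge] with j hj hjl N hN
  set η : ℝ := (1 / 2) ^ n j with hη
  have hη0 : 0 < η := by positivity
  have hV0 : ∀ k, 0 ≤ ∫ x, V x ∂(μ j k) := fun k => integral_nonneg fun x => by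
    simp only [Pi.zero_apply]; linarith [hV1 x]
  have key : ∀ N : ℕ, N * η ≤ T → ((j : ℝ) + m₀ - V 0) * ∑ k ∈ Finset.range N, r j k ≤
      M - (∫ x, V x ∂(μ j N)) + N * η * (N₁ M + 1) := by
    intro N
    induction N with
    | zero => intro hT; have := hj 0 hT; simp; linarith
    | succ N ih =>
      intro hT
      push_cast at hT
      have hT' : N * η ≤ T := by linarith
      have h1 := ih hT'
      have h2 := (h.scheme j).lyapunov N M hM0 (hj N hT')
      have h3 : 1 / ((j : ℝ) + m₀) ≤ 1 := by
        rw [div_le_one (by linarith [h.one_le_level' j])]; exact h.one_le_level' j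
      have h4 := mul_le_mul_of_nonneg_left h3 hη0.le
      rw [Finset.sum_range_succ]
      push_cast
      nlinarith
  have h1 := key N hN
  have h2 : (M + |T| * (N₁ M + 1)) / δ ≤ (j : ℝ) + m₀ - V 0 := by linarith
  have hQ : 0 < M + |T| * (N₁ M + 1) := by positivity
  have h3 : 0 < (j : ℝ) + m₀ - V 0 := lt_of_lt_of_le (by positivity) h2
  rw [div_le_iff₀ hδ] at h2
  have h4 : N * η * (N₁ M + 1) ≤ |T| * (N₁ M + 1) := by
    gcongr
    exact hN.trans (le_abs_self T)
  refine le_of_mul_le_mul_left ?_ h3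
  linarith [hV0 N]

lemma exists_flow_bound (h : IsSchemeFamily a V b N₁ m₀ c n μ r) (ha : ∀ x, IsElliptic Λ (a x))
    (haL : ∀ x y, ‖a x - a y‖ ≤ K * ‖x - y‖) (hK : 0 ≤ K)
    (hb : ∀ μ, Measurable fun x => b x μ) (hV : Measurable V)
    (hV1 : ∀ x, 1 ≤ V x) (hc : ContinuousOn N₁ (Ici 0)) (hpos : ∀ α ∈ Ici (0 : ℝ), 0 < N₁ α)
    (hO : ∫⁻ α in Ioi (0 : ℝ), ENNReal.ofReal (1 / N₁ α) = ⊤)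
    (hGrow : ∀ α : ℝ, 0 < α → ∃ B : ℝ, 0 < B ∧ ∀ μ : Measure (Ed d), _root_.memPV V μ →
      (∫ x, V x ∂μ) ≤ α → ∀ x, ‖b x μ‖ ≤ B * V x) (T : ℝ) :
    ∃ C : ℝ, 0 < C ∧ ∀ δ : ℝ, 0 < δ → ∀ᶠ j in atTop, ∀ k N : ℕ,
      ((k + N : ℕ) : ℝ) * (1 / 2 : ℝ) ^ n j ≤ T →
      ∀ f : Ed d → ℝ, Measurable f → (∀ x, |f x| ≤ 1) →
        |(∫ x, f x ∂(μ j (k + N))) - ∫ x, flowOp a (N * (1 / 2) ^ n j) f x ∂(μ j k)| ≤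
          C * √(N * (1 / 2) ^ n j) + δ := by
  obtain ⟨C, hC, hflow⟩ := exists_scheme_flow_bound (V := V) (N₁ := N₁) ha haL hK hb
  obtain ⟨M, hM0, hM⟩ := h.exists_moment_bound hV hV1 hc hpos hO T
  obtain ⟨B, hB0, hB⟩ := hGrow M hM0
  refine ⟨C * (1 + B * M), by positivity, fun δ hδ => ?_⟩
  filter_upwards [hM, h.eventually_sum_le hV hV1 hc hpos hO T (div_pos hδ hC)]
    with j hj hsum k N hkN f hf hf1
  set η : ℝ := (1 / 2) ^ n j with hη
  have hη0 : 0 < η := by positivity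
  have hD : ∀ l < N, Integrable (fun x => ‖b x (μ j (k + l))‖) (μ j (k + l)) ∧
      (∫ x, ‖b x (μ j (k + l))‖ ∂(μ j (k + l))) ≤ B * M := by
    intro l hl
    have hmem := h.memPV hV hV1 j (k + l)
    have hle : (∫ x, V x ∂(μ j (k + l))) ≤ M := hj _ (le_trans (by gcongr) hkN)
    have hbd : ∀ x, ‖b x (μ j (k + l))‖ ≤ B * V x := hB _ hmem hle
    have hi : Integrable (fun x => ‖b x (μ j (k + l))‖) (μ j (k + l)) :=
      (hmem.2.const_mul B).mono' (hb _).norm.aestronglyMeasurable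
        (Eventually.of_forall fun x => by rw [norm_norm]; exact hbd x)
    refine ⟨hi, (integral_mono hi (hmem.2.const_mul B) hbd).trans ?_⟩
    rw [integral_const_mul]
    gcongr
  have h1 := hflow η (j + m₀) (μ j) (r j) hη0 (h.one_le_level' j) (h.scheme j) k N (B * M) hD f hf
    hf1
  have h2 : ∑ l ∈ Finset.range N, r j (k + l) ≤ δ / C := by
    refine le_trans ?_ (hsum (k + N) hkN)
    rw [Finset.sum_range_add]
    have : 0 ≤ ∑ x ∈ Finset.range k, r j x := Finset.sum_nonneg fun l _ => (h.scheme j).nonneg l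
    linarith
  refine h1.trans ?_
  have h3 := mul_le_mul_of_nonneg_left h2 hC.le
  rw [mul_div_cancel₀ _ hC.ne'] at h3
  linarith

end IsSchemeFamily

/-! ### Compactness of approximating flows of measures -/

/-- A sequence of flows of probability measures with locally bounded moments which, over short time
intervals, is asymptotically close to the action of the frozen Gaussian kernels. -/
structure IsApprox (a : Ed d → Ed d →L[ℝ] Ed d) (V : Ed d → ℝ) (X : ℕ → ℝ → Measure (Ed d)) :
    Prop where
  prob : ∀ j t, IsProbabilityMeasure (X j t)
  moment : ∀ T : ℝ, ∃ M : ℝ, 0 < M ∧ ∀ᶠ j in atTop, ∀ t, 0 ≤ t → t ≤ T →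
    Integrable V (X j t) ∧ (∫ x, V x ∂(X j t)) ≤ M
  flow : ∀ T : ℝ, ∃ C : ℝ, 0 < C ∧ ∀ s t : ℝ, 0 ≤ s → s < t → t ≤ T → ∀ δ : ℝ, 0 < δ →
    ∀ᶠ j in atTop, ∀ f : Ed d → ℝ, Measurable f → (∀ x, |f x| ≤ 1) →
      |(∫ x, f x ∂(X j t)) - ∫ x, smoothOp a (t - s) f x ∂(X j s)| ≤ C * √(t - s) + δ

/-- A short time `ε` for which `C * √(2 * ε)` is small. -/
lemma exists_mul_sqrt_le {C δ t : ℝ} (hC : 0 < C) (hδ : 0 < δ) (ht : 0 < t) :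
    ∃ ε : ℝ, 0 < ε ∧ ε < t ∧ C * √(2 * ε) ≤ δ := by
  refine ⟨min (t / 2) ((δ / C) ^ 2 / 2), by positivity, (min_le_left _ _).trans_lt (by linarith), ?_⟩
  rw [← le_div_iff₀' hC]
  refine Real.sqrt_le_iff.2 ⟨by positivity, ?_⟩
  have := min_le_right (t / 2) ((δ / C) ^ 2 / 2)
  linarith

lemma measure_lt_le_of_integral_le {V : Ed d → ℝ} (hV1 : ∀ x, 1 ≤ V x)
    {μ : Measure (Ed d)} (hi : Integrable V μ) {M R : ℝ} (hR : 0 < R) (hM : (∫ x, V x ∂μ) ≤ M) :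
    μ {x | R ≤ V x} ≤ ENNReal.ofReal (M / R) := by
  have h1 := mul_meas_ge_le_integral_of_nonneg
    (Eventually.of_forall fun x => zero_le_one.trans (hV1 x)) hi R
  have hfin : μ {x | R ≤ V x} ≠ ⊤ := (hi.measure_ge_lt_top hR).ne
  rw [← ENNReal.ofReal_toReal hfin]
  refine ENNReal.ofReal_le_ofReal ?_
  rw [le_div_iff₀' hR]
  exact h1.trans hM

namespace IsApprox

variable {Λ : ℝ} {a : Ed d → Ed d →L[ℝ] Ed d} {V : Ed d → ℝ} {X : ℕ → ℝ → Measure (Ed d)}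

/-- The approximations as elements of the space of probability measures. -/
def toProb (h : IsApprox a V X) (j : ℕ) (t : ℝ) : ProbabilityMeasure (Ed d) := ⟨X j t, h.prob j t⟩

lemma exists_weak_limit (h : IsApprox a V X) (hV1 : ∀ x, 1 ≤ V x)
    (hVinf : Tendsto V (cocompact (Ed d)) atTop) (U : Ultrafilter ℕ) (hU : (U : Filter ℕ) ≤ atTop)
    {t : ℝ} (ht : 0 ≤ t) : ∃ μ : ProbabilityMeasure (Ed d),
      Tendsto (fun j => h.toProb j t) U (𝓝 μ) := by
  obtain ⟨M, hM0, hM⟩ := h.moment t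
  obtain ⟨J, hJ⟩ := eventually_atTop.1 hM
  set S : Set (ProbabilityMeasure (Ed d)) := (fun j => h.toProb j t) '' Ici J with hS
  have htight : IsTightMeasureSet {((μ : ProbabilityMeasure (Ed d)) : Measure (Ed d)) | μ ∈ S} := by
    rw [isTightMeasureSet_iff_exists_isCompact_measure_compl_le]
    intro ε hε
    obtain ⟨η, hη, hηε⟩ : ∃ η : ℝ, 0 < η ∧ ENNReal.ofReal η ≤ ε := by
      rcases eq_or_ne ε ⊤ with rfl | hne
      · exact ⟨1, one_pos, le_top⟩
      · exact ⟨ε.toReal, ENNReal.toReal_pos hε.ne' hne, (ENNReal.ofReal_toReal hne).le⟩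
    obtain ⟨Q, hQ, hQV⟩ := exists_isCompact_forall_lt hVinf (M / η)
    refine ⟨Q, hQ, ?_⟩
    rintro _ ⟨μ, ⟨j, hj, rfl⟩, rfl⟩
    refine (measure_mono (t := {x | M / η ≤ V x}) fun x hx => (hQV x hx).le).trans ?_
    obtain ⟨hi, hle⟩ := hJ j hj t ht le_rfl
    refine (measure_lt_le_of_integral_le hV1 hi (by positivity) hle).trans ?_
    rwa [div_div_cancel₀ hM0.ne']
  have hcomp := isCompact_closure_of_isTightMeasureSet htight
  have hmem : ∀ᶠ j in (U : Filter ℕ), h.toProb j t ∈ closure S := by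
    filter_upwards [hU (eventually_ge_atTop J)] with j hj
    exact subset_closure ⟨j, hj, rfl⟩
  obtain ⟨μ, -, hμ⟩ := hcomp.ultrafilter_le_nhds (U.map fun j => h.toProb j t)
    (le_principal_iff.2 hmem)
  exact ⟨μ, hμ⟩

lemma tendsto_integral_of_tendsto (h : IsApprox a V X) {l : Filter ℕ} {t : ℝ}
    {μ : ProbabilityMeasure (Ed d)} (hμ : Tendsto (fun j => h.toProb j t) l (𝓝 μ))
    {g : Ed d → ℝ} (hg : Continuous g) (hg1 : ∀ x, |g x| ≤ 1) :
    Tendsto (fun j => ∫ x, g x ∂(X j t)) l (𝓝 (∫ x, g x ∂(μ : Measure (Ed d)))) :=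
  ProbabilityMeasure.tendsto_iff_forall_integral_tendsto.1 hμ
    (BoundedContinuousFunction.ofNormedAddCommGroup g hg 1 hg1)

lemma eventually_tvLe_of_tendsto (h : IsApprox a V X) (ha : ∀ x, IsElliptic Λ (a x))
    (hac : Continuous a) {U : Ultrafilter ℕ} (hU : (U : Filter ℕ) ≤ atTop)
    {μ : ℝ → ProbabilityMeasure (Ed d)}
    (hμ : ∀ t, 0 ≤ t → Tendsto (fun j => h.toProb j t) U (𝓝 (μ t))) {t δ : ℝ} (ht : 0 < t)
    (hδ : 0 < δ) : ∀ᶠ j in (U : Filter ℕ), TVLe (X j t) (μ t) δ := by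
  obtain ⟨C, hC, hflow⟩ := h.flow t
  obtain ⟨ε, hε, hεt, hCε⟩ := exists_mul_sqrt_le hC (show 0 < δ / 8 by positivity) ht
  have hs : 0 ≤ t - ε := by linarith
  have h1 := hU (hflow (t - ε) t hs (by linarith) le_rfl (δ / 8) (by positivity))
  have h2 := (hμ (t - ε) hs).eventually
    (eventually_integral_smoothOp_sub_le ha hac hε (μ (t - ε)) (show 0 < δ / 8 by positivity))
  have hsq : √ε ≤ √(2 * ε) := Real.sqrt_le_sqrt (by linarith)
  have hclose : ∀ᶠ j in (U : Filter ℕ), ∀ f : Ed d → ℝ, Measurable f → (∀ x, |f x| ≤ 1) →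
      |(∫ x, f x ∂(X j t)) - ∫ x, smoothOp a ε f x ∂(μ (t - ε) : Measure (Ed d))| ≤ δ / 2 := by
    filter_upwards [h1, h2] with j hj1 hj2 f hf hf1
    have e1 := hj1 f hf hf1
    have e2 := hj2 f hf hf1
    rw [sub_sub_cancel] at e1
    refine (abs_sub_le _ _ _).trans ((add_le_add e1 e2).trans ?_)
    nlinarith
  have hlim : ∀ g : Ed d → ℝ, Continuous g → (∀ x, |g x| ≤ 1) →
      |(∫ x, g x ∂(μ t : Measure (Ed d))) -
        ∫ x, smoothOp a ε g x ∂(μ (t - ε) : Measure (Ed d))| ≤ δ / 2 := by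
    intro g hg hg1
    refine le_of_tendsto
      ((h.tendsto_integral_of_tendsto (hμ t ht.le) hg hg1).sub_const _).abs ?_
    filter_upwards [hclose] with j hj using hj g hg.measurable hg1
  filter_upwards [hclose] with j hj
  have := h.prob j t
  refine tvLe_of_continuous fun g hg hg1 => ?_
  have e1 := hj g hg.measurable hg1
  have e2 := hlim g hg hg1
  rw [abs_sub_comm] at e2
  exact (abs_sub_le _ _ _).trans ((add_le_add e1 e2).trans (by linarith))

lemma exists_forall_tvLe_right (h : IsApprox a V X) (ha : ∀ x, IsElliptic Λ (a x))
    (hac : Continuous a) {t δ : ℝ} (ht : 0 < t) (hδ : 0 < δ) :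
    ∃ η : ℝ, 0 < η ∧ ∀ q, t < q → q < t + η → ∀ᶠ j in atTop, TVLe (X j t) (X j q) δ := by
  obtain ⟨C, hC, hflow⟩ := h.flow (2 * t)
  obtain ⟨D, hD, hSm⟩ := exists_smoothOp_bounds ha hac
  obtain ⟨ε, hε, hεt, hCε⟩ := exists_mul_sqrt_le hC (show 0 < δ / 8 by positivity) ht
  refine ⟨min ε (ε * (δ / 8) / D), by positivity, fun q htq hq => ?_⟩
  have hq1 : q < t + ε := hq.trans_le (by gcongr; exact min_le_left _ _)
  have hq2 : q - t ≤ ε * (δ / 8) / D := by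
    have := hq.trans_le (add_le_add_right (min_le_right ε (ε * (δ / 8) / D)) t)
    linarith
  have hs : 0 ≤ t - ε := by linarith
  have h1 := hflow (t - ε) t hs (by linarith) (by linarith) (δ / 8) (by positivity)
  have h2 := hflow (t - ε) q hs (by linarith) (by linarith) (δ / 8) (by positivity)
  have hsq : √ε ≤ √(2 * ε) := Real.sqrt_le_sqrt (by linarith)
  have hsq' : √(q - (t - ε)) ≤ √(2 * ε) := Real.sqrt_le_sqrt (by linarith)
  filter_upwards [h1, h2] with j hj1 hj2 f hf hf1
  have hp := h.prob j (t - ε)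
  have e1 := hj1 f hf hf1
  have e2 := hj2 f hf hf1
  rw [sub_sub_cancel] at e1
  have hint : ∀ τ : ℝ, 0 < τ → Integrable (smoothOp a τ f) (X j (t - ε)) := fun τ hτ =>
    Integrable.of_bound (measurable_smoothOp ha hac hτ hf).aestronglyMeasurable D
      (Eventually.of_forall fun x => (hSm f hf hf1 x).1 τ hτ)
  have e3 : |(∫ x, smoothOp a (q - (t - ε)) f x ∂(X j (t - ε))) -
      ∫ x, smoothOp a ε f x ∂(X j (t - ε))| ≤ δ / 8 := by
    rw [← integral_sub (hint _ (by linarith)) (hint _ hε)]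
    have := norm_integral_le_of_norm_le_const (μ := X j (t - ε))
      (f := fun x => smoothOp a (q - (t - ε)) f x - smoothOp a ε f x) (C := δ / 8)
      (Eventually.of_forall fun x => by
        refine ((hSm f hf hf1 x).2 ε (q - (t - ε)) hε (by linarith) (by linarith)).trans ?_
        rw [show q - (t - ε) - ε = q - t by ring]
        calc D * ((q - t) / ε) ≤ D * ((ε * (δ / 8) / D) / ε) := by gcongr
          _ = δ / 8 := by field_simp)
    simpa using this
  rw [abs_le] at e1 e2 e3 ⊢
  constructor <;> nlinarith

/-- A subsequence converges in total variation at every positive time. -/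
theorem exists_subseq_tvLe (h : IsApprox a V X) (ha : ∀ x, IsElliptic Λ (a x))
    (hac : Continuous a) (hV1 : ∀ x, 1 ≤ V x) (hVinf : Tendsto V (cocompact (Ed d)) atTop) :
    ∃ (ψ : ℕ → ℕ) (μ : ℝ → Measure (Ed d)), Tendsto ψ atTop atTop ∧
      (∀ t, IsProbabilityMeasure (μ t)) ∧
      ∀ t, 0 < t → ∀ δ : ℝ, 0 < δ → ∀ᶠ i in atTop, TVLe (X (ψ i) t) (μ t) δ := by
  set U : Ultrafilter ℕ := hyperfilter ℕ with hUdef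
  have hU : (U : Filter ℕ) ≤ atTop := by
    rw [← Nat.cofinite_eq_atTop]; exact hyperfilter_le_cofinite
  have hex : ∀ t : ℝ, ∃ μ : ProbabilityMeasure (Ed d), 0 ≤ t →
      Tendsto (fun j => h.toProb j t) U (𝓝 μ) := fun t => by
    by_cases ht : 0 ≤ t
    · obtain ⟨μ, hμ⟩ := h.exists_weak_limit hV1 hVinf U hU ht
      exact ⟨μ, fun _ => hμ⟩
    · exact ⟨h.toProb 0 0, fun h0 => absurd h0 ht⟩
  choose μ hμ using hex
  have hTV := fun {t δ : ℝ} (ht : 0 < t) (hδ : 0 < δ) =>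
    h.eventually_tvLe_of_tendsto ha hac hU hμ ht hδ
  obtain ⟨e, he⟩ := exists_surjective_nat ℚ
  have hsub : ∀ i : ℕ, ∃ j, i ≤ j ∧ ∀ l ∈ Finset.range (i + 1), (0 : ℝ) < e l →
      TVLe (X j (e l)) (μ (e l)) (1 / (i + 1)) := by
    intro i
    have : ∀ᶠ j in (U : Filter ℕ), i ≤ j ∧ ∀ l ∈ Finset.range (i + 1), (0 : ℝ) < e l →
        TVLe (X j (e l)) (μ (e l)) (1 / (i + 1)) := by
      refine Eventually.and (hU (eventually_ge_atTop i)) ((Filter.eventually_all_finset _).2 fun l _ => ?_)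
      by_cases hl : (0 : ℝ) < e l
      · filter_upwards [hTV hl (show (0 : ℝ) < 1 / (i + 1) by positivity)] with j hj _ using hj
      · exact Eventually.of_forall fun j h0 => absurd h0 hl
    exact this.exists
  choose ψ hψ hψe using hsub
  have hψt : Tendsto ψ atTop atTop := tendsto_atTop_mono hψ tendsto_id
  refine ⟨ψ, fun t => μ t, hψt, fun t => inferInstance, fun t ht δ hδ => ?_⟩
  obtain ⟨η, hη, hright⟩ := h.exists_forall_tvLe_right ha hac ht (show 0 < δ / 5 by positivity)
  obtain ⟨q, hq1, hq2⟩ := exists_rat_btwn (show t < t + η by linarith)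
  have hq0 : (0 : ℝ) < q := ht.trans hq1
  have hclose := hright q hq1 hq2
  have hμq : TVLe (μ q : Measure (Ed d)) (μ t) (3 * (δ / 5)) := by
    obtain ⟨j, hj1, hj2, hj3⟩ := (Eventually.and (hU hclose)
      ((hTV ht (show 0 < δ / 5 by positivity)).and
      (hTV hq0 (show 0 < δ / 5 by positivity)))).exists
    exact ((hj3.symm.trans hj1.symm).trans hj2).mono (by linarith)
  obtain ⟨l, rfl⟩ := he q
  have hsmall : ∀ᶠ i : ℕ in atTop, 1 / ((i : ℝ) + 1) ≤ δ / 5 :=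
    tendsto_one_div_add_atTop_nhds_zero_nat.eventually_le_const (by positivity)
  filter_upwards [hψt.eventually hclose, hsmall, eventually_ge_atTop l] with i hi1 hi2 hi3
  exact ((hi1.trans (hψe i l (Finset.mem_range.2 (by omega)) hq0)).trans hμq).mono (by linarith)

end IsApprox

/-! ### From schemes to approximating flows; weighted distances -/

namespace IsSchemeFamily

variable {Λ K : ℝ} {a : Ed d → Ed d →L[ℝ] Ed d} {V : Ed d → ℝ} {b : Ed d → Measure (Ed d) → Ed d}
  {N₁ : ℝ → ℝ} {m₀ : ℕ} {c : ℝ} {n : ℕ → ℕ} {μ : ℕ → ℕ → Measure (Ed d)} {r : ℕ → ℕ → ℝ}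

lemma eventually_mesh_le (h : IsSchemeFamily a V b N₁ m₀ c n μ r) {δ : ℝ} (hδ : 0 < δ) :
    ∀ᶠ j in atTop, (1 / 2 : ℝ) ^ n j ≤ δ := by
  filter_upwards [eventually_one_div_level_le m₀ hδ] with j hj using (h.mesh j).trans hj

/-- Interpolated in time, a family of schemes is an approximating sequence of flows. -/
theorem isApprox (h : IsSchemeFamily a V b N₁ m₀ c n μ r) (ha : ∀ x, IsElliptic Λ (a x))
    (haL : ∀ x y, ‖a x - a y‖ ≤ K * ‖x - y‖) (hK : 0 ≤ K)
    (hb : ∀ μ, Measurable fun x => b x μ) (hV : Measurable V)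
    (hV1 : ∀ x, 1 ≤ V x) (hc : ContinuousOn N₁ (Ici 0)) (hpos : ∀ α ∈ Ici (0 : ℝ), 0 < N₁ α)
    (hO : ∫⁻ α in Ioi (0 : ℝ), ENNReal.ofReal (1 / N₁ α) = ⊤)
    (hGrow : ∀ α : ℝ, 0 < α → ∃ B : ℝ, 0 < B ∧ ∀ μ : Measure (Ed d), _root_.memPV V μ →
      (∫ x, V x ∂μ) ≤ α → ∀ x, ‖b x μ‖ ≤ B * V x) :
    IsApprox a V fun j t => μ j ⌊t / (1 / 2 : ℝ) ^ n j⌋₊ where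
  prob j t := (h.scheme j).prob _
  moment T := by
    obtain ⟨M, hM0, hM⟩ := h.exists_moment_bound hV hV1 hc hpos hO T
    refine ⟨M, hM0, ?_⟩
    filter_upwards [hM] with j hj t ht htT
    refine ⟨(h.memPV hV hV1 j _).2, hj _ (le_trans ?_ htT)⟩
    rw [← le_div_iff₀ (by positivity)]
    exact Nat.floor_le (by positivity)
  flow T := by
    have hac : Continuous a := continuous_of_norm_sub_le haL
    obtain ⟨C, hC, hflow⟩ := h.exists_flow_bound ha haL hK hb hV hV1 hc hpos hO hGrow T
    obtain ⟨D, hD, hSm⟩ := exists_smoothOp_bounds ha hac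
    refine ⟨C, hC, fun s t hs hst htT δ hδ => ?_⟩
    have hts : 0 < t - s := by linarith
    filter_upwards [hflow (δ / 4) (by positivity),
      h.eventually_mesh_le (show 0 < (t - s) / 4 by positivity),
      h.eventually_mesh_le (show 0 < (δ / 4 / C) ^ 2 by positivity),
      h.eventually_mesh_le (show 0 < (δ / 4) * ((t - s) / 2) / D by positivity)]
      with j hj hm1 hm2 hm3 f hf hf1
    set η : ℝ := (1 / 2) ^ n j with hη
    have hη0 : 0 < η := by positivity
    set k := ⌊s / η⌋₊ with hk
    have hkl : k ≤ ⌊t / η⌋₊ := Nat.floor_mono (by gcongr)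
    obtain ⟨N, hN⟩ := Nat.exists_eq_add_of_le hkl
    have hs1 : k * η ≤ s := by
      rw [← le_div_iff₀ hη0]; exact Nat.floor_le (by positivity)
    have hs2 : s < (k + 1) * η := by
      rw [← div_lt_iff₀ hη0]; exact Nat.lt_floor_add_one _
    have ht1 : ((k + N : ℕ) : ℝ) * η ≤ t := by
      rw [← le_div_iff₀ hη0, ← hN]; exact Nat.floor_le (div_nonneg (by linarith) hη0.le)
    have ht2 : t < ((k + N : ℕ) + 1) * η := by
      rw [← div_lt_iff₀ hη0, ← hN]; exact Nat.lt_floor_add_one _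
    have e1 := hj k N (ht1.trans htT) f hf hf1
    rw [hN]
    push_cast at ht1 ht2
    set τ : ℝ := N * η with hτ
    have hτ1 : τ ≤ t - s + η := by nlinarith
    have hτ2 : t - s - η ≤ τ := by nlinarith
    have hτ0 : 0 < τ := by linarith
    rw [flowOp_of_pos hτ0] at e1
    have hsq : C * √τ ≤ C * √(t - s) + δ / 4 := by
      have h1 : √τ ≤ √(t - s) + δ / 4 / C := by
        refine Real.sqrt_le_iff.2 ⟨by positivity, ?_⟩
        have := Real.sq_sqrt hts.le
        have : 0 ≤ √(t - s) * (δ / 4 / C) := by positivity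
        nlinarith
      calc C * √τ ≤ C * (√(t - s) + δ / 4 / C) := by gcongr
        _ = _ := by field_simp
    have hp := (h.scheme j).prob k
    have hint : ∀ τ : ℝ, 0 < τ → Integrable (smoothOp a τ f) (μ j k) := fun τ hτ =>
      Integrable.of_bound (measurable_smoothOp ha hac hτ hf).aestronglyMeasurable D
        (Eventually.of_forall fun x => (hSm f hf hf1 x).1 τ hτ)
    have hm3' : D * (η / ((t - s) / 2)) ≤ δ / 4 := by
      calc D * (η / ((t - s) / 2)) ≤ D * (((δ / 4) * ((t - s) / 2) / D) / ((t - s) / 2)) := by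
            gcongr
        _ = δ / 4 := by field_simp
    have e2 : |(∫ x, smoothOp a τ f x ∂(μ j k)) - ∫ x, smoothOp a (t - s) f x ∂(μ j k)| ≤ δ / 4 := by
      rw [← integral_sub (hint _ hτ0) (hint _ hts)]
      have := norm_integral_le_of_norm_le_const (μ := μ j k)
        (f := fun x => smoothOp a τ f x - smoothOp a (t - s) f x) (C := δ / 4)
        (Eventually.of_forall fun x => by
          refine le_trans ?_ hm3'
          rw [Real.norm_eq_abs]
          rcases le_total τ (t - s) with hle | hle
          · rw [abs_sub_comm]
            refine ((hSm f hf hf1 x).2 τ (t - s) hτ0 hle (by linarith)).trans ?_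
            gcongr <;> linarith
          · refine ((hSm f hf hf1 x).2 (t - s) τ hts hle (by linarith)).trans ?_
            gcongr <;> linarith)
      simpa using this
    refine (abs_sub_le _ _ _).trans ((add_le_add e1 e2).trans ?_)
    linarith

end IsSchemeFamily

lemma memPV_of_tvLe {V : Ed d → ℝ} (hV : Measurable V) (hV1 : ∀ x, 1 ≤ V x) {X : ℕ → Measure (Ed d)}
    {μ : Measure (Ed d)} [IsProbabilityMeasure μ] {M : ℝ}
    (hX : ∀ δ : ℝ, 0 < δ → ∀ᶠ i in atTop, TVLe (X i) μ δ)
    (hM : ∀ᶠ i in atTop, memPV V (X i) ∧ (∫ x, V x ∂(X i)) ≤ M) :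
    memPV V μ ∧ (∫ x, V x ∂μ) ≤ M := by
  have hV0 : ∀ x, 0 ≤ V x := fun x => zero_le_one.trans (hV1 x)
  have hbd : ∀ (R : ℕ) x, |min (V x) R| ≤ R + 1 := fun R x => by
    rw [abs_of_nonneg (le_min (hV0 x) (Nat.cast_nonneg R))]
    linarith [min_le_right (V x) (R : ℝ)]
  have hmeas : ∀ R : ℕ, Measurable fun x => min (V x) (R : ℝ) := fun R => hV.min measurable_const
  have htr : ∀ R : ℕ, (∫ x, min (V x) R ∂μ) ≤ M := by
    intro R
    refine le_of_forall_pos_le_add fun δ hδ => ?_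
    obtain ⟨i, hi, hmem, hle⟩ :=
      ((hX (δ / (R + 1)) (by positivity)).and hM).exists
    have h1 := hi.abs_integral_sub_le (show (0 : ℝ) < R + 1 by positivity) (hmeas R) (hbd R)
    rw [mul_div_cancel₀ _ (by positivity), abs_le] at h1
    have hp := hmem.1
    have h2 : (∫ x, min (V x) R ∂(X i)) ≤ ∫ x, V x ∂(X i) :=
      integral_mono (Integrable.of_bound (hmeas R).aestronglyMeasurable _
        (Eventually.of_forall (hbd R))) hmem.2 fun x => min_le_left _ _
    linarith [h1.1]
  have hM0 : 0 ≤ M := (integral_nonneg fun x => le_min (hV0 x) (Nat.cast_nonneg 0)).trans (htr 0)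
  have hl : ∫⁻ x, ENNReal.ofReal (V x) ∂μ ≤ ENNReal.ofReal M := by
    have hsup : ∀ x, ENNReal.ofReal (V x) = ⨆ R : ℕ, ENNReal.ofReal (min (V x) R) := fun x => by
      refine le_antisymm ?_ (iSup_le fun R => ENNReal.ofReal_le_ofReal (min_le_left _ _))
      obtain ⟨R, hR⟩ := exists_nat_ge (V x)
      exact le_iSup_of_le R (by rw [min_eq_left hR])
    simp_rw [hsup]
    rw [lintegral_iSup (fun R => (hmeas R).ennreal_ofReal) fun R S hRS x =>
      ENNReal.ofReal_le_ofReal (min_le_min le_rfl (by exact_mod_cast hRS))]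
    refine iSup_le fun R => ?_
    rw [← ofReal_integral_eq_lintegral_ofReal (Integrable.of_bound (hmeas R).aestronglyMeasurable _
      (Eventually.of_forall (hbd R)))
      (Eventually.of_forall fun x => le_min (hV0 x) (Nat.cast_nonneg R))]
    exact ENNReal.ofReal_le_ofReal (htr R)
  have hi : Integrable V μ := by
    refine ⟨hV.aestronglyMeasurable, ?_⟩
    rw [hasFiniteIntegral_iff_ofReal (Eventually.of_forall hV0)]
    exact hl.trans_lt ENNReal.ofReal_lt_top
  refine ⟨⟨inferInstance, hi⟩, ?_⟩
  rw [integral_eq_lintegral_of_nonneg_ae (Eventually.of_forall hV0) hV.aestronglyMeasurable]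
  exact ENNReal.toReal_le_of_le_ofReal hM0 hl

/-- A weighted distance with weight at most `√V` is controlled by total variation and moments. -/
lemma wDist_le_of_tvLe {V W : Ed d → ℝ} (hV : Measurable V) (hV1 : ∀ x, 1 ≤ V x)
    (hW0 : ∀ x, 0 ≤ W x) (hW : ∀ x, W x ≤ √(V x)) {μ σ : Measure (Ed d)} {M c R : ℝ}
    (hμ : memPV V μ) (hσ : memPV V σ) (hμM : (∫ x, V x ∂μ) ≤ M) (hσM : (∫ x, V x ∂σ) ≤ M)
    (hc : TVLe μ σ c) (hR : 0 < R) : wDist W μ σ ≤ √R * c + 2 * (M / √R) := by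
  have : Nonempty {f : Ed d → ℝ // Measurable f ∧ ∀ x, |f x| ≤ W x} :=
    ⟨⟨fun _ => 0, measurable_const, fun x => by simpa using hW0 x⟩⟩
  have hV0 : ∀ x, 0 ≤ V x := fun x => zero_le_one.trans (hV1 x)
  have hS : MeasurableSet {x | V x ≤ R} := measurableSet_le hV measurable_const
  have hsR : 0 < √R := Real.sqrt_pos.2 hR
  refine ciSup_le fun ⟨f, hf, hfW⟩ => ?_
  have hfV : ∀ x, |f x| ≤ √(V x) := fun x => (hfW x).trans (hW x)
  set g : Ed d → ℝ := {x | V x ≤ R}.indicator f with hg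
  have hgm : Measurable g := hf.indicator hS
  have hgR : ∀ x, |g x| ≤ √R := fun x => by
    by_cases hx : V x ≤ R
    · rw [hg, indicator_of_mem (by exact hx)]
      exact (hfV x).trans (Real.sqrt_le_sqrt hx)
    · rw [hg, indicator_of_notMem (by exact hx)]; simp
  have hrest : ∀ x, |f x - g x| ≤ V x / √R := fun x => by
    by_cases hx : V x ≤ R
    · rw [hg, indicator_of_mem (by exact hx), sub_self, abs_zero]
      exact div_nonneg (hV0 x) hsR.le
    · rw [hg, indicator_of_notMem (by exact hx), sub_zero, le_div_iff₀ hsR]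
      calc |f x| * √R ≤ √(V x) * √(V x) := by
            gcongr
            · exact hfV x
            · exact (not_le.1 hx).le
        _ = V x := Real.mul_self_sqrt (hV0 x)
  have key : ∀ ρ : Measure (Ed d), memPV V ρ → (∫ x, V x ∂ρ) ≤ M →
      |(∫ x, f x ∂ρ) - ∫ x, g x ∂ρ| ≤ M / √R := by
    intro ρ hρ hρM
    have hp := hρ.1
    have hgi : Integrable g ρ :=
      Integrable.of_bound hgm.aestronglyMeasurable _ (Eventually.of_forall hgR)
    have hdi : Integrable (fun x => f x - g x) ρ :=
      (hρ.2.div_const (√R)).mono' (hf.sub hgm).aestronglyMeasurable (Eventually.of_forall hrest)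
    have hfi : Integrable f ρ := (hdi.add hgi).congr (Eventually.of_forall fun x => by simp)
    rw [← integral_sub hfi hgi]
    refine (norm_integral_le_of_norm_le (f := fun x => f x - g x) (hρ.2.div_const (√R))
      (Eventually.of_forall hrest)).trans ?_
    rw [integral_div]
    gcongr
  have h1 := hc.abs_integral_sub_le hsR hgm hgR
  have h2 := key μ hμ hμM
  have h3 := key σ hσ hσM
  rw [abs_le] at h1 h2 h3
  simp only
  linarith [h1.2, h2.2, h3.1]

lemma eventually_wDist_le {V W : Ed d → ℝ} (hV : Measurable V) (hV1 : ∀ x, 1 ≤ V x)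
    (hW0 : ∀ x, 0 ≤ W x) (hW : ∀ x, W x ≤ √(V x)) {X : ℕ → Measure (Ed d)}
    {μ : Measure (Ed d)} {M : ℝ} (hX : ∀ δ : ℝ, 0 < δ → ∀ᶠ i in atTop, TVLe (X i) μ δ)
    (hM : ∀ᶠ i in atTop, memPV V (X i) ∧ (∫ x, V x ∂(X i)) ≤ M)
    (hμ : memPV V μ) (hμM : (∫ x, V x ∂μ) ≤ M) {δ : ℝ} (hδ : 0 < δ) :
    ∀ᶠ i in atTop, wDist W (X i) μ ≤ δ := by
  have hM0 : 0 ≤ M := (integral_nonneg fun x => zero_le_one.trans (hV1 x)).trans hμM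
  set ρ : ℝ := 4 * (M + 1) / δ with hρ
  have hρ0 : 0 < ρ := by positivity
  filter_upwards [hX (δ / 2 / ρ) (by positivity), hM] with i hi hiM
  refine (wDist_le_of_tvLe hV hV1 hW0 hW hiM.1 hμ hiM.2 hμM hi (pow_pos hρ0 2)).trans ?_
  rw [Real.sqrt_sq hρ0.le, mul_div_cancel₀ _ hρ0.ne']
  have : M / ρ ≤ δ / 4 := by
    rw [div_le_iff₀ hρ0, hρ]
    field_simp
    linarith
  linarith

/-! ### The generator on test functions -/

/-- The second-order operator with diffusion `a` and drift `β`. -/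
def genOp (a : Ed d → Ed d →L[ℝ] Ed d) (β : Ed d → Ed d) (φ : Ed d → ℝ) (x : Ed d) : ℝ :=
  fderiv ℝ φ x (β x) + ∑ i, ∑ j,
    ⟪a x (EuclideanSpace.single i 1), EuclideanSpace.single j 1⟫ * hess2 φ x i j

section Generator

variable {a : Ed d → Ed d →L[ℝ] Ed d} {V W φ : Ed d → ℝ} {b : Ed d → Measure (Ed d) → Ed d}

lemma continuous_hess2 (hφ : ContDiff ℝ 2 φ) (i j : Fin d) : Continuous fun x => hess2 φ x i j := by
  have h := hφ.continuous_iteratedFDeriv (m := 2) le_rfl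
  exact (ContinuousMultilinearMap.apply ℝ (fun _ : Fin 2 => Ed d) ℝ
    ![EuclideanSpace.single i 1, EuclideanSpace.single j 1]).continuous.comp h

lemma hasCompactSupport_hess2 (hφ : HasCompactSupport φ) (i j : Fin d) :
    HasCompactSupport fun x => hess2 φ x i j :=
  (hφ.iteratedFDeriv (𝕜 := ℝ) 2).comp_left
    (g := fun q : ContinuousMultilinearMap ℝ (fun _ : Fin 2 => Ed d) ℝ =>
      q ![EuclideanSpace.single i 1, EuclideanSpace.single j 1]) rfl

lemma measurable_genOp (hac : Continuous a) {β : Ed d → Ed d} (hβ : Measurable β)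
    (hφ : ContDiff ℝ 2 φ) : Measurable (genOp a β φ) := by
  have h1 : Measurable fun x => fderiv ℝ φ x (β x) := by
    have hc : Continuous fun q : (Ed d →L[ℝ] ℝ) × Ed d => q.1 q.2 := by fun_prop
    exact hc.measurable.comp
      (((hφ.continuous_fderiv (by norm_num)).measurable).prodMk hβ)
  refine h1.add (Continuous.measurable ?_)
  exact continuous_finsetSum _ fun i _ => continuous_finsetSum _ fun j _ =>
    ((by fun_prop : Continuous fun x => a x (EuclideanSpace.single i 1)).inner
      continuous_const).mul (continuous_hess2 hφ i j)

/-- Bounds for the first-order part of the generator, whose drift may grow like a function of `V`. -/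
lemma exists_fderiv_bound (hV : Continuous V) (hV1 : ∀ x, 1 ≤ V x) (hφ : ContDiff ℝ 2 φ)
    (hφc : HasCompactSupport φ) : ∃ D : ℝ, 0 < D ∧ ∀ x v, |fderiv ℝ φ x v| * V x ≤ D * ‖v‖ := by
  have hcont : Continuous fun x => V x * ‖fderiv ℝ φ x‖ :=
    hV.mul (hφ.continuous_fderiv (by norm_num)).norm
  obtain ⟨D, hD⟩ := hcont.bounded_above_of_compact_support
    ((hφc.fderiv (𝕜 := ℝ)).norm.mul_left (f := V))
  have hD0 : 0 ≤ D := (norm_nonneg _).trans (hD 0)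
  refine ⟨D + 1, by positivity, fun x v => ?_⟩
  have hV0 : 0 ≤ V x := zero_le_one.trans (hV1 x)
  have h1 : V x * ‖fderiv ℝ φ x‖ ≤ D := (le_abs_self _).trans (hD x)
  calc |fderiv ℝ φ x v| * V x ≤ (‖fderiv ℝ φ x‖ * ‖v‖) * V x := by
        gcongr; exact (fderiv ℝ φ x).le_opNorm v
    _ = (V x * ‖fderiv ℝ φ x‖) * ‖v‖ := by ring
    _ ≤ (D + 1) * ‖v‖ := by gcongr; linarith

lemma exists_genOp_bound (hac : Continuous a) (hV : Continuous V) (hV1 : ∀ x, 1 ≤ V x)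
    (hφ : ContDiff ℝ 2 φ) (hφc : HasCompactSupport φ) (B : ℝ) :
    ∃ C : ℝ, 0 < C ∧ ∀ β : Ed d → Ed d, (∀ x, ‖β x‖ ≤ B * V x) → ∀ x, |genOp a β φ x| ≤ C := by
  obtain ⟨D, hD, hfd⟩ := exists_fderiv_bound hV hV1 hφ hφc
  have hsec : ∃ E : ℝ, ∀ x, |∑ i, ∑ j,
      ⟪a x (EuclideanSpace.single i 1), EuclideanSpace.single j 1⟫ * hess2 φ x i j| ≤ E := by
    have : ∀ i j : Fin d, ∃ E : ℝ, ∀ x,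
        |⟪a x (EuclideanSpace.single i 1), EuclideanSpace.single j 1⟫ * hess2 φ x i j| ≤ E :=
      fun i j => Continuous.bounded_above_of_compact_support
        (((by fun_prop : Continuous fun x => a x (EuclideanSpace.single i 1)).inner
          continuous_const).mul (continuous_hess2 hφ i j))
        ((hasCompactSupport_hess2 hφc i j).mul_left)
    choose E hE using this
    refine ⟨∑ i, ∑ j, E i j, fun x => ?_⟩
    refine (Finset.abs_sum_le_sum_abs _ _).trans (Finset.sum_le_sum fun i _ => ?_)
    exact (Finset.abs_sum_le_sum_abs _ _).trans (Finset.sum_le_sum fun j _ => hE i j x)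
  obtain ⟨E, hE⟩ := hsec
  refine ⟨D * |B| + |E| + 1, by positivity, fun β hβ x => ?_⟩
  have hV0 : 0 < V x := zero_lt_one.trans_le (hV1 x)
  have h1 : |fderiv ℝ φ x (β x)| ≤ D * |B| := by
    refine le_of_mul_le_mul_right ?_ hV0
    calc |fderiv ℝ φ x (β x)| * V x ≤ D * ‖β x‖ := hfd x (β x)
      _ ≤ D * (|B| * V x) := by
        gcongr
        exact (hβ x).trans (by gcongr; exact le_abs_self B)
      _ = D * |B| * V x := by ring
  exact (abs_add_le _ _).trans (by linarith [hE x, le_abs_self E])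

/-- Continuity of the generator averaged against its own measure argument. -/
lemma tendsto_integral_genOp (hac : Continuous a) (hb : ∀ μ, Measurable fun x => b x μ)
    (hV : Continuous V) (hV1 : ∀ x, 1 ≤ V x) (hW0 : ∀ x, 0 ≤ W x) (hW : ∀ x, W x ≤ √(V x))
    (hGrow : ∀ α : ℝ, 0 < α → ∃ B : ℝ, 0 < B ∧ ∀ μ : Measure (Ed d), memPV V μ →
      (∫ x, V x ∂μ) ≤ α → ∀ x, ‖b x μ‖ ≤ B * V x)
    (hLip : ∀ α : ℝ, 0 < α → ∃ B : ℝ, 0 < B ∧ ∀ μ σ : Measure (Ed d), memPV V μ → memPV V σ →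
      (∫ x, V x ∂μ) ≤ α → (∫ x, V x ∂σ) ≤ α → ∀ x, ‖b x μ - b x σ‖ ≤ B * √(V x) * wDist W μ σ)
    (hφ : ContDiff ℝ 2 φ) (hφc : HasCompactSupport φ) {X : ℕ → Measure (Ed d)}
    {μ : Measure (Ed d)} [IsProbabilityMeasure μ] {M : ℝ} (hM0 : 0 < M)
    (hX : ∀ δ : ℝ, 0 < δ → ∀ᶠ i in atTop, TVLe (X i) μ δ)
    (hM : ∀ᶠ i in atTop, memPV V (X i) ∧ (∫ x, V x ∂(X i)) ≤ M) :
    Tendsto (fun i => ∫ x, genOp a (fun y => b y (X i)) φ x ∂(X i)) atTop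
      (𝓝 (∫ x, genOp a (fun y => b y μ) φ x ∂μ)) := by
  obtain ⟨hμ, hμM⟩ := memPV_of_tvLe hV.measurable hV1 hX hM
  obtain ⟨B, hB0, hB⟩ := hGrow M hM0
  obtain ⟨L, hL0, hL⟩ := hLip M hM0
  obtain ⟨C, hC0, hC⟩ := exists_genOp_bound hac hV hV1 hφ hφc B
  obtain ⟨D, hD, hfd⟩ := exists_fderiv_bound hV hV1 hφ hφc
  rw [Metric.tendsto_atTop']
  intro δ hδ
  refine eventually_atTop.1 ?_ |>.imp fun N hN i hi => hN i hi.le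
  filter_upwards [hX (δ / 4 / C) (by positivity), hM, eventually_wDist_le hV.measurable hV1 hW0 hW
    hX hM hμ hμM (show 0 < δ / 4 / (D * L) by positivity)] with i hi1 hi2 hi3
  have hp := hi2.1.1
  have hgm : ∀ σ, Measurable (genOp a (fun y => b y σ) φ) := fun σ => measurable_genOp hac (hb σ) hφ
  have hbd : ∀ σ, memPV V σ → (∫ x, V x ∂σ) ≤ M → ∀ x, |genOp a (fun y => b y σ) φ x| ≤ C :=
    fun σ hσ hσM => hC _ (hB σ hσ hσM)
  have hint : ∀ σ, memPV V σ → (∫ x, V x ∂σ) ≤ M → Integrable (genOp a (fun y => b y σ) φ) (X i) :=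
    fun σ hσ hσM => Integrable.of_bound (hgm σ).aestronglyMeasurable C
      (Eventually.of_forall (hbd σ hσ hσM))
  have e1 := hi1.abs_integral_sub_le hC0 (hgm μ) (hbd μ hμ hμM)
  rw [mul_div_cancel₀ _ hC0.ne'] at e1
  have e2 : |(∫ x, genOp a (fun y => b y (X i)) φ x ∂(X i)) -
      ∫ x, genOp a (fun y => b y μ) φ x ∂(X i)| ≤ δ / 4 := by
    rw [← integral_sub (hint _ hi2.1 hi2.2) (hint _ hμ hμM)]
    have := norm_integral_le_of_norm_le_const (μ := X i) (C := δ / 4)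
      (f := fun x => genOp a (fun y => b y (X i)) φ x - genOp a (fun y => b y μ) φ x)
      (Eventually.of_forall fun x => by
        have hV0 : 0 < V x := zero_lt_one.trans_le (hV1 x)
        have hsV : √(V x) ≤ V x := by
          rw [Real.sqrt_le_left hV0.le]; nlinarith [hV1 x]
        rw [genOp, genOp, add_sub_add_right_eq_sub, ← map_sub, Real.norm_eq_abs]
        refine le_of_mul_le_mul_right ?_ hV0
        calc _ ≤ D * ‖b x (X i) - b x μ‖ := hfd x _
          _ ≤ D * (L * √(V x) * (δ / 4 / (D * L))) := by
            gcongr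
            exact (hL _ _ hi2.1 hμ hi2.2 hμM x).trans (by gcongr)
          _ ≤ D * (L * V x * (δ / 4 / (D * L))) := by gcongr
          _ = δ / 4 * V x := by field_simp)
    simpa using this
  rw [Real.dist_eq]
  exact (abs_sub_le _ _ _).trans_lt (by linarith)

end Generator

/-! ### Integrals of step functions -/

lemma floor_div_eq {η s : ℝ} (hη : 0 < η) {k : ℕ} (h1 : k * η < s) (h2 : s < (k + 1) * η) :
    ⌊s / η⌋₊ = k := by
  rw [Nat.floor_eq_iff (div_nonneg (le_trans (by positivity) h1.le) hη.le)]
  exact ⟨((lt_div_iff₀ hη).2 h1).le, (div_lt_iff₀ hη).2 h2⟩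

lemma intervalIntegral_step_piece {η : ℝ} (hη : 0 < η) (g : ℕ → ℝ) (k : ℕ) {t : ℝ}
    (h1 : k * η ≤ t) (h2 : t ≤ (k + 1) * η) :
    IntervalIntegrable (fun s => g ⌊s / η⌋₊) volume (k * η) t ∧
      (∫ s in (k * η)..t, g ⌊s / η⌋₊) = (t - k * η) * g k := by
  have he : ∀ s ∈ Ioo (k * η) t, g k = g ⌊s / η⌋₊ := fun s hs => by
    rw [floor_div_eq hη hs.1 (hs.2.trans_le h2)]
  constructor
  · refine (intervalIntegrable_const (c := g k)).congr_uIoo ?_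
    rwa [uIoo_of_le h1]
  · rw [← intervalIntegral.integral_congr_Ioo_of_le h1 he]
    simp

lemma intervalIntegral_step {η : ℝ} (hη : 0 < η) (g : ℕ → ℝ) (N : ℕ) :
    IntervalIntegrable (fun s => g ⌊s / η⌋₊) volume 0 (N * η) ∧
      (∫ s in (0 : ℝ)..(N * η), g ⌊s / η⌋₊) = ∑ k ∈ Finset.range N, η * g k := by
  induction N with
  | zero => simp
  | succ N ih =>
    obtain ⟨h1, h2⟩ := intervalIntegral_step_piece hη g N (t := (N + 1) * η) (by nlinarith) le_rfl
    push_cast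
    refine ⟨ih.1.trans h1, ?_⟩
    rw [← intervalIntegral.integral_add_adjacent_intervals ih.1 h1, ih.2, h2,
      Finset.sum_range_succ]
    ring

/-! ### Passage to the limit in the equation -/

namespace IsSchemeFamily

variable {Λ K : ℝ} {a : Ed d → Ed d →L[ℝ] Ed d} {V W φ : Ed d → ℝ}
  {b : Ed d → Measure (Ed d) → Ed d}
  {N₁ : ℝ → ℝ} {m₀ : ℕ} {c : ℝ} {n : ℕ → ℕ} {μ : ℕ → ℕ → Measure (Ed d)} {r : ℕ → ℕ → ℝ}

lemma eventually_one_step (h : IsSchemeFamily a V b N₁ m₀ c n μ r) (ha : ∀ x, IsElliptic Λ (a x))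
    (hac : Continuous a) (hb : ∀ μ, Measurable fun x => b x μ) (hφ : ContDiff ℝ 2 φ)
    (hφc : HasCompactSupport φ) {C : ℝ} (hC : ∀ x, |φ x| ≤ C) {ε : ℝ} (hε : 0 < ε) :
    ∀ᶠ j in atTop, ∀ k, Integrable (genOp a (fun y => b y (μ j k)) φ) (μ j k) →
      |(∫ x, φ x ∂(μ j (k + 1))) - (∫ x, φ x ∂(μ j k)) -
        (1 / 2) ^ n j * ∫ x, genOp a (fun y => b y (μ j k)) φ x ∂(μ j k)| ≤
          2 * C * r j k + ε * (1 / 2) ^ n j := by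
  obtain ⟨κ, hκ, -, hexp⟩ := exists_gauss_expansion hφ (c := 0) (by simpa using hφc) (ha 0).pos hε
  filter_upwards [eventually_one_div_level_le m₀ hκ, h.eventually_mesh_le hκ] with j hj1 hj2 k hgi
  set η : ℝ := (1 / 2) ^ n j with hη
  have hη0 : 0 < η := by positivity
  have hp := (h.scheme j).prob k
  have hφi : Integrable φ (μ j k) := Integrable.of_bound
    hφ.continuous.measurable.aestronglyMeasurable C (Eventually.of_forall hC)
  have h1 := (h.scheme j).step k φ hφ.continuous.measurable C hC
  have hin := integrable_stepMeasure_inner (h := η) ha hac (hb (μ j k))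
    hφ.continuous.measurable hC (μ := μ j k)
  have h2 : |(∫ x, (∫ w, φ (x + (η • b x (μ j k) + √η • w)) * gauss (a x) w) ∂(μ j k)) -
      (∫ x, φ x ∂(μ j k)) - η * ∫ x, genOp a (fun y => b y (μ j k)) φ x ∂(μ j k)| ≤ ε * η := by
    have hsub : Integrable
        (fun x => (∫ w, φ (x + (η • b x (μ j k) + √η • w)) * gauss (a x) w) - φ x) (μ j k) :=
      hin.sub hφi
    rw [← integral_sub hin hφi, ← integral_const_mul, ← integral_sub hsub (hgi.const_mul η)]
    have := norm_integral_le_of_norm_le_const (μ := μ j k) (C := ε * η)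
      (f := fun x => (∫ w, φ (x + (η • b x (μ j k) + √η • w)) * gauss (a x) w) - φ x -
        η * genOp a (fun y => b y (μ j k)) φ x) (by
        filter_upwards [(h.scheme j).drift k] with x hx
        exact hexp η hη0 hj2 (a x) (ha x) x (b x (μ j k)) (hx.trans hj1))
    simpa using this
  rw [abs_le] at h1 h2 ⊢
  constructor <;> linarith [h1.1, h1.2, h2.1, h2.2]

lemma eventually_weak_equation (h : IsSchemeFamily a V b N₁ m₀ c n μ r)
    (ha : ∀ x, IsElliptic Λ (a x)) (hac : Continuous a)
    (hb : ∀ μ, Measurable fun x => b x μ) (hV : Continuous V)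
    (hV1 : ∀ x, 1 ≤ V x) (hc : ContinuousOn N₁ (Ici 0)) (hpos : ∀ α ∈ Ici (0 : ℝ), 0 < N₁ α)
    (hO : ∫⁻ α in Ioi (0 : ℝ), ENNReal.ofReal (1 / N₁ α) = ⊤)
    (hGrow : ∀ α : ℝ, 0 < α → ∃ B : ℝ, 0 < B ∧ ∀ μ : Measure (Ed d), _root_.memPV V μ →
      (∫ x, V x ∂μ) ≤ α → ∀ x, ‖b x μ‖ ≤ B * V x)
    (hφ : ContDiff ℝ 2 φ) (hφc : HasCompactSupport φ) {t δ : ℝ} (ht : 0 ≤ t) (hδ : 0 < δ) :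
    ∀ᶠ j in atTop, |(∫ x, φ x ∂(μ j ⌊t / (1 / 2 : ℝ) ^ n j⌋₊)) - (∫ x, φ x ∂(μ j 0)) -
      ∫ s in (0 : ℝ)..t, ∫ x, genOp a (fun y => b y (μ j ⌊s / (1 / 2 : ℝ) ^ n j⌋₊)) φ x
        ∂(μ j ⌊s / (1 / 2 : ℝ) ^ n j⌋₊)| ≤ δ := by
  obtain ⟨M, hM0, hM⟩ := h.exists_moment_bound hV.measurable hV1 hc hpos hO t
  obtain ⟨B, hB0, hB⟩ := hGrow M hM0
  obtain ⟨C, hC0, hC⟩ := exists_genOp_bound hac hV hV1 hφ hφc B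
  obtain ⟨E, hE⟩ := hφ.continuous.bounded_above_of_compact_support hφc
  have hE0 : 0 ≤ E := (norm_nonneg _).trans (hE 0)
  have hstep := h.eventually_one_step ha hac hb hφ hφc hE
    (show 0 < δ / 4 / (t + 1) by positivity)
  filter_upwards [hM, hstep, h.eventually_sum_le hV.measurable hV1 hc hpos hO t
    (show 0 < δ / 8 / (E + 1) by positivity),
    h.eventually_mesh_le (show 0 < δ / 4 / C by positivity)] with j hj1 hj2 hj3 hj4
  set η : ℝ := (1 / 2) ^ n j with hη
  have hη0 : 0 < η := by positivity
  set g : ℕ → ℝ := fun k => ∫ x, genOp a (fun y => b y (μ j k)) φ x ∂(μ j k) with hg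
  have hbd : ∀ k : ℕ, k * η ≤ t → ∀ x, |genOp a (fun y => b y (μ j k)) φ x| ≤ C := fun k hk =>
    hC _ (hB _ (h.memPV hV.measurable hV1 j k) (hj1 k hk))
  have hgC : ∀ k : ℕ, k * η ≤ t → |g k| ≤ C := fun k hk => by
    have hp := (h.scheme j).prob k
    simpa using norm_integral_le_of_norm_le_const (μ := μ j k)
      (f := genOp a (fun y => b y (μ j k)) φ) (Eventually.of_forall (hbd k hk))
  have htel : ∀ N : ℕ, N * η ≤ t →
      |(∫ x, φ x ∂(μ j N)) - (∫ x, φ x ∂(μ j 0)) - ∑ k ∈ Finset.range N, η * g k| ≤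
        2 * E * (∑ k ∈ Finset.range N, r j k) + δ / 4 / (t + 1) * (N * η) := by
    intro N
    induction N with
    | zero => simp
    | succ N ih =>
      intro hN
      push_cast at hN
      have hN' : N * η ≤ t := by linarith
      have h1 := ih hN'
      have hp := (h.scheme j).prob N
      have h2 := hj2 N (Integrable.of_bound
        (measurable_genOp hac (hb _) hφ).aestronglyMeasurable C
        (Eventually.of_forall (hbd N hN')))
      rw [Finset.sum_range_succ, Finset.sum_range_succ]
      push_cast
      have e : (∫ x, genOp a (fun y => b y (μ j N)) φ x ∂(μ j N)) = g N := rfl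
      rw [e] at h2
      rw [abs_le] at h1 h2 ⊢
      constructor <;> linarith [h1.1, h1.2, h2.1, h2.2]
  set N := ⌊t / η⌋₊ with hN
  have hN1 : N * η ≤ t := by
    rw [← le_div_iff₀ hη0]; exact Nat.floor_le (by positivity)
  have hN2 : t < (N + 1) * η := by
    rw [← div_lt_iff₀ hη0]; exact Nat.lt_floor_add_one _
  obtain ⟨i1, i2⟩ := intervalIntegral_step hη0 g N
  obtain ⟨i3, i4⟩ := intervalIntegral_step_piece hη0 g N hN1 hN2.le
  have hint : (∫ s in (0 : ℝ)..t, g ⌊s / η⌋₊) =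
      (∑ k ∈ Finset.range N, η * g k) + (t - N * η) * g N := by
    rw [← intervalIntegral.integral_add_adjacent_intervals i1 i3, i2, i4]
  have e1 : |(t - N * η) * g N| ≤ δ / 4 := by
    rw [abs_mul, abs_of_nonneg (by linarith)]
    calc (t - N * η) * |g N| ≤ (δ / 4 / C) * C :=
          mul_le_mul (by linarith) (hgC N hN1) (abs_nonneg _) (by positivity)
      _ = δ / 4 := by field_simp
  have e2 : 2 * E * (∑ k ∈ Finset.range N, r j k) ≤ δ / 4 := by
    calc 2 * E * (∑ k ∈ Finset.range N, r j k) ≤ 2 * E * (δ / 8 / (E + 1)) := by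
          gcongr; exact hj3 N hN1
      _ ≤ 2 * (E + 1) * (δ / 8 / (E + 1)) := by gcongr; linarith
      _ = δ / 4 := by field_simp; norm_num
  have e3 : δ / 4 / (t + 1) * (N * η) ≤ δ / 4 := by
    calc δ / 4 / (t + 1) * (N * η) ≤ δ / 4 / (t + 1) * (t + 1) := by gcongr; linarith
      _ = δ / 4 := by field_simp
  have e4 := htel N hN1
  change |_ - _ - ∫ s in (0 : ℝ)..t, g ⌊s / η⌋₊| ≤ δ
  rw [hint]
  rw [abs_le] at e1 e4 ⊢
  constructor <;> linarith [e1.1, e1.2, e4.1, e4.2]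

/-- The schemes have a limit point that solves the limiting equation weakly. -/
theorem exists_limit (h : IsSchemeFamily a V b N₁ m₀ c n μ r)
    (ha : ∀ x, IsElliptic Λ (a x)) (haL : ∀ x y, ‖a x - a y‖ ≤ K * ‖x - y‖) (hK : 0 ≤ K)
    (hb : ∀ μ, Measurable fun x => b x μ) (hV : Continuous V)
    (hV1 : ∀ x, 1 ≤ V x) (hVinf : Tendsto V (cocompact (Ed d)) atTop)
    (hc : ContinuousOn N₁ (Ici 0)) (hpos : ∀ α ∈ Ici (0 : ℝ), 0 < N₁ α)
    (hO : ∫⁻ α in Ioi (0 : ℝ), ENNReal.ofReal (1 / N₁ α) = ⊤)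
    (hW0 : ∀ x, 0 ≤ W x) (hW : ∀ x, W x ≤ √(V x))
    (hGrow : ∀ α : ℝ, 0 < α → ∃ B : ℝ, 0 < B ∧ ∀ μ : Measure (Ed d), _root_.memPV V μ →
      (∫ x, V x ∂μ) ≤ α → ∀ x, ‖b x μ‖ ≤ B * V x)
    (hLip : ∀ α : ℝ, 0 < α → ∃ B : ℝ, 0 < B ∧ ∀ μ σ : Measure (Ed d), _root_.memPV V μ →
      _root_.memPV V σ → (∫ x, V x ∂μ) ≤ α → (∫ x, V x ∂σ) ≤ α →
      ∀ x, ‖b x μ - b x σ‖ ≤ B * √(V x) * wDist W μ σ)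
    {ν : Measure (Ed d)} (hinit : ∀ f : Ed d → ℝ, Continuous f → HasCompactSupport f →
      Tendsto (fun j => ∫ x, f x ∂(μ j 0)) atTop (𝓝 (∫ x, f x ∂ν))) :
    ∃ ρ : ℝ → Measure (Ed d), (∀ t, 0 < t → _root_.memPV V (ρ t)) ∧
      (∀ T : ℝ, ∃ M : ℝ, ∀ t, 0 < t → t ≤ T → (∫ x, V x ∂(ρ t)) ≤ M) ∧
      ∀ φ : Ed d → ℝ, ContDiff ℝ 2 φ → HasCompactSupport φ → ∀ t : ℝ, 0 < t →
        (∫ x, φ x ∂(ρ t)) - (∫ x, φ x ∂ν) =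
          ∫ s in (0 : ℝ)..t, ∫ x, genOp a (fun y => b y (ρ s)) φ x ∂(ρ s) := by
  have hac : Continuous a := continuous_of_norm_sub_le haL
  have happ := h.isApprox ha haL hK hb hV.measurable hV1 hc hpos hO hGrow
  obtain ⟨ψ, ρ, hψ, hρ, hTV⟩ := happ.exists_subseq_tvLe ha hac hV1 hVinf
  have hmom : ∀ T : ℝ, ∃ M : ℝ, 0 < M ∧ ∀ᶠ i in atTop, ∀ t, 0 ≤ t → t ≤ T →
      _root_.memPV V (μ (ψ i) ⌊t / (1 / 2 : ℝ) ^ n (ψ i)⌋₊) ∧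
        (∫ x, V x ∂(μ (ψ i) ⌊t / (1 / 2 : ℝ) ^ n (ψ i)⌋₊)) ≤ M := by
    intro T
    obtain ⟨M, hM0, hM⟩ := happ.moment T
    refine ⟨M, hM0, ?_⟩
    filter_upwards [hψ.eventually hM] with i hi t ht htT
    exact ⟨h.memPV hV.measurable hV1 _ _, (hi t ht htT).2⟩
  have hlim : ∀ T : ℝ, ∃ M : ℝ, ∀ t, 0 < t → t ≤ T →
      _root_.memPV V (ρ t) ∧ (∫ x, V x ∂(ρ t)) ≤ M := by
    intro T
    obtain ⟨M, hM0, hM⟩ := hmom T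
    refine ⟨M, fun t ht htT => ?_⟩
    have := hρ t
    exact memPV_of_tvLe hV.measurable hV1 (hTV t ht) (hM.mono fun i hi => hi t ht.le htT)
  refine ⟨ρ, fun t ht => ((hlim t).choose_spec t ht le_rfl).1,
    fun T => (hlim T).imp fun M hM t ht htT => (hM t ht htT).2, fun φ hφ hφc t ht => ?_⟩
  obtain ⟨M, hM0, hM⟩ := hmom t
  obtain ⟨B, hB0, hB⟩ := hGrow M hM0
  obtain ⟨C, hC0, hC⟩ := exists_genOp_bound hac hV hV1 hφ hφc B
  obtain ⟨E, hE⟩ := hφ.continuous.bounded_above_of_compact_support hφc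
  have hE0 : 0 ≤ E := (norm_nonneg _).trans (hE 0)
  have hrhs : Tendsto (fun i => ∫ s in (0 : ℝ)..t,
      ∫ x, genOp a (fun y => b y (μ (ψ i) ⌊s / (1 / 2 : ℝ) ^ n (ψ i)⌋₊)) φ x
        ∂(μ (ψ i) ⌊s / (1 / 2 : ℝ) ^ n (ψ i)⌋₊)) atTop
      (𝓝 (∫ s in (0 : ℝ)..t, ∫ x, genOp a (fun y => b y (ρ s)) φ x ∂(ρ s))) := by
    refine intervalIntegral.tendsto_integral_filter_of_dominated_convergence (fun _ => C)
      (Eventually.of_forall fun i => ?_) ?_ intervalIntegrable_const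
      (Eventually.of_forall fun s hs => ?_)
    · have hm : Measurable fun k : ℕ =>
          ∫ x, genOp a (fun y => b y (μ (ψ i) k)) φ x ∂(μ (ψ i) k) := measurable_from_nat
      exact (hm.comp (Nat.measurable_floor.comp
        (measurable_id.div_const ((1 / 2 : ℝ) ^ n (ψ i))))).aestronglyMeasurable
    · filter_upwards [hM] with i hi
      refine Eventually.of_forall fun s hs => ?_
      rw [uIoc_of_le ht.le] at hs
      obtain ⟨hmem, hle⟩ := hi s hs.1.le hs.2
      have hp := hmem.1
      refine (norm_integral_le_of_norm_le_const
        (f := genOp a (fun y => b y (μ (ψ i) ⌊s / (1 / 2 : ℝ) ^ n (ψ i)⌋₊)) φ)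
        (Eventually.of_forall (hC _ (hB _ hmem hle)))).trans_eq ?_
      rw [probReal_univ, mul_one]
    · rw [uIoc_of_le ht.le] at hs
      have := hρ s
      exact tendsto_integral_genOp hac hb hV hV1 hW0 hW hGrow hLip hφ hφc hM0 (hTV s hs.1)
        (hM.mono fun i hi => hi s hs.1.le hs.2)
  have hlhs : Tendsto (fun i => ∫ x, φ x ∂(μ (ψ i) ⌊t / (1 / 2 : ℝ) ^ n (ψ i)⌋₊)) atTop
      (𝓝 (∫ x, φ x ∂(ρ t))) := by
    refine Metric.tendsto_nhds.2 fun δ hδ => ?_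
    filter_upwards [hTV t ht (δ / 2 / (E + 1)) (by positivity)] with i hi
    have := hi.abs_integral_sub_le (show 0 < E + 1 by positivity) hφ.continuous.measurable
      fun x => (hE x).trans (by linarith)
    rw [mul_div_cancel₀ _ (by positivity)] at this
    rw [Real.dist_eq]
    linarith
  have hzero := ((hlhs.sub ((hinit φ hφ.continuous hφc).comp hψ)).sub hrhs).abs
  refine sub_eq_zero.1 (abs_eq_zero.1 (le_antisymm (le_of_forall_pos_le_add fun δ hδ => ?_)
    (abs_nonneg _)))
  rw [zero_add]
  exact le_of_tendsto hzero (hψ.eventually (h.eventually_weak_equation ha hac hb hV hV1 hc hpos hO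
    hGrow hφ hφc ht.le hδ))

end IsSchemeFamily

/-! ### Coefficient matrices as operators -/

lemma inner_toEuclideanCLM_left (B : Matrix (Fin d) (Fin d) ℝ) (u v : Ed d) :
    ⟪Matrix.toEuclideanCLM (𝕜 := ℝ) B u, v⟫ = ∑ i, ∑ j, B i j * v i * u j := by
  rw [real_inner_comm, Matrix.inner_toEuclideanCLM]
  simp only [dotProduct, Matrix.mulVec, Finset.mul_sum]
  exact Finset.sum_congr rfl fun i _ => Finset.sum_congr rfl fun j _ => by ring

lemma inner_toEuclideanCLM_single (B : Matrix (Fin d) (Fin d) ℝ) (i j : Fin d) :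
    ⟪Matrix.toEuclideanCLM (𝕜 := ℝ) B (EuclideanSpace.single i 1), EuclideanSpace.single j 1⟫ =
      B j i := by
  rw [inner_toEuclideanCLM_left]
  simp

lemma isElliptic_toEuclideanCLM {B : Matrix (Fin d) (Fin d) ℝ} {Λ : ℝ} (hΛ : 0 < Λ)
    (hB : B.IsSymm) (hlow : ∀ v : Ed d, Λ⁻¹ * ‖v‖ ^ 2 ≤ ∑ i, ∑ j, B i j * v i * v j)
    (hup : ∀ v : Ed d, ∑ i, ∑ j, B i j * v i * v j ≤ Λ * ‖v‖ ^ 2) :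
    IsElliptic Λ (Matrix.toEuclideanCLM (𝕜 := ℝ) B) where
  pos := hΛ
  symm u v := by
    rw [real_inner_comm (Matrix.toEuclideanCLM (𝕜 := ℝ) B v) u, inner_toEuclideanCLM_left,
      inner_toEuclideanCLM_left, Finset.sum_comm]
    refine Finset.sum_congr rfl fun i _ => Finset.sum_congr rfl fun j _ => ?_
    rw [hB.apply i j]
    ring
  low v := by rw [inner_toEuclideanCLM_left]; exact hlow v
  up v := by rw [inner_toEuclideanCLM_left]; exact hup v

lemma norm_toEuclideanCLM_le {B : Matrix (Fin d) (Fin d) ℝ} {c : ℝ} (hc : 0 ≤ c)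
    (hB : ∀ i j, |B i j| ≤ c) : ‖Matrix.toEuclideanCLM (𝕜 := ℝ) B‖ ≤ d * (d * c) := by
  refine ContinuousLinearMap.opNorm_le_bound _ (by positivity) fun u => ?_
  set v := Matrix.toEuclideanCLM (𝕜 := ℝ) B u with hv
  rcases eq_or_lt_of_le (norm_nonneg v) with h0 | h0
  · rw [← h0]; positivity
  refine le_of_mul_le_mul_right ?_ h0
  calc ‖v‖ * ‖v‖ = ∑ i, ∑ j, B i j * v i * u j := by
        rw [← real_inner_self_eq_norm_mul_norm]
        nth_rewrite 1 [hv]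
        exact inner_toEuclideanCLM_left B u v
    _ ≤ ∑ i : Fin d, ∑ j : Fin d, c * ‖v‖ * ‖u‖ := by
        refine Finset.sum_le_sum fun i _ => Finset.sum_le_sum fun j _ => ?_
        refine (le_abs_self _).trans ?_
        rw [abs_mul, abs_mul]
        gcongr
        · exact hB i j
        · exact PiLp.norm_apply_le v i
        · exact PiLp.norm_apply_le u j
    _ = d * (d * c) * ‖u‖ * ‖v‖ := by
        simp only [Finset.sum_const, Finset.card_univ, Fintype.card_fin, nsmul_eq_mul]
        ring

lemma lop_eq_genOp {A : Ed d → Matrix (Fin d) (Fin d) ℝ} (hA : ∀ x, (A x).IsSymm)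
    (β : Ed d → Ed d) (φ : Ed d → ℝ) (x : Ed d) :
    Lop A β φ x = genOp (fun x => Matrix.toEuclideanCLM (𝕜 := ℝ) (A x)) β φ x := by
  rw [Lop, genOp, add_comm, inner_gradient_right]
  simp only [inner_toEuclideanCLM_single, (hA x).apply]
  rfl

lemma tendsto_measureReal_lt {V : Ed d → ℝ} (hV1 : ∀ x, 1 ≤ V x) {ν : Measure (Ed d)}
    (hν : memPV V ν) (m₀ : ℕ) :
    Tendsto (fun j : ℕ => ν.real {y | (j : ℝ) + m₀ < V y}) atTop (𝓝 0) := by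
  have hp := hν.1
  have hlim : Tendsto (fun j : ℕ => (∫ x, V x ∂ν) / ((j : ℝ) + m₀)) atTop (𝓝 0) :=
    tendsto_const_nhds.div_atTop (IsSchemeFamily.tendsto_level m₀)
  refine squeeze_zero' (Eventually.of_forall fun j => measureReal_nonneg) ?_ hlim
  filter_upwards [(IsSchemeFamily.tendsto_level m₀).eventually_gt_atTop 0] with j hj
  rw [le_div_iff₀' hj]
  refine le_trans ?_ (mul_meas_ge_le_integral_of_nonneg
    (Eventually.of_forall fun x => zero_le_one.trans (hV1 x)) hν.2 ((j : ℝ) + m₀))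
  exact mul_le_mul_of_nonneg_left
    (measureReal_mono (fun x (hx : _ < V x) => hx.le) (measure_ne_top ν _)) hj.le

/-- **Proposition 7** (solvability of the Cauchy problem under an Osgood-type
condition `∫₀^∞ dα/N₁(α) = ∞`). -/
theorem stmt11_cauchy_existence
    (A : Ed d → Matrix (Fin d) (Fin d) ℝ) (K₁ K₂ : ℝ)
    (hK₁ : 0 < K₁) (hK₂ : 0 < K₂)
    (hAsymm : ∀ x, (A x).IsSymm)
    (hAlow : ∀ x (v : Ed d), K₁⁻¹ * ‖v‖ ^ 2 ≤ ∑ i, ∑ j, A x i j * v i * v j)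
    (hAup : ∀ x (v : Ed d), ∑ i, ∑ j, A x i j * v i * v j ≤ K₁ * ‖v‖ ^ 2)
    (hALip : ∀ x y i j, |A x i j - A y i j| ≤ K₂ * ‖x - y‖)
    (V : Ed d → ℝ) (hV : ContDiff ℝ 2 V) (hV1 : ∀ x, 1 ≤ V x)
    (hVinf : Tendsto V (cocompact (Ed d)) atTop)
    (γ : ℝ) (hγ : γ ∈ Set.Ioc (0:ℝ) (1/2))
    (W : Ed d → ℝ) (hW : W = fun x => V x ^ γ)
    (b : Ed d → Measure (Ed d) → Ed d)
    (hbBorel : ∀ μ, Measurable (fun x => b x μ))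
    (N₁ N₂ N₃ : ℝ → ℝ)
    (hN₁cont : ContinuousOn N₁ (Set.Ici 0))
    (hN₂cont : ContinuousOn N₂ (Set.Ici 0))
    (hN₃cont : ContinuousOn N₃ (Set.Ici 0))
    (hN₁pos : ∀ α ∈ Set.Ici (0:ℝ), 0 < N₁ α)
    (hN₂pos : ∀ α ∈ Set.Ici (0:ℝ), 0 < N₂ α)
    (hN₃pos : ∀ α ∈ Set.Ici (0:ℝ), 0 < N₃ α)
    (hLyap : ∀ α : ℝ, 0 < α → ∀ μ : Measure (Ed d),
      memPV V μ → (∫ x, V x ∂μ) ≤ α →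
      ∀ x, Lop A (fun y => b y μ) V x ≤ N₁ α)
    (hGrow : ∀ α : ℝ, 0 < α → ∀ μ : Measure (Ed d),
      memPV V μ → (∫ x, V x ∂μ) ≤ α →
      ∀ x, ‖b x μ‖ ≤ N₂ α * V x ^ ((1:ℝ)/2 - γ))
    (hLip : ∀ α : ℝ, 0 < α → ∀ μ σ : Measure (Ed d),
      memPV V μ → memPV V σ → (∫ x, V x ∂μ) ≤ α → (∫ x, V x ∂σ) ≤ α →
      ∀ x, ‖b x μ - b x σ‖ ≤ N₃ α * V x ^ ((1:ℝ)/2) * wDist W μ σ)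
    (hOsgood : ∫⁻ α in Set.Ioi (0:ℝ), ENNReal.ofReal (1 / N₁ α) = ⊤) :
    ∀ ν : Measure (Ed d), memPV V ν →
      ∃ μt : ℝ → Measure (Ed d),
        (∀ t, 0 ≤ t → memPV V (μt t)) ∧
        IsCauchySol A b ν μt ∧
        (∀ T : ℝ, 0 < T → ∃ M : ℝ, ∀ t ∈ Set.Icc (0:ℝ) T, (∫ x, V x ∂(μt t)) ≤ M) := by
  intro ν hν
  subst hW
  set a : Ed d → Ed d →L[ℝ] Ed d := fun x => Matrix.toEuclideanCLM (𝕜 := ℝ) (A x) with ha_def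
  have ha : ∀ x, IsElliptic K₁ (a x) := fun x =>
    isElliptic_toEuclideanCLM hK₁ (hAsymm x) (hAlow x) (hAup x)
  have haL : ∀ x y, ‖a x - a y‖ ≤ d * (d * K₂) * ‖x - y‖ := fun x y => by
    have h1 : a x - a y = Matrix.toEuclideanCLM (𝕜 := ℝ) (A x - A y) := (map_sub _ _ _).symm
    rw [h1]
    refine (norm_toEuclideanCLM_le (c := K₂ * ‖x - y‖) (by positivity)
      fun i j => hALip x y i j).trans_eq ?_
    ring
  have hac : Continuous a := continuous_of_norm_sub_le haL
  have hVm : Measurable V := hV.continuous.measurable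
  have hpow : ∀ x (p : ℝ), p ≤ 1 / 2 → V x ^ p ≤ √(V x) := fun x p hp => by
    rw [Real.sqrt_eq_rpow]; exact Real.rpow_le_rpow_of_exponent_le (hV1 x) hp
  have hsqrt : ∀ x, √(V x) ≤ V x := fun x => by
    rw [Real.sqrt_le_left (by linarith [hV1 x])]; nlinarith [hV1 x]
  have hGrow' : ∀ α : ℝ, 0 < α → ∀ μ : Measure (Ed d), memPV V μ → (∫ x, V x ∂μ) ≤ α →
      ∀ x, ‖b x μ‖ ≤ N₂ α * V x := fun α hα μ hμ hμα x =>
    (hGrow α hα μ hμ hμα x).trans (mul_le_mul_of_nonneg_left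
      ((hpow x _ (by linarith [hγ.1])).trans (hsqrt x)) (hN₂pos α hα.le).le)
  obtain ⟨m₀, hm₀⟩ := exists_nat_ge (V 0)
  have hm₀1 : 1 ≤ m₀ := by exact_mod_cast (hV1 0).trans hm₀
  have hlevel : ∀ j : ℕ, V 0 ≤ (j : ℝ) + m₀ := fun j => by
    have : (0 : ℝ) ≤ j := by positivity
    linarith
  have hsch := fun j : ℕ => exists_isScheme (N₁ := N₁) (m := j + m₀)
    (B := N₂ (j + m₀) * (j + m₀)) ha hac hV hV1 hVinf hbBorel
    (fun α hα μ hμ hμα x => by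
      have := hLyap α hα μ hμ hμα x
      rwa [lop_eq_genOp hAsymm] at this)
    (hlevel j)
    (fun μ hμ hμm x hx => by
      have hpos : (0 : ℝ) < j + m₀ := lt_of_lt_of_le (by linarith [hV1 0]) (hlevel j)
      exact (hGrow' _ hpos μ hμ hμm x).trans
        (mul_le_mul_of_nonneg_left hx (hN₂pos _ hpos.le).le)) hν
  choose n hn μ r hμ hμV hμν using hsch
  have hfam : IsSchemeFamily a V b N₁ m₀ (∫ x, V x ∂ν) n μ r := ⟨hμ, hn, hμV, hm₀, hm₀1⟩
  have hinit : ∀ f : Ed d → ℝ, Continuous f → HasCompactSupport f →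
      Tendsto (fun j => ∫ x, f x ∂(μ j 0)) atTop (𝓝 (∫ x, f x ∂ν)) := by
    intro f hf hfc
    obtain ⟨C, hC⟩ := hf.bounded_above_of_compact_support hfc
    rw [tendsto_iff_dist_tendsto_zero]
    refine squeeze_zero (fun _ => dist_nonneg) (fun j => hμν j f hf.measurable C hC) ?_
    simpa using (tendsto_measureReal_lt hV1 hν m₀).const_mul (2 * C)
  obtain ⟨ρ, hρmem, hρM, hρeq⟩ := hfam.exists_limit (W := fun x => V x ^ γ) ha haL (by positivity)
    hbBorel hV.continuous hV1 hVinf hN₁cont hN₁pos hOsgood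
    (fun x => Real.rpow_nonneg (zero_le_one.trans (hV1 x)) γ) (fun x => hpow x γ hγ.2)
    (fun α hα => ⟨N₂ α, hN₂pos α hα.le, hGrow' α hα⟩)
    (fun α hα => ⟨N₃ α, hN₃pos α hα.le, fun μ σ hμ hσ hμα hσα x => by
      rw [Real.sqrt_eq_rpow]; exact hLip α hα μ σ hμ hσ hμα hσα x⟩) hinit
  classical
  refine ⟨fun t => if t = 0 then ν else ρ t, fun t ht => ?_, ⟨if_pos rfl, fun φ hφ t ht => ?_⟩,
    fun T _ => ?_⟩
  · dsimp only
    split_ifs with h0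
    · exact hν
    · exact hρmem t (lt_of_le_of_ne ht (Ne.symm h0))
  · rcases eq_or_lt_of_le ht with rfl | ht0
    · simp
    · simp only [if_neg ht0.ne']
      rw [hρeq φ (contDiff_infty.1 hφ.1 2) hφ.2 t ht0]
      refine intervalIntegral.integral_congr_ae (Eventually.of_forall fun s hs => ?_)
      rw [uIoc_of_le ht] at hs
      simp only [if_neg hs.1.ne', lop_eq_genOp hAsymm]
      rfl
  · obtain ⟨M, hM⟩ := hρM T
    refine ⟨max M (∫ x, V x ∂ν), fun t ht => ?_⟩
    dsimp only
    split_ifs with h0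
    · exact le_max_right _ _
    · exact (hM t (lt_of_le_of_ne ht.1 (Ne.symm h0)) ht.2).trans (le_max_left _ _)
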